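/- arXiv:1709.05685 — 6 statements merged into one kernel-verified Lean document; each statement's English description precedes it below -/
import Mathlib

section
/- Let Y be an m×n matrix with entries in a commutative ring such that all t×t minors of Y vanish. Then for any row indices a_1,...,a_{t-1}, c_1,...,c_{t-1} and column indices b_1,...,b_{t-1}, d_1,...,d_{t-1}, the product of the (t-1)-minor of Y with rows a_1,...,a_{t-1} and columns b_1,...,b_{t-1} with the (t-1)-minor with rows c_1,...,c_{t-1} and columns d_1,...,d_{t-1} equals the product of the (t-1)-minor with rows a_1,...,a_{t-1}, columns d_1,...,d_{t-1} with the (t-1)-minor with rows c_1,...,c_{t-1}, columns b_1,...,b_{t-1}. -/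
open Matrix

theorem aux_laplace {R : Type*} [CommRing R] (t e : ℕ) :
    ∀ M : Matrix (Fin (t + e)) (Fin (t + e)) R,
      (∀ g : Fin t → Fin (t + e), (M.submatrix (Fin.castAdd e) g).det = 0) → M.det = 0 := by
  induction e with
  | zero =>
    intro M h
    exact h id
  | succ e ih =>
    intro M h
    have := Matrix.det_succ_row (n := t + e) M (Fin.last (t + e))
    refine this.trans (Finset.sum_eq_zero fun j _ => ?_)
    rw [ih, mul_zero]
    intro g
    rw [← h (fun x => Fin.succAbove (n := t + e) j (g x))]
    congr 1
    ext x y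
    simp only [Matrix.submatrix_apply, Fin.succAbove_last]
    rfl

theorem aux_laplace_inj {R : Type*} [CommRing R] {ι : Type*} [Fintype ι] [DecidableEq ι] (t : ℕ)
    (M : Matrix ι ι R) (f : Fin t → ι) (hf : Function.Injective f)
    (h : ∀ g : Fin t → ι, (M.submatrix f g).det = 0) : M.det = 0 := by
  classical
  let e := Fintype.card ((Set.range f)ᶜ : Set ι)
  let E : Fin (t + e) ≃ ι :=
    finSumFinEquiv.symm.trans ((Equiv.sumCongr (Equiv.ofInjective f hf)
      (Fintype.equivFin ((Set.range f)ᶜ : Set ι)).symm).trans (Equiv.Set.sumCompl (Set.range f)))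
  have hE : ∀ i, E (Fin.castAdd e i) = f i := by
    intro i
    simp [E]
  rw [← Matrix.det_submatrix_equiv_self E M]
  apply aux_laplace
  intro g
  rw [← h (fun x => E (g x))]
  congr 1
  ext x y
  simp [hE]

theorem aux_antidiag {R : Type*} [CommRing R] {k : ℕ} (D C B : Matrix (Fin k) (Fin k) R) :
    (fromBlocks D C B 0).det = (-1) ^ k * (C.det * B.det) := by
  have h1 : (fromBlocks (0 : Matrix (Fin k) (Fin k) R) 1 (-1) (0 : Matrix (Fin k) (Fin k) R)) =
      fromBlocks 1 1 0 1 * fromBlocks 1 0 (-1) 1 * fromBlocks 1 1 0 1 := by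
    simp [fromBlocks_multiply]
  have h2 : (fromBlocks (0 : Matrix (Fin k) (Fin k) R) 1 (-1)
      (0 : Matrix (Fin k) (Fin k) R)).det = 1 := by
    rw [h1]
    simp
  have h3 : fromBlocks D C B 0 * fromBlocks (0 : Matrix (Fin k) (Fin k) R) 1 (-1)
      (0 : Matrix (Fin k) (Fin k) R) = fromBlocks (-C) D 0 B := by
    simp [fromBlocks_multiply]
  have h4 := congrArg Matrix.det h3
  rw [det_mul, h2, mul_one, det_fromBlocks_zero₂₁, det_neg] at h4
  rw [h4]
  simp [mul_assoc]

theorem aux_main {R : Type*} [CommRing R] {m n k : ℕ} (Y : Matrix (Fin m) (Fin n) R)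
    (hY : ∀ (f : Fin (k + 1) → Fin m) (g : Fin (k + 1) → Fin n), (Y.submatrix f g).det = 0)
    (a c : Fin k → Fin m) (b d : Fin k → Fin n) :
    (Y.submatrix a b).det * (Y.submatrix c d).det
      = (Y.submatrix a d).det * (Y.submatrix c b).det := by
  classical
  let P : Finset (Fin k) → Matrix (Fin k ⊕ Fin k) (Fin k ⊕ Fin k) R := fun S =>
    fromBlocks (Y.submatrix c d) (Y.submatrix c b)
      (Matrix.of fun q j => if q ∈ S then Y (a q) (d j) else 0)
      (Matrix.of fun q j => if q ∈ S then 0 else - Y (a q) (b j))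
  have key : ∀ S, (P S).det = (P ∅).det := by
    intro S
    induction S using Finset.induction_on with
    | empty => rfl
    | insert q S hq ih =>
      have e1 : P (insert q S) = (P S).updateRow (Sum.inr q)
          ((fun j => Y (a q) (Sum.elim d b j)) + (P S) (Sum.inr q)) := by
        ext i j
        rcases i with i | i
        · rcases j with j | j <;> simp [P, updateRow_apply]
        · by_cases hi : i = q
          · subst hi
            rcases j with j | j <;> simp [P, hq]
          · rcases j with j | j <;> simp [P, updateRow_apply, hi]
      rw [e1, det_updateRow_add, updateRow_eq_self, ih]
      rw [aux_laplace_inj (k + 1) _ (Fin.snoc (α := fun _ => Fin k ⊕ Fin k) Sum.inl (Sum.inr q)),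
        zero_add]
      · intro x y
        refine Fin.lastCases ?_ (fun x => ?_) x <;> refine Fin.lastCases ?_ (fun y => ?_) y <;> simp
      · intro g
        rw [← hY (Fin.snoc (α := fun _ => Fin m) c (a q)) (fun x => Sum.elim d b (g x))]
        congr 1
        ext x y
        refine Fin.lastCases ?_ (fun x => ?_) x
        · simp
        · rcases h : g y with j | j <;> simp [P, updateRow_apply, h]
  have h0 : P ∅ = fromBlocks (Y.submatrix c d) (Y.submatrix c b) 0 (-(Y.submatrix a b)) := by
    ext i j
    rcases i with i | i <;> rcases j with j | j <;> simp [P]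
  have h1 : P Finset.univ
      = fromBlocks (Y.submatrix c d) (Y.submatrix c b) (Y.submatrix a d) 0 := by
    ext i j
    rcases i with i | i <;> rcases j with j | j <;> simp [P]
  have h := key Finset.univ
  rw [h0, h1, aux_antidiag, det_fromBlocks_zero₂₁, det_neg, Fintype.card_fin] at h
  have hs : ((-1 : R) ^ k) * (-1) ^ k = 1 := by
    rw [← mul_pow]; simp
  linear_combination (-(-1) ^ k) * h + ((Y.submatrix c b).det * (Y.submatrix a d).det
    - (Y.submatrix a b).det * (Y.submatrix c d).det) * hs



/-- If all `t×t` minors of an `m×n` matrix `Y` vanish, then for any choices of `t-1` rows and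
columns, `[a|b]·[c|d] = [a|d]·[c|b]` for the corresponding `(t-1)`-minors. -/
theorem minor_exchange {R : Type*} [CommRing R] {m n t : ℕ} (Y : Matrix (Fin m) (Fin n) R)
    (hY : ∀ (f : Fin t → Fin m) (g : Fin t → Fin n), (Y.submatrix f g).det = 0)
    (a c : Fin (t - 1) → Fin m) (b d : Fin (t - 1) → Fin n) :
    (Y.submatrix a b).det * (Y.submatrix c d).det
      = (Y.submatrix a d).det * (Y.submatrix c b).det := by
  rcases t with _ | k
  · have h : (1 : R) = 0 := by simpa using hY Fin.elim0 Fin.elim0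
    exact eq_of_zero_eq_one h.symm _ _
  · exact aux_main Y hY a c b d
end

section
/- Let F be a field, H the t×n Hankel matrix in indeterminates x_1,...,x_{n+t-1} with t ≤ n, and R = F[x_1,...,x_{n+t-1}]/I_t(H). Then the images of x_1,...,x_{t-1},x_{n+1},...,x_{n+t-1} form a homogeneous system of parameters for R; in particular the quotient of R by the ideal they generate is Artinian of dimension 0, and dim R = 2t-2. -/
open MvPolynomial Matrix

theorem hankel_vanish {D : Type*} [CommRing D] [IsDomain D] (t n : ℕ) (ht : 1 ≤ t)
    (z : ℕ → D)
    (hdet : ∀ g : Fin t → Fin n,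
      (Matrix.of fun a b : Fin t => z ((a : ℕ) + (g b : ℕ))).det = 0)
    (h0 : ∀ i, i < t - 1 → z i = 0) : ∀ i, i < n → z i = 0 := by
  intro i
  induction i using Nat.strong_induction_on with
  | _ i ih =>
    intro hi
    by_cases hlt : i < t - 1
    · exact h0 i hlt
    have h := hdet (fun b => ⟨i - b, by omega⟩)
    rw [Matrix.det_of_isLowerTriangular] at h
    · have h2 : ∀ a : Fin t,
          (Matrix.of fun a b : Fin t => z ((a : ℕ) + ((⟨i - b, by omega⟩ : Fin n) : ℕ))) a a
            = z i := by
        intro a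
        have := a.2
        simp only [Matrix.of_apply]
        congr 1
        omega
      rw [Finset.prod_congr rfl (fun a _ => h2 a)] at h
      simpa using (pow_eq_zero_iff (by omega : t ≠ 0)).mp (by simpa using h)
    · intro a b hab
      have hab' : a < b := hab
      have h1 := a.2
      have h2 := b.2
      simp only [Matrix.of_apply]
      have : (a : ℕ) < b := hab'
      apply ih <;> omega

theorem krullDim_eq_of_integral_inj {A B : Type*} [CommRing A] [CommRing B] (f : A →+* B)
    (hinj : Function.Injective f) (hfint : f.IsIntegral) :
    ringKrullDim B = ringKrullDim A := by
  algebraize [f]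
  have hi : Algebra.IsIntegral A B := ⟨hfint⟩
  apply le_antisymm
  · refine Order.krullDim_le_of_strictMono (PrimeSpectrum.comap (algebraMap A B)) ?_
    intro p q hpq
    exact Ideal.IsIntegral.comap_lt_comap (R := A) (I := p.asIdeal) (J := q.asIdeal) hpq
  · refine iSup_le fun l => ?_
    obtain ⟨Q, -, hQ, hQ2⟩ := Ideal.exists_ideal_over_prime_of_isIntegral (S := B)
      (RelSeries.head l).asIdeal ⊥ (by
        intro x hx
        have : f x = 0 := hx
        rw [(map_eq_zero_iff f hinj).mp this]
        exact zero_mem _)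
    have : Q.LiesOver (RelSeries.head l).asIdeal := ⟨hQ2.symm⟩
    obtain ⟨L, hL, -⟩ := Ideal.exists_ltSeries_of_hasGoingUp (S := B) l Q
    rw [← hL]
    exact le_iSup (fun p : LTSeries (PrimeSpectrum B) => (p.length : WithBot ℕ∞)) L

theorem hC_X_mul {σ F : Type*} [CommRing F] (d : ℕ) (i : σ) (h : MvPolynomial σ F) :
    homogeneousComponent (d + 1) (h * X i) = homogeneousComponent d h * X i := by
  classical
  ext m
  rw [coeff_homogeneousComponent, coeff_mul_X', coeff_mul_X', coeff_homogeneousComponent]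
  by_cases hm : i ∈ m.support
  · have : m.degree = (m - Finsupp.single i 1).degree + 1 := by
      conv_lhs => rw [← Finsupp.sub_add_single_one_cancel (Finsupp.mem_support_iff.mp hm)]
      simp [Finsupp.degree_single]
    simp [hm, this]
  · simp [hm]

attribute [local instance] MvPolynomial.gradedAlgebra in
theorem graded_finite {σ F B : Type*} [Finite σ] [Field F] [CommRing B]
    (I : Ideal (MvPolynomial σ F))
    (hI : I.IsHomogeneous (homogeneousSubmodule σ F)) (p : σ → Prop) (N : ℕ)
    (hN : idealOfVars σ F ^ N ≤
      I ⊔ Ideal.span (Set.range fun i : {i // p i} => (X (i : σ) : MvPolynomial σ F)))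
    (q : MvPolynomial σ F →+* B) (hq : Function.Surjective q) (hq0 : ∀ x ∈ I, q x = 0)
    (f : MvPolynomial {i // p i} F →+* B) (hfC : ∀ c : F, f (C c) = q (C c))
    (hfX : ∀ i, f (X i) = q (X (i : σ))) : f.Finite := by
  classical
  have := Fintype.ofFinite {i // p i}
  let _ := f.toAlgebra
  have hsm : ∀ a b, a • b = f a * b := fun a b => rfl
  let M : Submodule (MvPolynomial {i // p i} F) B :=
    Submodule.span _ ((fun m : σ →₀ ℕ => q (monomial m 1)) '' {m | m.degree ≤ N})
  have key : ∀ d, ∀ g : MvPolynomial σ F, g.IsHomogeneous d → q g ∈ M := by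
    intro d
    induction d with
    | zero =>
      intro g hg
      rw [← totalDegree_zero_iff_isHomogeneous, totalDegree_eq_zero_iff_eq_C] at hg
      rw [hg, ← mul_one (C _), map_mul, ← hfC, ← hsm]
      exact M.smul_mem _ (Submodule.subset_span ⟨0, by simp, rfl⟩)
    | succ d ih =>
      intro g hg
      by_cases hd : d + 1 ≤ N
      · rw [g.as_sum, map_sum]
        refine M.sum_mem fun m hm => ?_
        rw [← mul_one (coeff m g), ← C_mul_monomial, map_mul, ← hfC, ← hsm]
        refine M.smul_mem _ (Submodule.subset_span ⟨m, ?_, rfl⟩)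
        have := hg.degree_eq_sum_deg_support hm
        show m.degree ≤ N
        by_contra hc
        exact (mem_support_iff.mp hm) (hg.coeff_eq_zero (by omega))
      · have hgN : g ∈ idealOfVars σ F ^ N := by
          rw [mem_pow_idealOfVars_iff']
          intro x hx
          exact hg.coeff_eq_zero (by omega)
        obtain ⟨u, hu, v, hv, huv⟩ := Submodule.mem_sup.mp (hN hgN)
        obtain ⟨c, hc⟩ := (Ideal.mem_span_range_iff_exists_fun).mp hv
        have hg2 : g = homogeneousComponent (d + 1) u +
            ∑ i, homogeneousComponent d (c i) * X (i : σ) := by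
          conv_lhs => rw [← homogeneousComponent_eq_self hg, ← huv, map_add, ← hc, map_sum]
          simp_rw [hC_X_mul]
        rw [hg2, map_add, hq0 _
          (homogeneousComponent_mem_of_mem hI hu _), zero_add, map_sum]
        refine M.sum_mem fun i _ => ?_
        rw [map_mul, mul_comm, ← hfX, ← hsm]
        exact M.smul_mem _ (ih _ (homogeneousComponent_isHomogeneous _ _))
  have htop : M = ⊤ := by
    rw [eq_top_iff]
    rintro x -
    obtain ⟨g, rfl⟩ := hq x
    rw [← sum_homogeneousComponent g, map_sum]
    exact M.sum_mem fun i _ => key i _ (homogeneousComponent_isHomogeneous _ _)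
  refine ⟨?_⟩
  rw [← htop]
  exact Submodule.fg_span ((Finsupp.finite_of_degree_le N).image _)

theorem det_homog {σ F : Type*} [CommRing F] {t : ℕ} (M : Matrix (Fin t) (Fin t) (MvPolynomial σ F))
    (h : ∀ a b, (M a b).IsHomogeneous 1) : M.det.IsHomogeneous t := by
  rw [Matrix.det_apply]
  refine IsHomogeneous.sum _ _ _ fun s _ => ?_
  have : (∏ i, M (s i) i).IsHomogeneous (∑ _i : Fin t, 1) :=
    IsHomogeneous.prod _ _ _ fun i _ => h _ _
  rcases Int.units_eq_one_or (Equiv.Perm.sign s) with hs | hs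
  · simpa [hs] using this
  · simpa [hs] using this.neg


theorem rec_det_zero {K : Type*} [Field K] (s : ℕ) (z : ℕ → K) (c : Fin s → K)
    (hrec : ∀ k, z (k + s) = ∑ j, c j * z (k + j)) (g : Fin (s + 1) → ℕ) :
    (Matrix.of fun a b : Fin (s + 1) => z ((a : ℕ) + g b)).det = 0 := by
  rw [← Matrix.exists_vecMul_eq_zero_iff]
  refine ⟨Fin.snoc c (-1), ?_, ?_⟩
  · intro h
    have := congrFun h (Fin.last s)
    simp at this
  · ext b
    simp only [Matrix.vecMul, dotProduct, Fin.sum_univ_castSucc, Fin.snoc_castSucc, Fin.snoc_last,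
      Matrix.of_apply, Fin.val_castSucc, Fin.val_last, Pi.zero_apply]
    rw [add_comm s, hrec]
    simp [add_comm]

/-- The linear recurrence sequence with given initial values. -/
noncomputable def recSeq {K : Type*} [Field K] (s : ℕ) (y : ℕ → K) (c : Fin s → K) : ℕ → K
  | k => if _h : k < 2 * s then y k else
      ∑ j : Fin s, c j * recSeq s y c (k - s + j)
  termination_by k => k
  decreasing_by have := j.2; omega

theorem hankel_det_ne_zero (F : Type*) [Field F] (s : ℕ) :
    (Matrix.of fun a b : Fin s =>
      (X ⟨(a : ℕ) + b, by omega⟩ : MvPolynomial (Fin (2 * s)) F)).det ≠ 0 := by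
  intro h
  have h2 := congrArg (MvPolynomial.eval (fun i : Fin (2 * s) => if (i : ℕ) + 1 = s then (1 : F) else 0)) h
  rw [map_zero, RingHom.map_det] at h2
  have h3 := Matrix.det_permute' (Fin.revPerm : Equiv.Perm (Fin s))
    ((MvPolynomial.eval (fun i : Fin (2 * s) => if (i : ℕ) + 1 = s then (1 : F) else 0)).mapMatrix
    (Matrix.of fun a b : Fin s =>
      (X ⟨(a : ℕ) + b, by omega⟩ : MvPolynomial (Fin (2 * s)) F)))
  rw [h2, mul_zero, Matrix.det_of_isLowerTriangular] at h3
  · refine one_ne_zero (α := F) ?_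
    rw [← h3]
    symm
    refine Finset.prod_eq_one fun a _ => ?_
    have := a.2
    simp [Fin.val_rev]
    omega
  · intro a b hab
    have hab' : a < b := hab
    have : (a : ℕ) < b := hab'
    have := b.2
    simp [Fin.val_rev]
    omega

theorem exists_seq (F K : Type*) [Field F] [Field K] (s : ℕ) [Algebra F K]
    [Algebra (MvPolynomial (Fin (2 * s)) F) K] [IsScalarTower F (MvPolynomial (Fin (2 * s)) F) K]
    [IsFractionRing (MvPolynomial (Fin (2 * s)) F) K] :
    ∃ (z : ℕ → K) (c : Fin s → K),
      AlgebraicIndependent F (fun i : Fin (2 * s) => z i) ∧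
      ∀ k, z (k + s) = ∑ j, c j * z (k + j) := by
  let y : ℕ → K := fun k => if h : k < 2 * s then
    algebraMap (MvPolynomial (Fin (2 * s)) F) K (X ⟨k, h⟩) else 0
  let M : Matrix (Fin s) (Fin s) K := Matrix.of fun a b => y (a + b)
  have hM : M = (algebraMap (MvPolynomial (Fin (2 * s)) F) K).mapMatrix
    (Matrix.of fun a b : Fin s =>
      (X ⟨(a : ℕ) + b, by omega⟩ : MvPolynomial (Fin (2 * s)) F)) := by
    ext a b
    have : (a : ℕ) + b < 2 * s := by omega
    simp [M, y, this]
  have hdet : IsUnit M.det := by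
    rw [isUnit_iff_ne_zero, hM, ← RingHom.map_det]
    exact fun h => hankel_det_ne_zero F s
      ((map_eq_zero_iff _ (IsFractionRing.injective (MvPolynomial (Fin (2 * s)) F) K)).mp h)
  let c : Fin s → K := M⁻¹ *ᵥ (fun a => y (a + s))
  have hc : M *ᵥ c = fun a : Fin s => y (a + s) := by
    simp [c, Matrix.mulVec_mulVec, Matrix.mul_nonsing_inv _ hdet]
  have hz : ∀ k, k < 2 * s → recSeq s y c k = y k := by
    intro k hk
    rw [recSeq]
    simp [hk]
  refine ⟨recSeq s y c, c, ?_, ?_⟩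
  · have : (fun i : Fin (2 * s) => recSeq s y c i) =
        (algebraMap (MvPolynomial (Fin (2 * s)) F) K) ∘ X := by
      ext i
      rw [hz _ i.2]
      simp [y]
    rw [this]
    exact (algebraicIndependent_X (Fin (2 * s)) F).map' (f := IsScalarTower.toAlgHom F _ K)
      (IsFractionRing.injective (MvPolynomial (Fin (2 * s)) F) K)
  · intro k
    by_cases hk : k < s
    · rw [hz _ (by omega)]
      have := congrFun hc ⟨k, hk⟩
      simp only [] at this
      rw [← this]
      simp only [Matrix.mulVec, dotProduct, M, Matrix.of_apply]
      refine Finset.sum_congr rfl fun j _ => ?_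
      rw [hz _ (by omega), mul_comm]
    · rw [recSeq]
      rw [dif_neg (by omega)]
      simp

/-- The indices of the parameters. -/
def paramEquiv (s n : ℕ) (hn : s + 1 ≤ n) :
    Fin (2 * s) ≃ {i : Fin (n + (s + 1) - 1) // (i : ℕ) < s + 1 - 1 ∨ n ≤ (i : ℕ)} where
  toFun k := ⟨⟨if (k : ℕ) < s then k else k - s + n, by have := k.2; split_ifs <;> omega⟩, by
    have := k.2; dsimp only; split_ifs <;> omega⟩
  invFun i := ⟨if (i : ℕ) < s then i else i - n + s, by
    have := i.2; have := i.1.2; split_ifs <;> omega⟩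
  left_inv k := by
    have := k.2
    ext; dsimp only; split_ifs <;> omega
  right_inv i := by
    have := i.2
    have := i.1.2
    ext; dsimp only; split_ifs <;> omega

theorem params_inj {F K B : Type*} {τ : Type} [Field F] [Field K] [Algebra F K] [CommRing B] [Algebra F B]
    [Finite τ] (m : ℕ) (e : Fin m ≃ τ) (φ : MvPolynomial τ F →ₐ[F] B) (hφ : φ.toRingHom.IsIntegral)
    (ψ : B →ₐ[F] K) (w : Fin m → B) (hw : AlgebraicIndependent F (fun i => ψ (w i))) :
    Function.Injective φ := by
  let x : τ → ψ.range := fun i => ψ.rangeRestrict (φ (X i))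
  have hxa : aeval x = ψ.rangeRestrict.comp φ := by
    ext i; simp [x]
  have hw' : AlgebraicIndependent F (fun i => ψ.rangeRestrict (w i)) := by
    exact AlgebraicIndependent.of_comp ψ.range.val hw
  have : Algebra.IsAlgebraic (Algebra.adjoin F (Set.range x)) ψ.range := by
    have hfint : Algebra.IsIntegral (Algebra.adjoin F (Set.range x)) ψ.range := by
      refine ⟨fun b => ?_⟩
      obtain ⟨r, rfl⟩ := ψ.rangeRestrict_surjective b
      obtain ⟨P, hP, hP0⟩ := hφ r
      let θ : MvPolynomial τ F →ₐ[F] Algebra.adjoin F (Set.range x) :=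
        aeval (fun i => ⟨x i, Algebra.subset_adjoin ⟨i, rfl⟩⟩)
      have hθ : (Algebra.adjoin F (Set.range x)).val.comp θ = ψ.rangeRestrict.comp φ := by
        ext i; simp [x, θ]
      have hθ' : (algebraMap (Algebra.adjoin F (Set.range x)) ψ.range).comp θ.toRingHom
          = ψ.rangeRestrict.toRingHom.comp φ.toRingHom := by
        refine RingHom.ext fun y => ?_
        exact DFunLike.congr_fun hθ y
      refine ⟨P.map θ.toRingHom, hP.map _, ?_⟩
      rw [Polynomial.eval₂_map, hθ']
      have := Polynomial.hom_eval₂ P φ.toRingHom ψ.rangeRestrict.toRingHom r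
      rw [hP0, map_zero] at this
      exact this.symm
    exact hfint.isAlgebraic
  have hb := Algebra.IsAlgebraic.isTranscendenceBasis_of_lift_le_trdeg_of_finite F x (by
    have := hw'.lift_cardinalMk_le_trdeg
    rw [← Cardinal.mk_congr e]
    exact this)
  have := hb.1
  have h2 : Function.Injective (aeval x : MvPolynomial τ F →ₐ[F] ψ.range) := this
  rw [hxa] at h2
  exact Function.Injective.of_comp (f := ψ.rangeRestrict) h2

theorem artinian_of_krullDimLE {R : Type*} [CommRing R] [IsNoetherianRing R] (a : Ideal R)
    (h : Ring.KrullDimLE 0 (R ⧸ a)) : IsArtinianRing (R ⧸ a) := by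
  have h2 := (isArtinianRing_iff_krullDimLE_zero (R := R ⧸ a)).mpr h
  exact h2

/-- For the `t×n` Hankel determinantal ring `R = F[x_1,...,x_{n+t-1}]/I_t(H)` (with `t ≤ n`),
the images of `x_1,...,x_{t-1},x_{n+1},...,x_{n+t-1}` form a homogeneous system of parameters:
the quotient of `R` by the ideal they generate is Artinian of Krull dimension `0`, and
`dim R = 2t-2`. -/
theorem hankel_hsop (F : Type*) [Field F] (t n : ℕ) (ht : 2 ≤ t) (htn : t ≤ n)
    (H : Matrix (Fin t) (Fin n) (MvPolynomial (Fin (n + t - 1)) F))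
    (hH : ∀ a b, H a b = X ⟨(a : ℕ) + (b : ℕ), by have := a.2; have := b.2; omega⟩)
    (I : Ideal (MvPolynomial (Fin (n + t - 1)) F))
    (hI : I = Ideal.span (Set.range fun g : Fin t → Fin n => (H.submatrix id g).det))
    (a : Ideal (MvPolynomial (Fin (n + t - 1)) F ⧸ I))
    (ha : a = Ideal.span ((fun p => Ideal.Quotient.mk I p) ''
      {p | ∃ i : Fin (n + t - 1), ((i : ℕ) < t - 1 ∨ n ≤ (i : ℕ)) ∧ p = X i})) :
    IsArtinianRing ((MvPolynomial (Fin (n + t - 1)) F ⧸ I) ⧸ a) ∧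
    ringKrullDim ((MvPolynomial (Fin (n + t - 1)) F ⧸ I) ⧸ a) = 0 ∧
    ringKrullDim (MvPolynomial (Fin (n + t - 1)) F ⧸ I) = ((2 * t - 2 : ℕ) : WithBot (WithTop ℕ)) := by
  obtain ⟨s, rfl⟩ : ∃ s, t = s + 1 := ⟨t - 1, by omega⟩
  have hminor : ∀ g : Fin (s + 1) → Fin n, (H.submatrix id g).det ∈ I := fun g => by
    rw [hI]; exact Ideal.subset_span ⟨g, rfl⟩
  -- primes of `S` containing `I` and the parameters contain all variables
  have hprime : ∀ Q : Ideal (MvPolynomial (Fin (n + (s + 1) - 1)) F), Q.IsPrime → I ≤ Q →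
      (∀ i : Fin (n + (s + 1) - 1), ((i : ℕ) < s + 1 - 1 ∨ n ≤ (i : ℕ)) → X i ∈ Q) →
      ∀ i, (X i : MvPolynomial (Fin (n + (s + 1) - 1)) F) ∈ Q := by
    intro Q hQ hIQ hp i
    by_cases hi : n ≤ (i : ℕ)
    · exact hp i (Or.inr hi)
    let z : ℕ → MvPolynomial (Fin (n + (s + 1) - 1)) F ⧸ Q := fun k =>
      if h : k < n + (s + 1) - 1 then Ideal.Quotient.mk Q (X ⟨k, h⟩) else 0
    have hz := hankel_vanish (s + 1) n (by omega) z (by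
      intro g
      have h := Ideal.Quotient.eq_zero_iff_mem.mpr (hIQ (hminor g))
      rw [RingHom.map_det] at h
      rw [← h]
      congr 1
      ext a b
      have : (a : ℕ) + g b < n + (s + 1) - 1 := by omega
      simp only [z, Matrix.of_apply, RingHom.mapMatrix_apply, Matrix.map_apply,
        Matrix.submatrix_apply, hH, id]
      rw [dif_pos this]) (by
      intro k hk
      have : k < n + (s + 1) - 1 := by omega
      simp only [z, this, dif_pos]
      exact Ideal.Quotient.eq_zero_iff_mem.mpr (hp _ (Or.inl hk))) i (by omega)
    have hi2 : (i : ℕ) < n + (s + 1) - 1 := i.2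
    simp only [z, hi2, dif_pos] at hz
    exact Ideal.Quotient.eq_zero_iff_mem.mp hz
  -- the maximal ideal of variables
  have hev : ∀ x ∈ I, MvPolynomial.eval (0 : Fin (n + (s + 1) - 1) → F) x = 0 := by
    intro x hx
    have : I ≤ RingHom.ker (MvPolynomial.eval (0 : Fin (n + (s + 1) - 1) → F)) := by
      rw [hI, Ideal.span_le]
      rintro _ ⟨g, rfl⟩
      show MvPolynomial.eval _ _ = 0
      rw [RingHom.map_det]
      refine Matrix.det_eq_zero_of_row_eq_zero 0 fun b => ?_
      simp [hH]
    exact this hx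
  have haX : ∀ i : Fin (n + (s + 1) - 1), ((i : ℕ) < s + 1 - 1 ∨ n ≤ (i : ℕ)) →
      Ideal.Quotient.mk I (X i) ∈ a := by
    intro i hi
    rw [ha]
    exact Ideal.subset_span ⟨X i, ⟨i, hi, rfl⟩, rfl⟩
  have hmax : (idealOfVars (Fin (n + (s + 1) - 1)) F).IsMaximal := by
    have : idealOfVars (Fin (n + (s + 1) - 1)) F =
        RingHom.ker (constantCoeff : MvPolynomial (Fin (n + (s + 1) - 1)) F →+* F) := by
      ext x
      rw [← pow_one (idealOfVars _ _), mem_pow_idealOfVars_iff', RingHom.mem_ker,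
        constantCoeff_eq]
      constructor
      · intro h
        exact h 0 (by simp)
      · intro h m hm
        have : m = 0 := by
          rw [← Finsupp.degree_eq_zero_iff]; omega
        rw [this, h]
    rw [this]
    exact RingHom.ker_isMaximal_of_surjective _ fun c => ⟨C c, by simp⟩
  have hkd : Ring.KrullDimLE 0 ((MvPolynomial (Fin (n + (s + 1) - 1)) F ⧸ I) ⧸ a) := by
    rw [Ring.krullDimLE_zero_iff]
    intro P hP
    let q : MvPolynomial (Fin (n + (s + 1) - 1)) F →+* _ :=
      (Ideal.Quotient.mk a).comp (Ideal.Quotient.mk I)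
    have hq : Function.Surjective q :=
      Ideal.Quotient.mk_surjective.comp Ideal.Quotient.mk_surjective
    have hle : idealOfVars (Fin (n + (s + 1) - 1)) F ≤ P.comap q := by
      rw [idealOfVars, Ideal.span_le]
      rintro _ ⟨i, rfl⟩
      refine hprime (P.comap q) inferInstance ?_ ?_ i
      · intro x hx
        simp [Ideal.mem_comap, q, Ideal.Quotient.eq_zero_iff_mem.mpr hx]
      · intro i hi
        simp [Ideal.mem_comap, q, Ideal.Quotient.eq_zero_iff_mem.mpr (haX i hi)]
    have hc : (P.comap q).IsMaximal := by
      rw [← hmax.eq_of_le (Ideal.IsPrime.ne_top inferInstance) hle]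
      exact hmax
    rcases Ideal.map_eq_top_or_isMaximal_of_surjective q hq hc with h | h
    · rw [Ideal.map_comap_of_surjective q hq] at h
      exact absurd h hP.ne_top
    · rwa [Ideal.map_comap_of_surjective q hq] at h
  have hnt : Nontrivial ((MvPolynomial (Fin (n + (s + 1) - 1)) F ⧸ I) ⧸ a) := by
    rw [Ideal.Quotient.nontrivial_iff]
    intro h
    have h1 : (1 : MvPolynomial (Fin (n + (s + 1) - 1)) F ⧸ I) ∈ a := h ▸ Submodule.mem_top
    have h2 : a ≤ RingHom.ker (Ideal.Quotient.lift I _ hev) := by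
      rw [ha, Ideal.span_le]
      rintro _ ⟨_, ⟨i, hi, rfl⟩, rfl⟩
      simp [RingHom.mem_ker]
    have h3 := h2 h1
    rw [RingHom.mem_ker, map_one] at h3
    exact one_ne_zero h3
  refine ⟨artinian_of_krullDimLE a hkd,
    ringKrullDimZero_iff_ringKrullDim_eq_zero.mp hkd, ?_⟩
  -- integrality over the parameters
  let p : Fin (n + (s + 1) - 1) → Prop := fun i => (i : ℕ) < s + 1 - 1 ∨ n ≤ (i : ℕ)
  let φ : MvPolynomial {i // p i} F →ₐ[F] (MvPolynomial (Fin (n + (s + 1) - 1)) F ⧸ I) :=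
    (Ideal.Quotient.mkₐ F I).comp (rename (fun i : {i // p i} => (i : Fin (n + (s + 1) - 1))))
  have hφint : φ.toRingHom.IsIntegral := by
    have hrad : idealOfVars (Fin (n + (s + 1) - 1)) F ≤
        (I ⊔ Ideal.span (Set.range fun i : {i // p i} =>
          (X (i : Fin (n + (s + 1) - 1)) : MvPolynomial _ F))).radical := by
      rw [idealOfVars, Ideal.span_le]
      rintro _ ⟨i, rfl⟩
      rw [Ideal.radical_eq_sInf]
      simp only [SetLike.mem_coe, Submodule.mem_sInf]
      rintro Q ⟨hQ, hQp⟩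
      refine hprime Q hQp (le_sup_left.trans hQ) (fun j hj => hQ ?_) i
      exact Ideal.mem_sup_right (Ideal.subset_span ⟨⟨j, hj⟩, rfl⟩)
    obtain ⟨N, hN⟩ := Ideal.exists_pow_le_of_le_radical_of_fg hrad (idealOfVars_fg _ _)
    refine RingHom.Finite.to_isIntegral (graded_finite I ?_ p N hN (Ideal.Quotient.mk I)
      Ideal.Quotient.mk_surjective (fun x hx => Ideal.Quotient.eq_zero_iff_mem.mpr hx) _
      (fun c => ?_) (fun i => ?_))
    · rw [hI]
      letI : GradedRing (homogeneousSubmodule (Fin (n + (s + 1) - 1)) F) :=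
        MvPolynomial.gradedAlgebra
      refine Ideal.homogeneous_span _ _ ?_
      rintro _ ⟨g, rfl⟩
      refine ⟨s + 1, ?_⟩
      rw [mem_homogeneousSubmodule]
      refine det_homog _ fun a b => ?_
      rw [Matrix.submatrix_apply, hH]
      exact isHomogeneous_X _ _
    · show φ (C c) = _
      simp only [φ, AlgHom.comp_apply, rename_C]
      rfl
    · show φ (X i) = _
      simp [φ]
  -- independence
  have hφinj : Function.Injective φ := by
    obtain ⟨z, c, hz, hrec⟩ := exists_seq F (FractionRing (MvPolynomial (Fin (2 * s)) F)) s
    let ψ₀ : MvPolynomial (Fin (n + (s + 1) - 1)) F →ₐ[F]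
      FractionRing (MvPolynomial (Fin (2 * s)) F) := aeval (fun i => z i)
    have hψ₀ : ∀ x ∈ I, ψ₀ x = 0 := by
      intro x hx
      have : I ≤ RingHom.ker ψ₀.toRingHom := by
        rw [hI, Ideal.span_le]
        rintro _ ⟨g, rfl⟩
        show ψ₀.toRingHom _ = 0
        rw [RingHom.map_det, ← rec_det_zero s z c hrec (fun b => (g b : ℕ))]
        congr 1
        ext a b
        simp [hH, ψ₀]
      exact this hx
    refine params_inj (2 * s) (paramEquiv s n htn) φ hφint (Ideal.Quotient.liftₐ I ψ₀ hψ₀)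
      (fun i => Ideal.Quotient.mk I (X ⟨i, by omega⟩)) ?_
    convert hz using 2 with i
    exact aeval_X _ _
  rw [krullDim_eq_of_integral_inj φ.toRingHom hφinj hφint,
    MvPolynomial.ringKrullDim_of_isNoetherianRing, ringKrullDim_eq_zero_of_field,
    ← Nat.card_congr (paramEquiv s n htn)]
  have : 2 * (s + 1) - 2 = 2 * s := by omega
  rw [this, zero_add, Nat.card_eq_fintype_card, Fintype.card_fin]
  rfl
end

section
/- Let F be a field, H the t×n Hankel matrix in x_1,...,x_{n+t-1} with t ≤ n, and R = F[x_1,...,x_{n+t-1}]/I_t(H). Then the multiplicity of R is e(R) = binomial(n, t-1), and the a-invariant of R is a(R) = 1-t. -/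
set_option synthInstance.maxHeartbeats 1000000
set_option maxHeartbeats 1000000

open MvPolynomial Matrix PowerSeries

/-- Greedy number of blocks of two adjacent indices covering the support of a tuple. -/
def hkBlocks : (N : ℕ) → (Fin N → ℕ) → ℕ
  | 0, _ => 0
  | 1, α => if α 0 = 0 then 0 else 1
  | N + 2, α => if α 0 = 0 then hkBlocks (N + 1) (Fin.tail α)
      else hkBlocks N (Fin.tail (Fin.tail α)) + 1

theorem hkBlocks_chain (N : ℕ) (α : Fin N → ℕ) (t : ℕ) (h : t ≤ hkBlocks N α) :
    ∃ c : ℕ → ℕ, (∀ k < t, ∃ hk : c k < N, α ⟨c k, hk⟩ ≠ 0) ∧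
      ∀ k, k + 1 < t → c k + 2 ≤ c (k + 1) := by
  induction N, α using hkBlocks.induct generalizing t with
  | case1 α =>
    simp only [hkBlocks] at h
    exact ⟨fun _ => 0, by omega, by omega⟩
  | case2 α h0 =>
    simp only [hkBlocks, h0, if_true] at h
    exact ⟨fun _ => 0, by omega, by omega⟩
  | case3 α h0 =>
    simp only [hkBlocks, h0, if_false] at h
    exact ⟨fun _ => 0, fun k hk => ⟨by dsimp only; omega, h0⟩, by omega⟩
  | case4 N α h0 ih =>
    simp only [hkBlocks, h0, if_true] at h
    obtain ⟨c, h1, h2⟩ := ih t h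
    refine ⟨fun k => c k + 1, fun k hk => ?_, fun k hk => by have := h2 k hk; dsimp only; omega⟩
    obtain ⟨h3, h4⟩ := h1 k hk
    exact ⟨by dsimp only; omega, h4⟩
  | case5 N α h0 ih =>
    simp only [hkBlocks, h0, if_false] at h
    obtain ⟨c, h1, h2⟩ := ih (t - 1) (by omega)
    refine ⟨fun k => match k with | 0 => 0 | k + 1 => c k + 2, fun k hk => ?_, fun k hk => ?_⟩
    · cases k with
      | zero => exact ⟨by simp, h0⟩
      | succ k =>
        obtain ⟨h3, h4⟩ := h1 k (by omega)
        exact ⟨by simp only; omega, h4⟩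
    · cases k with
      | zero => simp
      | succ k => have := h2 k (by omega); simp only; omega

theorem hkBlocks_cover (N : ℕ) (α : Fin N → ℕ) (r : ℕ) (h : hkBlocks N α ≤ r) :
    ∃ c : ℕ → ℕ, (∀ k, c k + 2 ≤ c (k + 1)) ∧
      ∀ i : Fin N, α i ≠ 0 → ∃ j < r, (i : ℕ) = c j ∨ (i : ℕ) = c j + 1 := by
  induction N, α using hkBlocks.induct generalizing r with
  | case1 α => exact ⟨fun k => 2 * k, fun k => by dsimp only; omega, fun i => i.elim0⟩
  | case2 α h0 =>
    refine ⟨fun k => 2 * k, fun k => by dsimp only; omega, fun i hi => ?_⟩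
    rw [Subsingleton.elim i 0] at hi
    exact absurd h0 hi
  | case3 α h0 =>
    simp only [hkBlocks, h0, if_false] at h
    exact ⟨fun k => 2 * k, fun k => by dsimp only; omega, fun i hi => ⟨0, by omega, by dsimp only; omega⟩⟩
  | case4 N α h0 ih =>
    simp only [hkBlocks, h0, if_true] at h
    obtain ⟨c, h1, h2⟩ := ih r h
    refine ⟨fun k => c k + 1, fun k => by have := h1 k; dsimp only; omega, fun i => ?_⟩
    refine Fin.cases ?_ (fun i => ?_) i
    · intro h; exact absurd h0 h
    · intro hi
      obtain ⟨j, hj, hh⟩ := h2 i hi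
      exact ⟨j, hj, by simp only [Fin.val_succ]; omega⟩
  | case5 N α h0 ih =>
    simp only [hkBlocks, h0, if_false] at h
    obtain ⟨c, h1, h2⟩ := ih (r - 1) (by omega)
    refine ⟨fun k => match k with | 0 => 0 | k + 1 => c k + 2, fun k => ?_, fun i => ?_⟩
    · cases k with
      | zero => simp
      | succ k => have := h1 k; simp only; omega
    · refine Fin.cases ?_ (fun i => ?_) i
      · intro h; exact ⟨0, by omega, by simp⟩
      · refine Fin.cases ?_ (fun i => ?_) i
        · intro h; exact ⟨0, by omega, by simp⟩
        · intro hi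
          obtain ⟨j, hj, hh⟩ := h2 i hi
          exact ⟨j + 1, by omega, by simp only [Fin.val_succ]; omega⟩

theorem hk_sum_tuple (N k : ℕ) (f : (Fin (N + 1) → ℕ) → ℚ) :
    ∑ x ∈ Finset.Nat.antidiagonalTuple (N + 1) k, f x =
      ∑ p ∈ Finset.HasAntidiagonal.antidiagonal k, ∑ y ∈ Finset.Nat.antidiagonalTuple N p.2,
        f (Fin.cons p.1 y) := by
  rw [Finset.sum_sigma']
  symm
  refine Finset.sum_bij' (fun q _ => Fin.cons q.1.1 q.2)
    (fun x _ => ⟨(x 0, ∑ i, Fin.tail x i), Fin.tail x⟩) ?_ ?_ ?_ ?_ ?_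
  · rintro ⟨⟨a, b⟩, y⟩ h
    simp only [Finset.mem_sigma, Finset.HasAntidiagonal.mem_antidiagonal, Finset.Nat.mem_antidiagonalTuple] at h ⊢
    rw [Fin.sum_univ_succ]
    simp [h.2, h.1]
  · intro x hx
    simp only [Finset.mem_sigma, Finset.HasAntidiagonal.mem_antidiagonal, Finset.Nat.mem_antidiagonalTuple] at hx ⊢
    rw [Fin.sum_univ_succ] at hx
    exact ⟨hx, trivial⟩
  · rintro ⟨⟨a, b⟩, y⟩ h
    simp only [Finset.mem_sigma, Finset.HasAntidiagonal.mem_antidiagonal, Finset.Nat.mem_antidiagonalTuple] at h ⊢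
    obtain ⟨h1, rfl⟩ := h
    simp
  · intro x hx
    simp
  · intros; rfl

/-- Generating function of the tuples with at most `r` blocks. -/
noncomputable def hkG (N r : ℕ) : PowerSeries ℚ :=
  PowerSeries.mk fun k => ∑ x ∈ Finset.Nat.antidiagonalTuple N k,
    if hkBlocks N x ≤ r then (1 : ℚ) else 0

theorem hkG_zero (r : ℕ) : hkG 0 r = 1 := by
  ext k
  cases k with
  | zero => simp [hkG, hkBlocks]
  | succ k => simp [hkG, PowerSeries.coeff_one]

theorem hkG_one_zero : hkG 1 0 = 1 := by
  ext k
  cases k with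
  | zero =>
    simp only [hkG, PowerSeries.coeff_mk, Finset.Nat.antidiagonalTuple_zero_right,
      Finset.sum_singleton]
    simp [hkBlocks]
  | succ k => simp [hkG, PowerSeries.coeff_one, hkBlocks]

theorem hkG_one_succ (r : ℕ) : hkG 1 (r + 1) = PowerSeries.mk 1 := by
  ext k
  simp [hkG, hkBlocks]
  split_ifs <;> omega

theorem hkG_succ_zero (N : ℕ) : hkG (N + 2) 0 = hkG (N + 1) 0 := by
  ext k
  simp only [hkG, PowerSeries.coeff_mk]
  rw [hk_sum_tuple]
  cases k with
  | zero => simp [hkBlocks]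
  | succ k =>
    rw [Finset.Nat.sum_antidiagonal_succ]
    simp [hkBlocks]

theorem hkG_succ_succ (N r : ℕ) : hkG (N + 2) (r + 1) = hkG (N + 1) (r + 1) +
    PowerSeries.X * (PowerSeries.mk 1 * (PowerSeries.mk 1 * hkG N r)) := by
  have key : ∀ k, ∑ y ∈ Finset.Nat.antidiagonalTuple (N + 1) k,
      (if hkBlocks N (Fin.tail y) ≤ r then (1 : ℚ) else 0) =
      PowerSeries.coeff k (PowerSeries.mk 1 * hkG N r) := by
    intro k
    rw [hk_sum_tuple, PowerSeries.coeff_mul]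
    simp [hkG]
  ext k
  simp only [hkG, PowerSeries.coeff_mk, map_add]
  rw [hk_sum_tuple]
  cases k with
  | zero => simp [hkBlocks]
  | succ k =>
    rw [Finset.Nat.sum_antidiagonal_succ, PowerSeries.coeff_succ_X_mul, PowerSeries.coeff_mul]
    congr 1
    refine Finset.sum_congr rfl fun p _ => ?_
    rw [← hkG, ← key]
    simp [hkBlocks]

/-- The numerator polynomial. -/
noncomputable def hkh (r s : ℕ) : Polynomial ℚ :=
  ∑ i ∈ Finset.range (r + 1), Polynomial.monomial i (Nat.multichoose s i : ℚ)

theorem hkh_coeff (r s i : ℕ) : (hkh r s).coeff i =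
    if i < r + 1 then (Nat.multichoose s i : ℚ) else 0 := by
  simp [hkh, Polynomial.coeff_monomial]

theorem hkh_zero_left (s : ℕ) : hkh 0 s = 1 := by
  simp [hkh]

theorem hkh_zero_right (r : ℕ) : hkh r 0 = 1 := by
  ext i
  rw [hkh_coeff]
  cases i <;> simp [Polynomial.coeff_one]

theorem hkh_succ (r s : ℕ) : hkh (r + 1) (s + 1) = hkh (r + 1) s + Polynomial.X * hkh r (s + 1) := by
  ext i
  cases i with
  | zero => simp [hkh_coeff]
  | succ i =>
    simp only [hkh_coeff, Polynomial.coeff_add, Polynomial.coeff_X_mul]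
    by_cases h : i < r + 1
    · rw [if_pos (by omega), if_pos (by omega), if_pos h, Nat.multichoose_succ_succ, Nat.cast_add]
    · rw [if_neg (by omega), if_neg (by omega), if_neg h, add_zero]

theorem hkh_eval (r s : ℕ) : (hkh r s).eval 1 = (Nat.choose (s + r) r : ℚ) := by
  simp only [hkh, Polynomial.eval_finsetSum, Polynomial.eval_monomial, one_pow, mul_one]
  rw [← Nat.cast_sum, Nat.sum_range_multichoose, add_comm r s, Nat.choose_symm_add]

theorem hkh_natDegree (r s : ℕ) (hs : 0 < s) : (hkh r s).natDegree = r := by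
  apply Polynomial.natDegree_eq_of_le_of_coeff_ne_zero
  · rw [Polynomial.natDegree_le_iff_coeff_eq_zero]
    intro i hi
    rw [hkh_coeff, if_neg (by omega)]
  · rw [hkh_coeff, if_pos (by omega), Nat.multichoose_eq]
    exact_mod_cast (Nat.choose_pos (by omega)).ne'

theorem hkG_formula (N : ℕ) : ∀ r,
    (2 * r ≤ N → hkG N r * (1 - PowerSeries.X) ^ (2 * r) = (hkh r (N - 2 * r) : PowerSeries ℚ)) ∧
    (N ≤ 2 * r → hkG N r * (1 - PowerSeries.X) ^ N = 1) := by
  have hU : (PowerSeries.mk 1 : PowerSeries ℚ) * (1 - PowerSeries.X) = 1 :=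
    PowerSeries.mk_one_mul_one_sub_eq_one ℚ
  induction N using Nat.strong_induction_on with
  | _ N ih =>
  match N, ih with
  | 0, _ =>
    intro r
    refine ⟨fun h => ?_, fun _ => by simp [hkG_zero]⟩
    obtain rfl : r = 0 := by omega
    simp [hkG_zero, hkh_zero_left]
  | 1, _ =>
    intro r
    refine ⟨fun h => ?_, fun h => ?_⟩
    · obtain rfl : r = 0 := by omega
      simp [hkG_one_zero, hkh_zero_left]
    · obtain ⟨r, rfl⟩ : ∃ r', r = r' + 1 := ⟨r - 1, by omega⟩
      rw [hkG_one_succ, pow_one, hU]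
  | N + 2, ih =>
    intro r
    cases r with
    | zero =>
      refine ⟨fun _ => ?_, fun h => by omega⟩
      have := (ih (N + 1) (by omega) 0).1 (by omega)
      simpa [hkG_succ_zero, hkh_zero_left] using this
    | succ r =>
      have hB : N + 2 ≤ 2 * (r + 1) → hkG (N + 2) (r + 1) * (1 - PowerSeries.X) ^ (N + 2) = 1 := by
        intro h
        have h1 := (ih (N + 1) (by omega) (r + 1)).2 (by omega)
        have h2 := (ih N (by omega) r).2 (by omega)
        rw [hkG_succ_succ]
        linear_combination (1 - PowerSeries.X) * h1 + PowerSeries.X * h2 +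
          PowerSeries.X * hkG N r * (1 - PowerSeries.X) ^ N *
            (PowerSeries.mk 1 * (1 - PowerSeries.X) + 1) * hU
      refine ⟨fun h => ?_, hB⟩
      obtain ⟨s, rfl⟩ : ∃ s, N = 2 * r + s := ⟨N - 2 * r, by omega⟩
      cases s with
      | zero =>
        have e : 2 * r + 0 + 2 - 2 * (r + 1) = 0 := by omega
        rw [e, hkh_zero_right, Polynomial.coe_one]
        exact hB (by omega)
      | succ s =>
        have h1 := (ih (2 * r + (s + 1) + 1) (by omega) (r + 1)).1 (by omega)
        have h2 := (ih (2 * r + (s + 1)) (by omega) r).1 (by omega)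
        have e1 : 2 * r + (s + 1) + 1 - 2 * (r + 1) = s := by omega
        have e2 : 2 * r + (s + 1) - 2 * r = s + 1 := by omega
        have e3 : 2 * r + (s + 1) + 2 - 2 * (r + 1) = s + 1 := by omega
        rw [e1] at h1
        rw [e2] at h2
        rw [e3, hkh_succ, hkG_succ_succ, Polynomial.coe_add, Polynomial.coe_mul, Polynomial.coe_X,
          ← h1, ← h2]
        linear_combination 
          PowerSeries.X * hkG (2 * r + (s + 1)) r * (1 - PowerSeries.X) ^ (2 * r) *
            (PowerSeries.mk 1 * (1 - PowerSeries.X) + 1) * hU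

theorem hk_det_zero {R : Type*} [CommRing R] {t r : ℕ} (hr : r < t) (A : Matrix (Fin t) (Fin r) R)
    (B : Matrix (Fin r) (Fin t) R) : (A * B).det = 0 := by
  have : A * B = (Matrix.of fun a (b : Fin t) => if h : (b : ℕ) < r then A a ⟨b, h⟩ else 0) *
      (Matrix.of fun (b : Fin t) a => if h : (b : ℕ) < r then B ⟨b, h⟩ a else 0) := by
    ext a b
    simp only [Matrix.mul_apply, Matrix.of_apply]
    symm
    rw [← Finset.sum_subset (Finset.subset_univ (Finset.univ.map (Fin.castLEEmb hr.le)))]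
    · simp
    · intro x _ hx
      have : ¬ (x : ℕ) < r := by
        intro h
        apply hx
        simp only [Finset.mem_map, Finset.mem_univ, true_and]
        exact ⟨⟨x, h⟩, rfl⟩
      simp [this]
  rw [this, Matrix.det_mul, Matrix.det_eq_zero_of_column_eq_zero ⟨r, hr⟩, zero_mul]
  intro i
  simp

/-- Exponent of the term of `x_i` in the `j`-th summand of the secant parametrization. -/
noncomputable def hkE {r : ℕ} (j : Fin r) (i : ℕ) : Fin r ⊕ Fin r →₀ ℕ :=
  Finsupp.single (Sum.inr j) 1 + Finsupp.single (Sum.inl j) i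

/-- The secant parametrization. -/
noncomputable def hkPhi (F : Type*) [Field F] (N r : ℕ) :
    MvPolynomial (Fin N) F →ₐ[F] MvPolynomial (Fin r ⊕ Fin r) F :=
  MvPolynomial.aeval fun i => ∑ j : Fin r, MvPolynomial.monomial (hkE j (i : ℕ)) 1

theorem hkE_monomial (F : Type*) [Field F] {r : ℕ} (j : Fin r) (a b : ℕ) :
    (MvPolynomial.monomial (hkE j (a + b)) (1 : F)) =
      MvPolynomial.monomial (hkE j a) 1 * MvPolynomial.monomial (Finsupp.single (Sum.inl j) b) 1 := by
  rw [MvPolynomial.monomial_mul, one_mul, hkE, hkE, Finsupp.single_add, add_assoc]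

theorem hkPhi_det (F : Type*) [Field F] {t n N r : ℕ} (hr : r < t)
    (H : Matrix (Fin t) (Fin n) (MvPolynomial (Fin N) F))
    (hlt : ∀ (a : Fin t) (b : Fin n), (a : ℕ) + (b : ℕ) < N)
    (hH : ∀ a b, H a b = MvPolynomial.X ⟨(a : ℕ) + (b : ℕ), hlt a b⟩)
    (g : Fin t → Fin n) : hkPhi F N r ((H.submatrix id g).det) = 0 := by
  rw [AlgHom.map_det]
  rw [← hk_det_zero hr (Matrix.of fun (a : Fin t) (j : Fin r) =>
    MvPolynomial.monomial (hkE j (a : ℕ)) (1 : F)) (Matrix.of fun (j : Fin r) (b : Fin t) =>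
    MvPolynomial.monomial (Finsupp.single (Sum.inl j) (g b : ℕ)) (1 : F))]
  congr 1
  ext1 a b
  simp [Matrix.mul_apply, hH, hkPhi, hkE_monomial]

theorem hkPhi_monomial (F : Type*) [Field F] {N r : ℕ} (α : Fin N →₀ ℕ) :
    hkPhi F N r (MvPolynomial.monomial α 1) =
      ∑ g : (Σ i : Fin N, Fin (α i)) → Fin r,
        MvPolynomial.monomial (∑ l, hkE (g l) (l.1 : ℕ)) 1 := by
  rw [hkPhi, MvPolynomial.aeval_monomial, map_one, one_mul,
    Finsupp.prod_fintype _ _ (fun i => pow_zero _)]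
  have h1 : ∏ i : Fin N, (∑ j : Fin r, MvPolynomial.monomial (hkE j (i : ℕ)) (1 : F)) ^ α i =
      ∏ l : (Σ i : Fin N, Fin (α i)), ∑ j : Fin r,
        MvPolynomial.monomial (hkE j (l.1 : ℕ)) (1 : F) := by
    rw [Fintype.prod_sigma]
    simp
  rw [h1, Finset.prod_univ_sum]
  simp only [Fintype.piFinset_univ]
  refine Finset.sum_congr rfl fun g _ => ?_
  rw [MvPolynomial.monomial_sum_one]

theorem hk_pairing {r : ℕ} {L L' : Type*} [Fintype L] [Fintype L'] (g : L → Fin r) (g' : L' → Fin r)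
    (f : L → ℕ) (f' : L' → ℕ) (h : ∑ l, hkE (g l) (f l) = ∑ l, hkE (g' l) (f' l))
    (p q : Fin r → ℤ) :
    ∑ l, (p (g l) + q (g l) * f l) = ∑ l, (p (g' l) + q (g' l) * f' l) := by
  let T : (Fin r ⊕ Fin r →₀ ℕ) →+ ℤ :=
    Finsupp.liftAddHom fun s => (AddMonoidHom.mulLeft (Sum.elim q p s)).comp (Nat.castAddMonoidHom ℤ)
  have hT : ∀ j i, T (hkE j i) = p j + q j * i := by
    intro j i
    rw [hkE, map_add]
    simp only [T, Finsupp.liftAddHom_apply_single]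
    simp
  have := congrArg T h
  simpa only [map_sum, hT] using this

/-- The quadratic weight. -/
def hkW {N : ℕ} (α : Fin N →₀ ℕ) : ℕ := ∑ i, α i * (i : ℕ) ^ 2

theorem hk_sum_sigma {N : ℕ} (α : Fin N →₀ ℕ) (f : Fin N → ℤ) :
    ∑ l : (Σ i : Fin N, Fin (α i)), f l.1 = ∑ i, (α i : ℤ) * f i := by
  rw [Fintype.sum_sigma]
  simp

theorem hk_gap (c : ℕ → ℕ) (hc : ∀ k, c k + 2 ≤ c (k + 1)) {j k : ℕ} (h : j < k) :
    c j + 2 ≤ c k := by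
  induction k, h using Nat.le_induction with
  | base => exact hc j
  | succ k _ ih => have := hc k; omega

theorem hk_disj (c : ℕ → ℕ) (hc : ∀ k, c k + 2 ≤ c (k + 1)) {j k i : ℕ}
    (h : i = c j ∨ i = c j + 1) (h' : i = c k ∨ i = c k + 1) : j = k := by
  rcases lt_trichotomy j k with h1 | h1 | h1
  · have := hk_gap c hc h1; omega
  · exact h1
  · have := hk_gap c hc h1; omega

theorem hk_int_nonneg (x c : ℕ) : (0 : ℤ) ≤ ((x : ℤ) - c) * ((x : ℤ) - c - 1) := by
  rcases le_or_gt x c with h | h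
  · have : (x : ℤ) ≤ c := by exact_mod_cast h
    nlinarith
  · have : (c : ℤ) + 1 ≤ x := by exact_mod_cast h
    nlinarith

theorem hk_key {N r : ℕ} (α α' : Fin N →₀ ℕ) (c : ℕ → ℕ) (hc : ∀ k, c k + 2 ≤ c (k + 1))
    (β : Fin N → Fin r)
    (hβ : ∀ i, α' i ≠ 0 → (i : ℕ) = c (β i) ∨ (i : ℕ) = c (β i) + 1)
    (g : (Σ i : Fin N, Fin (α i)) → Fin r)
    (h : ∑ l, hkE (g l) (l.1 : ℕ) = ∑ l : (Σ i : Fin N, Fin (α' i)), hkE (β l.1) (l.1 : ℕ)) :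
    hkW α' ≤ hkW α ∧ (hkW α ≤ hkW α' → α = α' ∧ ∀ l, g l = β l.1) := by
  have hpair := hk_pairing g (fun l : (Σ i : Fin N, Fin (α' i)) => β l.1) (fun l => (l.1 : ℕ))
    (fun l => (l.1 : ℕ)) h
  have hα' : ∀ l : (Σ i : Fin N, Fin (α' i)), (l.1 : ℕ) = c (β l.1) ∨ (l.1 : ℕ) = c (β l.1) + 1 := by
    intro l
    apply hβ
    have := l.2.2
    omega
  have hW : ∀ γ : Fin N →₀ ℕ, (hkW γ : ℤ) = ∑ l : (Σ i : Fin N, Fin (γ i)), ((l.1 : ℕ) : ℤ) ^ 2 := by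
    intro γ
    rw [hk_sum_sigma γ (fun i => ((i : ℕ) : ℤ) ^ 2), hkW]
    push_cast
    rfl
  have h1 := hpair (fun j => - ((c j : ℤ) * (c j + 1))) (fun j => 2 * (c j : ℤ) + 1)
  have h2 : (hkW α' : ℤ) = ∑ l : (Σ i : Fin N, Fin (α' i)), (-((c (β l.1) : ℤ) * (c (β l.1) + 1)) +
      (2 * (c (β l.1) : ℤ) + 1) * ((l.1 : ℕ) : ℤ)) := by
    rw [hW]
    refine Finset.sum_congr rfl fun l _ => ?_
    rcases hα' l with h | h <;> rw [h] <;> push_cast <;> ring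
  have h3 : (hkW α : ℤ) = hkW α' + ∑ l : (Σ i : Fin N, Fin (α i)),
      (((l.1 : ℕ) : ℤ) - c (g l)) * (((l.1 : ℕ) : ℤ) - c (g l) - 1) := by
    rw [h2, ← h1, hW, ← Finset.sum_add_distrib]
    refine Finset.sum_congr rfl fun l _ => ?_
    ring
  have h4 : ∀ l ∈ (Finset.univ : Finset (Σ i : Fin N, Fin (α i))),
      (0 : ℤ) ≤ (((l.1 : ℕ) : ℤ) - c (g l)) * (((l.1 : ℕ) : ℤ) - c (g l) - 1) :=
    fun l _ => hk_int_nonneg _ _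
  have h5 := Finset.sum_nonneg h4
  refine ⟨by omega, fun hle => ?_⟩
  have h6 := (Finset.sum_eq_zero_iff_of_nonneg h4).1 (by omega)
  have hα : ∀ l : (Σ i : Fin N, Fin (α i)), (l.1 : ℕ) = c (g l) ∨ (l.1 : ℕ) = c (g l) + 1 := by
    intro l
    rcases mul_eq_zero.1 (h6 l (Finset.mem_univ _)) with h | h <;> omega
  have hind : ∀ γ : Fin N →₀ ℕ, ∀ i0 : Fin N, (γ i0 : ℤ) =
      ∑ l : (Σ i : Fin N, Fin (γ i)), if l.1 = i0 then (1 : ℤ) else 0 := by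
    intro γ i0
    rw [hk_sum_sigma γ (fun i => if i = i0 then (1 : ℤ) else 0)]
    simp
  have heq : α = α' := by
    ext i0
    have : (α i0 : ℤ) = α' i0 := by
      by_cases hi : ∃ j0 : Fin r, (i0 : ℕ) = c j0 ∨ (i0 : ℕ) = c j0 + 1
      · obtain ⟨j0, hj0⟩ := hi
        obtain ⟨u, v, huv⟩ : ∃ u v : ℤ, ∀ i : Fin N, ((i : ℕ) = c j0 ∨ (i : ℕ) = c j0 + 1) →
            u + v * ((i : ℕ) : ℤ) = if i = i0 then 1 else 0 := by
          rcases hj0 with h0 | h0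
          · refine ⟨(c j0 : ℤ) + 1, -1, fun i hi => ?_⟩
            split_ifs with hii
            · subst hii; omega
            · have : (i : ℕ) ≠ i0 := fun h => hii (Fin.ext h)
              omega
          · refine ⟨-(c j0 : ℤ), 1, fun i hi => ?_⟩
            split_ifs with hii
            · subst hii; omega
            · have : (i : ℕ) ≠ i0 := fun h => hii (Fin.ext h)
              omega
        have hterm : ∀ (j : Fin r) (i : Fin N), ((i : ℕ) = c j ∨ (i : ℕ) = c j + 1) →
            ((if j = j0 then u else 0) + (if j = j0 then v else 0) * ((i : ℕ) : ℤ)) =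
              if i = i0 then 1 else 0 := by
          intro j i hi
          by_cases hj : j = j0
          · subst hj
            simpa using huv i hi
          · have : i ≠ i0 := by
              rintro rfl
              exact hj (Fin.ext (hk_disj c hc hi hj0))
            simp [hj, this]
        have h7 := hpair (fun j => if j = j0 then u else 0) (fun j => if j = j0 then v else 0)
        rw [hind α, hind α']
        rw [Finset.sum_congr rfl fun l _ => (hterm (g l) l.1 (hα l)).symm,
          Finset.sum_congr rfl fun l _ => (hterm (β l.1) l.1 (hα' l)).symm]
        exact h7
      · have e1 : α i0 = 0 := by
          by_contra hne
          exact hi ⟨_, hα ⟨i0, ⟨0, Nat.pos_of_ne_zero hne⟩⟩⟩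
        have e2 : α' i0 = 0 := by
          by_contra hne
          exact hi ⟨_, hβ i0 hne⟩
        rw [e1, e2]
    exact_mod_cast this
  refine ⟨heq, fun l => ?_⟩
  refine Fin.ext (hk_disj c hc (hα l) (hβ l.1 ?_))
  rw [← heq]
  have := l.2.2
  omega

theorem hk_indep (F : Type*) [Field F] {N r : ℕ} (hr : 0 < r) (f : MvPolynomial (Fin N) F)
    (hf : ∀ α ∈ f.support, hkBlocks N α ≤ r) (h0 : hkPhi F N r f = 0) : f = 0 := by
  by_contra hne
  obtain ⟨α', hα', hmax⟩ := Finset.exists_max_image f.support hkW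
    (MvPolynomial.support_nonempty.2 hne)
  obtain ⟨c, hc, hcov⟩ := hkBlocks_cover N α' r (hf α' hα')
  have hex : ∀ i : Fin N, ∃ j : Fin r, α' i ≠ 0 → (i : ℕ) = c j ∨ (i : ℕ) = c j + 1 := by
    intro i
    by_cases h : α' i = 0
    · exact ⟨⟨0, hr⟩, fun h' => absurd h h'⟩
    · obtain ⟨j, hj, hh⟩ := hcov i h
      exact ⟨⟨j, hj⟩, fun _ => hh⟩
  choose β hβ using hex
  let τ := ∑ l : (Σ i : Fin N, Fin (α' i)), hkE (β l.1) (l.1 : ℕ)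
  have hco : ∀ α ∈ f.support, MvPolynomial.coeff τ (hkPhi F N r (MvPolynomial.monomial α 1)) =
      if α = α' then 1 else 0 := by
    intro α hα
    rw [hkPhi_monomial, MvPolynomial.coeff_sum]
    simp only [MvPolynomial.coeff_monomial]
    split_ifs with h
    · subst h
      rw [Finset.sum_eq_single (fun l => β l.1)]
      · simp [τ]
      · intro g _ hg
        rw [if_neg]
        intro hh
        exact hg (funext ((hk_key α α c hc β hβ g hh).2 le_rfl).2)
      · simp
    · refine Finset.sum_eq_zero fun g _ => ?_
      rw [if_neg]
      intro hh
      exact h ((hk_key α α' c hc β hβ g hh).2 (hmax α hα)).1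
  have h1 : MvPolynomial.coeff τ (hkPhi F N r f) = MvPolynomial.coeff α' f := by
    conv_lhs => rw [← MvPolynomial.support_sum_monomial_coeff f]
    rw [map_sum, MvPolynomial.coeff_sum]
    rw [Finset.sum_eq_single α']
    · have : MvPolynomial.monomial α' (MvPolynomial.coeff α' f) =
          MvPolynomial.coeff α' f • MvPolynomial.monomial α' (1 : F) := by
        simp [MvPolynomial.smul_monomial]
      rw [this, map_smul, MvPolynomial.coeff_smul, hco α' hα']
      simp
    · intro α hα hne
      have : MvPolynomial.monomial α (MvPolynomial.coeff α f) =
          MvPolynomial.coeff α f • MvPolynomial.monomial α (1 : F) := by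
        simp [MvPolynomial.smul_monomial]
      rw [this, map_smul, MvPolynomial.coeff_smul, hco α hα]
      simp [hne]
    · intro h; exact absurd hα' h
  rw [h0, MvPolynomial.coeff_zero] at h1
  exact (MvPolynomial.mem_support_iff.1 hα') h1.symm

theorem hkW_add {N : ℕ} (α β : Fin N →₀ ℕ) : hkW (α + β) = hkW α + hkW β := by
  simp [hkW, add_mul, Finset.sum_add_distrib]

theorem hkW_sum_single {N t : ℕ} (c : Fin t → Fin N) :
    hkW (∑ k, Finsupp.single (c k) 1) = ∑ k, (c k : ℕ) ^ 2 := by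
  simp only [hkW, Finsupp.finsetSum_apply, Finset.sum_mul]
  rw [Finset.sum_comm]
  refine Finset.sum_congr rfl fun k _ => ?_
  rw [Finset.sum_eq_single (c k)]
  · simp
  · intro b _ hb
    simp [hb.symm]
  · simp

theorem hk_rearr {t : ℕ} (b : Fin t → ℕ) (hb : StrictMono b) (σ : Equiv.Perm (Fin t)) (hσ : σ ≠ 1) :
    ∑ k, ((σ k : ℕ) + b k) ^ 2 < ∑ k : Fin t, ((k : ℕ) + b k) ^ 2 := by
  have hmono : Monovary b (fun k : Fin t => (k : ℕ)) := by
    intro i j hij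
    exact hb.monotone (le_of_lt hij)
  have h1 : ∑ k, b k * (σ k : ℕ) < ∑ k : Fin t, b k * (k : ℕ) := by
    have := (hmono.sum_mul_comp_perm_lt_sum_mul_iff (σ := σ)).2 ?_
    · exact this
    · intro hm
      apply hσ
      have hσm : StrictMono σ := by
        intro i j hij
        by_contra hcon
        have h2 : σ j < σ i := lt_of_le_of_ne (not_lt.1 hcon) (fun h => hij.ne' (σ.injective h))
        have := hm (i := j) (j := i) (by simpa using h2)
        exact absurd (hb hij) (not_lt.2 this)
      ext k
      have := hσm.range_inj (g := (id : Fin t → Fin t)) strictMono_id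
      have h3 := this.1 (by rw [σ.surjective.range_eq, Set.range_id])
      rw [h3]; rfl
  have h2 : ∑ k, (σ k : ℕ) ^ 2 = ∑ k : Fin t, (k : ℕ) ^ 2 :=
    Equiv.sum_comp σ (fun k : Fin t => (k : ℕ) ^ 2)
  have h3 : ∀ τ : Equiv.Perm (Fin t), ∑ k, ((τ k : ℕ) + b k) ^ 2 =
      ∑ k, (τ k : ℕ) ^ 2 + 2 * ∑ k, b k * (τ k : ℕ) + ∑ k, b k ^ 2 := by
    intro τ
    rw [Finset.mul_sum, ← Finset.sum_add_distrib, ← Finset.sum_add_distrib]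
    refine Finset.sum_congr rfl fun k _ => ?_
    ring
  have h4 := h3 σ
  have h5 := h3 1
  simp only [Equiv.Perm.one_apply] at h5
  omega

theorem hk_span (F : Type*) [Field F] {t n N : ℕ} (ht : 1 ≤ t) (hN : N + 1 = n + t)
    (H : Matrix (Fin t) (Fin n) (MvPolynomial (Fin N) F))
    (hlt : ∀ (a : Fin t) (b : Fin n), (a : ℕ) + (b : ℕ) < N)
    (hH : ∀ a b, H a b = MvPolynomial.X ⟨(a : ℕ) + (b : ℕ), hlt a b⟩)
    (I : Ideal (MvPolynomial (Fin N) F))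
    (hI : ∀ g : Fin t → Fin n, (H.submatrix id g).det ∈ I) (d : ℕ) :
    ∀ (w : ℕ) (α : Fin N →₀ ℕ), hkW α = w → α.degree = d →
      MvPolynomial.monomial α (1 : F) ∈
        MvPolynomial.restrictSupport F {α : Fin N →₀ ℕ | hkBlocks N α ≤ t - 1 ∧ α.degree = d} ⊔
          I.restrictScalars F := by
  intro w
  induction w using Nat.strong_induction_on with
  | _ w ih =>
  intro α hw hd
  by_cases hb : hkBlocks N α ≤ t - 1
  · apply Submodule.mem_sup_left
    rw [MvPolynomial.monomial_mem_restrictSupport]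
    exact Or.inl ⟨hb, hd⟩
  obtain ⟨c, hc1, hc2⟩ := hkBlocks_chain N α t (by omega)
  -- the chain is strictly gapped
  have hgap : ∀ k m, k + m < t → c k + 2 * m ≤ c (k + m) := by
    intro k m
    induction m with
    | zero => intro _; simp
    | succ m ihm =>
      intro h
      have h1 := ihm (by omega)
      have h2 := hc2 (k + m) (by omega)
      rw [← add_assoc]
      omega
  have hlow : ∀ k < t, 2 * k ≤ c k := by
    intro k hk
    have := hgap 0 k (by omega)
    rw [zero_add] at this
    omega
  have hup : ∀ k < t, c k - k < n := by
    intro k hk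
    have h0 := hlow k hk
    have h1 := hgap k (t - 1 - k) (by omega)
    have h2 : k + (t - 1 - k) = t - 1 := by omega
    rw [h2] at h1
    obtain ⟨h3, _⟩ := hc1 (t - 1) (by omega)
    omega
  let b : Fin t → Fin n := fun k => ⟨c k - k, hup k k.2⟩
  have hbv : ∀ k : Fin t, (k : ℕ) + (b k : ℕ) = c k := by
    intro k
    have := hlow k k.2
    simp only [b]
    omega
  have hbm : StrictMono (fun k => (b k : ℕ)) := by
    intro i j hij
    have hij' : (i : ℕ) < j := hij
    have h1 := hgap i (j - i) (by omega)
    rw [Nat.add_sub_cancel' hij'.le] at h1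
    have h2 := hbv i
    have h3 := hbv j
    simp only
    omega
  let ν : Equiv.Perm (Fin t) → (Fin N →₀ ℕ) :=
    fun σ => ∑ k, Finsupp.single ⟨(σ k : ℕ) + (b k : ℕ), hlt (σ k) (b k)⟩ 1
  have hdet : (H.submatrix id b).det = ∑ σ : Equiv.Perm (Fin t),
      Equiv.Perm.sign σ • MvPolynomial.monomial (ν σ) (1 : F) := by
    rw [Matrix.det_apply]
    refine Finset.sum_congr rfl fun σ _ => ?_
    simp only [ν, MvPolynomial.monomial_sum_one, Matrix.submatrix_apply, id, hH, MvPolynomial.X]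
  have hle : ν 1 ≤ α := by
    intro i
    simp only [ν, Finsupp.finsetSum_apply, Equiv.Perm.one_apply]
    by_cases hi : ∃ k : Fin t, (⟨(k : ℕ) + (b k : ℕ), hlt k (b k)⟩ : Fin N) = i
    · obtain ⟨k, hk⟩ := hi
      rw [Finset.sum_eq_single k]
      · rw [hk, Finsupp.single_eq_same]
        obtain ⟨h1, h2⟩ := hc1 k k.2
        have : i = ⟨c k, h1⟩ := by
          rw [← hk]; exact Fin.ext (hbv k)
        rw [this]
        omega
      · intro k' _ hkk
        rw [Finsupp.single_eq_of_ne]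
        intro h
        rw [← hk] at h
        have h' : (k : ℕ) + (b k : ℕ) = (k' : ℕ) + (b k' : ℕ) := congrArg Fin.val h
        rcases lt_or_gt_of_ne hkk with h3 | h3
        · have := hbm h3
          have h3' : (k' : ℕ) < k := h3
          simp only at this
          omega
        · have := hbm h3
          have h3' : (k : ℕ) < k' := h3
          simp only at this
          omega
      · simp
    · rw [Finset.sum_eq_zero]
      · exact Nat.zero_le _
      · intro k _
        rw [Finsupp.single_eq_of_ne]
        intro h
        exact hi ⟨k, h.symm⟩
  obtain ⟨ρ, hρ⟩ : ∃ ρ, α = ρ + ν 1 := ⟨α - ν 1, (tsub_add_cancel_of_le hle).symm⟩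
  have hdeg : ∀ σ, (ν σ).degree = t := by
    intro σ
    simp [ν]
  have hmem : MvPolynomial.monomial ρ (1 : F) * (H.submatrix id b).det ∈ I :=
    I.mul_mem_left _ (hI b)
  have hexp : MvPolynomial.monomial α (1 : F) = MvPolynomial.monomial ρ (1 : F) *
      (H.submatrix id b).det - ∑ σ ∈ Finset.univ.erase (1 : Equiv.Perm (Fin t)),
        Equiv.Perm.sign σ • MvPolynomial.monomial (ρ + ν σ) (1 : F) := by
    rw [hdet, Finset.mul_sum]
    have : ∀ σ : Equiv.Perm (Fin t), MvPolynomial.monomial ρ (1 : F) *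
        (Equiv.Perm.sign σ • MvPolynomial.monomial (ν σ) (1 : F)) =
        Equiv.Perm.sign σ • MvPolynomial.monomial (ρ + ν σ) (1 : F) := by
      intro σ
      rw [mul_smul_comm, MvPolynomial.monomial_mul, one_mul]
    simp only [this]
    rw [← Finset.add_sum_erase _ _ (Finset.mem_univ (1 : Equiv.Perm (Fin t)))]
    rw [add_sub_cancel_right, Equiv.Perm.sign_one, one_smul, ← hρ]
  rw [hexp]
  refine Submodule.sub_mem _ (Submodule.mem_sup_right hmem) (Submodule.sum_mem _ fun σ hσ => ?_)
  have hσ1 : σ ≠ 1 := Finset.ne_of_mem_erase hσ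
  have hin := ih (hkW (ρ + ν σ)) (by
    rw [← hw, hρ, hkW_add, hkW_add]
    simp only [ν, hkW_sum_single]
    have := hk_rearr (fun k => (b k : ℕ)) hbm σ hσ1
    simp only [Equiv.Perm.one_apply]
    omega) (ρ + ν σ) rfl (by
    rw [← hd, hρ, map_add, map_add, hdeg, hdeg])
  rcases Int.units_eq_one_or (Equiv.Perm.sign σ) with h | h <;> rw [h]
  · simpa using hin
  · rw [Units.neg_smul, one_smul]
    exact Submodule.neg_mem _ hin

theorem hk_card (N r k : ℕ) :
    (Nat.card {α : Fin N →₀ ℕ | hkBlocks N α ≤ r ∧ α.degree = k} : ℚ) =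
      PowerSeries.coeff k (hkG N r) := by
  rw [hkG, PowerSeries.coeff_mk, Finset.sum_boole]
  congr 1
  rw [← Nat.card_eq_finsetCard]
  refine Nat.card_congr (Equiv.subtypeEquiv Finsupp.equivFunOnFinite fun α => ?_)
  simp [Finset.Nat.mem_antidiagonalTuple, Finsupp.degree_eq_sum, and_comm]
  exact fun _ => Iff.rfl

theorem hk_finrank (F : Type*) [Field F] {t n N : ℕ} (ht : 2 ≤ t) (hN : N + 1 = n + t)
    (H : Matrix (Fin t) (Fin n) (MvPolynomial (Fin N) F))
    (hlt : ∀ (a : Fin t) (b : Fin n), (a : ℕ) + (b : ℕ) < N)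
    (hH : ∀ a b, H a b = MvPolynomial.X ⟨(a : ℕ) + (b : ℕ), hlt a b⟩)
    (I : Ideal (MvPolynomial (Fin N) F))
    (hI : I = Ideal.span (Set.range fun g : Fin t → Fin n => (H.submatrix id g).det)) (d : ℕ) :
    Module.finrank F (Submodule.map (Ideal.Quotient.mkₐ F I).toLinearMap
        (MvPolynomial.homogeneousSubmodule (Fin N) F d)) =
      Nat.card {α : Fin N →₀ ℕ | hkBlocks N α ≤ t - 1 ∧ α.degree = d} := by
  set S := {α : Fin N →₀ ℕ | hkBlocks N α ≤ t - 1 ∧ α.degree = d} with hS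
  set q := (Ideal.Quotient.mkₐ F I).toLinearMap with hq
  have hker : LinearMap.ker q = I.restrictScalars F := by
    ext x
    simp [hq, Ideal.Quotient.eq_zero_iff_mem]
  have hmap : Submodule.map q (MvPolynomial.homogeneousSubmodule (Fin N) F d) =
      Submodule.map q (MvPolynomial.restrictSupport F S) := by
    apply le_antisymm
    · rw [Submodule.map_le_iff_le_comap, Submodule.comap_map_eq, hker]
      intro f hf
      rw [← MvPolynomial.support_sum_monomial_coeff f]
      refine Submodule.sum_mem _ fun α hα => ?_
      have hdeg : α.degree = d := by
        rw [MvPolynomial.mem_homogeneousSubmodule] at hf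
        by_contra hne
        exact (MvPolynomial.mem_support_iff.1 hα) (MvPolynomial.IsHomogeneous.coeff_eq_zero hf hne)
      have : MvPolynomial.monomial α (MvPolynomial.coeff α f) =
          MvPolynomial.coeff α f • MvPolynomial.monomial α (1 : F) := by
        simp [MvPolynomial.smul_monomial]
      rw [this]
      refine Submodule.smul_mem _ _ (hk_span F (by omega) hN H hlt hH I ?_ d _ α rfl hdeg)
      intro g
      rw [hI]
      exact Ideal.subset_span ⟨g, rfl⟩
    · refine Submodule.map_mono ?_
      rw [MvPolynomial.restrictSupport_eq_span, Submodule.span_le]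
      rintro _ ⟨α, hα, rfl⟩
      exact MvPolynomial.isHomogeneous_monomial 1 hα.2
  have hinj : Function.Injective (q.domRestrict (MvPolynomial.restrictSupport F S)) := by
    rw [injective_iff_map_eq_zero]
    rintro ⟨f, hf⟩ h
    have hfI : f ∈ I := by
      have : f ∈ LinearMap.ker q := h
      rw [hker] at this
      exact this
    have hphi : hkPhi F N (t - 1) f = 0 := by
      have hle : I ≤ RingHom.ker (hkPhi F N (t - 1)) := by
        rw [hI, Ideal.span_le]
        rintro _ ⟨g, rfl⟩
        exact hkPhi_det F (by omega) H hlt hH g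
      exact hle hfI
    have := hk_indep F (by omega) f (fun α hα => (hf hα).1) hphi
    exact Subtype.ext this
  rw [hmap, ← LinearMap.range_domRestrict, LinearMap.finrank_range_of_inj hinj,
    Module.finrank_eq_nat_card_basis (MvPolynomial.basisRestrictSupport F S)]

/-- For the `t×n` Hankel determinantal ring `R = F[x_1,...,x_{n+t-1}]/I_t(H)` (with `t ≤ n`),
the multiplicity is `e(R) = C(n, t-1)` and the `a`-invariant is `a(R) = 1-t`.  This is encoded
via the Hilbert series: if `HS(z) = Σ_k dim_F R_k z^k`, then `HS(z)·(1-z)^{2t-2}` is a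
polynomial `h` with `h(1) = e(R) = C(n, t-1)` and `deg h = t-1`, the latter being equivalent to
`a(R) = deg h - (2t-2) = 1-t`. -/
theorem hankel_multiplicity_a_invariant (F : Type*) [Field F] (t n : ℕ) (ht : 2 ≤ t)
    (htn : t ≤ n)
    (H : Matrix (Fin t) (Fin n) (MvPolynomial (Fin (n + t - 1)) F))
    (hH : ∀ a b, H a b = X ⟨(a : ℕ) + (b : ℕ), by have := a.2; have := b.2; omega⟩)
    (I : Ideal (MvPolynomial (Fin (n + t - 1)) F))
    (hI : I = Ideal.span (Set.range fun g : Fin t → Fin n => (H.submatrix id g).det))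
    (HS : PowerSeries ℚ)
    (hHS : HS = PowerSeries.mk fun k => (Module.finrank F
      (Submodule.map (Ideal.Quotient.mkₐ F I).toLinearMap
        (homogeneousSubmodule (Fin (n + t - 1)) F k)) : ℚ)) :
    ∃ h : Polynomial ℚ,
      (h : PowerSeries ℚ) = HS * (1 - PowerSeries.X) ^ (2 * t - 2) ∧
      h.eval 1 = Nat.choose n (t - 1) ∧
      h.natDegree = t - 1 := by
  obtain ⟨r, rfl⟩ : ∃ r, t = r + 1 := ⟨t - 1, by omega⟩
  have hG : HS = hkG (n + (r + 1) - 1) r := by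
    rw [hHS]
    ext k
    rw [PowerSeries.coeff_mk, ← hk_card]
    rw [hk_finrank F ht (by omega) H (fun a b => by have := a.2; have := b.2; omega) hH I hI k]
    rfl
  have h1 := (hkG_formula (n + (r + 1) - 1) r).1 (by omega)
  refine ⟨hkh r (n + (r + 1) - 1 - 2 * r), ?_, ?_, ?_⟩
  · rw [← h1, hG]
    rfl
  · rw [hkh_eval]
    congr 2
    omega
  · rw [hkh_natDegree _ _ (by omega)]
    rfl
end

section
/- Let F be a field, t ≥ 2, n ≥ t, H the t×n Hankel matrix in x_1,...,x_{n+t-1}, R = F[x_1,...,x_{n+t-1}]/I_t(H), and let p be the ideal of R generated by the (t-1)×(t-1) minors of the first t-1 rows of H. Then R/p is isomorphic to a polynomial ring in one variable over the (t-1)×n Hankel determinantal ring; consequently p is a prime ideal of R of height 1. -/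
set_option synthInstance.maxHeartbeats 1000000
set_option maxHeartbeats 1000000

open MvPolynomial Matrix


namespace HankelAux

/-- greedy decomposition: a finite set of naturals is covered by `r` adjacent pairs, or
contains a chain of `r+1` elements with gaps at least two. -/
theorem greedy (B r : ℕ) : ∀ (b : ℕ) (S : Finset ℕ), b ≤ B + 2 → (∀ s ∈ S, b ≤ s ∧ s ≤ B) →
    (∃ k : ℕ → ℕ, b ≤ k 0 ∧ (∀ i, k i + 2 ≤ k (i + 1)) ∧ (∀ i, k i ≤ B + 2 + 2 * i) ∧
      ∀ s ∈ S, ∃ j < r, s = k j ∨ s = k j + 1) ∨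
    (∃ c : ℕ → ℕ, b ≤ c 0 ∧ (∀ i, c i + 2 ≤ c (i + 1)) ∧ ∀ i ≤ r, c i ∈ S) := by
  induction r with
  | zero =>
    intro b S hb hS
    rcases S.eq_empty_or_nonempty with rfl | ⟨a, ha⟩
    · left
      exact ⟨fun i => b + 2 * i, by simp, fun i => by dsimp; omega, fun i => by dsimp; omega,
        by simp⟩
    · right
      refine ⟨fun i => a + 2 * i, by simpa using (hS a ha).1, fun i => by dsimp; omega, ?_⟩
      intro i hi
      obtain rfl : i = 0 := by omega
      simpa using ha
  | succ r ih =>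
    intro b S hb hS
    rcases S.eq_empty_or_nonempty with rfl | hne
    · left
      exact ⟨fun i => b + 2 * i, by simp, fun i => by dsimp; omega, fun i => by dsimp; omega,
        by simp⟩
    · set a := S.min' hne with ha
      have haS : a ∈ S := S.min'_mem hne
      have hab := hS a haS
      have hmin : ∀ s ∈ S, a ≤ s := fun s hs => S.min'_le s hs
      rcases ih (a + 2) (S.filter (fun s => a + 2 ≤ s)) (by omega) (by
        intro s hs
        rw [Finset.mem_filter] at hs
        exact ⟨hs.2, (hS s hs.1).2⟩) with
        ⟨k, hk0, hk, hkB, hkS⟩ | ⟨c, hc0, hc, hcS⟩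
      · left
        refine ⟨fun i => Nat.casesOn i a k, hab.1, ?_, ?_, ?_⟩
        · rintro (_ | i)
          · exact hk0
          · exact hk i
        · rintro (_ | i)
          · show a ≤ _
            omega
          · show k i ≤ _
            have := hkB i
            omega
        · intro s hs
          by_cases h : a + 2 ≤ s
          · obtain ⟨j, hj, hj'⟩ := hkS s (by simp [hs, h])
            exact ⟨j + 1, by omega, hj'⟩
          · refine ⟨0, by omega, ?_⟩
            have := hmin s hs
            show s = a ∨ s = a + 1
            omega
      · right
        refine ⟨fun i => Nat.casesOn i a c, hab.1, ?_, ?_⟩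
        · rintro (_ | i)
          · exact hc0
          · exact hc i
        · rintro (_ | i) hi
          · exact haS
          · exact (Finset.mem_filter.1 (hcS i (by omega))).1

/-- The `k`-th variable, extended by zero. -/
noncomputable def xv (F : Type*) [Field F] (N k : ℕ) : MvPolynomial (Fin N) F :=
  if h : k < N then X ⟨k, h⟩ else 0

/-- minors of a Hankel sequence -/
noncomputable def hm {A : Type*} [CommRing A] (x : ℕ → A) (t : ℕ) (g : Fin t → ℕ) : A :=
  (Matrix.of fun i j : Fin t => x ((i : ℕ) + g j)).det

theorem map_hm {A B : Type*} [CommRing A] [CommRing B] (f : A →+* B) (x : ℕ → A) (t : ℕ)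
    (g : Fin t → ℕ) : f (hm x t g) = hm (fun k => f (x k)) t g := by
  rw [hm, RingHom.map_det]; rfl

/-- The Hankel ideal. -/
noncomputable def hI (F : Type*) [Field F] (t n N : ℕ) : Ideal (MvPolynomial (Fin N) F) :=
  Ideal.span (Set.range fun g : Fin t → Fin n => hm (xv F N) t (fun j => (g j : ℕ)))

/-- Sums of `r` geometric sequences have vanishing `r+1` minors. -/
theorem hm_geom {A : Type*} [CommRing A] (r : ℕ) (η ζ : ℕ → A) (g : Fin (r + 1) → ℕ) :
    hm (fun k => ∑ j ∈ Finset.range r, η j * ζ j ^ k) (r + 1) g = 0 := by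
  have : (Matrix.of fun i j : Fin (r + 1) => ∑ l ∈ Finset.range r, η l * ζ l ^ ((i : ℕ) + g j)) =
      (Matrix.of fun i l : Fin (r + 1) => ζ l ^ (i : ℕ)) *
      (Matrix.of fun l j : Fin (r + 1) => if (l : ℕ) < r then η l * ζ l ^ g j else 0) := by
    ext i j
    simp only [Matrix.of_apply, Matrix.mul_apply]
    rw [Fin.sum_univ_castSucc]
    simp only [Fin.val_castSucc, Fin.is_lt, if_true, Fin.val_last, lt_irrefl, if_false, mul_zero,
      add_zero]
    rw [Finset.sum_range]
    refine Finset.sum_congr rfl fun l _ => ?_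
    rw [pow_add]; ring
  have h0 : (Matrix.of fun l j : Fin (r + 1) =>
      if (l : ℕ) < r then η l * ζ l ^ g j else 0).det = 0 := by
    refine Matrix.det_eq_zero_of_row_eq_zero (Fin.last r) ?_
    intro j
    simp
  rw [hm, this, Matrix.det_mul, h0, mul_zero]

/-- Standard monomials. -/
def Std (r N : ℕ) (m : Fin N →₀ ℕ) : Prop :=
  ¬ ∃ c : ℕ → ℕ, (∀ i, c i + 2 ≤ c (i + 1)) ∧ ∀ i ≤ r, ∃ h : c i < N, m ⟨c i, h⟩ ≠ 0

/-- weight -/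
noncomputable def wt (N : ℕ) : (Fin N →₀ ℕ) →+ ℕ :=
  Finsupp.liftAddHom fun i => AddMonoidHom.mulRight ((i : ℕ) ^ 2)

theorem perm_lt {s : ℕ} (g : Fin s → ℕ) (hg : StrictMono g) (σ : Equiv.Perm (Fin s)) (hσ : σ ≠ 1) :
    ∑ i, ((σ i : ℕ) + g i) ^ 2 < ∑ i : Fin s, ((i : ℕ) + g i) ^ 2 := by
  have h1 : ∑ i, ((σ i : ℕ)) ^ 2 = ∑ i : Fin s, (i : ℕ) ^ 2 :=
    Equiv.sum_comp σ (fun i : Fin s => (i : ℕ) ^ 2)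
  have hmono : Monovary (fun i : Fin s => (i : ℕ)) g := by
    intro i j hij
    exact (Fin.le_def.1 (hg.lt_iff_lt.1 hij).le)
  have h2 : ∑ i, (σ i : ℕ) * g i < ∑ i : Fin s, (i : ℕ) * g i := by
    refine (Monovary.sum_comp_perm_mul_lt_sum_mul_iff hmono).2 ?_
    intro hm
    apply hσ
    have : StrictMono σ := by
      intro i j hij
      refine lt_of_le_of_ne ?_ (fun h => hij.ne (σ.injective h))
      exact hm (hg hij)
    ext i
    have : (σ : Fin s → Fin s) = id := by
      exact le_antisymm this.le_id this.id_le
    simp [this]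
  have e1 : ∀ τ : Fin s → ℕ, ∑ i, (τ i + g i) ^ 2 =
      ∑ i, τ i ^ 2 + 2 * ∑ i, τ i * g i + ∑ i, g i ^ 2 := by
    intro τ
    rw [Finset.mul_sum, ← Finset.sum_add_distrib, ← Finset.sum_add_distrib]
    exact Finset.sum_congr rfl fun i _ => by ring
  rw [e1 (fun i => (σ i : ℕ)), e1 (fun i => (i : ℕ))]
  omega


theorem wt_single (N : ℕ) (i : Fin N) : wt N (Finsupp.single i 1) = (i : ℕ) ^ 2 := by
  simp [wt]

/-- Every monomial is congruent to a combination of standard monomials. -/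
theorem reduce (F : Type*) [Field F] (r n : ℕ) (w : ℕ) : ∀ m : Fin (n + r) →₀ ℕ, wt _ m = w →
    (monomial m (1 : F)) ∈ (hI F (r + 1) n (n + r)).restrictScalars F ⊔
      Submodule.span F ((fun m => monomial m (1 : F)) '' {m | Std r (n + r) m}) := by
  induction w using Nat.strong_induction_on with
  | _ w ih =>
  intro m hw
  by_cases hs : Std r (n + r) m
  · exact Submodule.mem_sup_right (Submodule.subset_span ⟨m, hs, rfl⟩)
  unfold Std at hs
  push Not at hs
  obtain ⟨c, hc, hcm⟩ := hs
  choose hcN hcm using hcm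
  have hmono : StrictMono (fun i => c i - i) ∧ ∀ i, 2 * i ≤ c i := by
    have h2 : ∀ i, 2 * i ≤ c i := by
      intro i
      induction i with
      | zero => simp
      | succ i ih => have := hc i; omega
    refine ⟨strictMono_nat_of_lt_succ fun i => ?_, h2⟩
    have := hc i; have := h2 i
    omega
  obtain ⟨hmono, h2⟩ := hmono
  have hcinj : StrictMono c := strictMono_nat_of_lt_succ fun i => by have := hc i; omega
  have hgn : ∀ i ≤ r, c i - i < n := by
    intro i hi
    have h3 : c i - i ≤ c r - r := hmono.monotone hi
    have := hcN r le_rfl; have := h2 r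
    omega
  let g : Fin (r + 1) → Fin n := fun i => ⟨c i - i, hgn i (by omega)⟩
  have hlt : ∀ i j : Fin (r + 1), (i : ℕ) + (g j : ℕ) < n + r := fun i j => by omega
  let d : Equiv.Perm (Fin (r + 1)) → (Fin (n + r) →₀ ℕ) := fun σ =>
    ∑ i, Finsupp.single ⟨(σ i : ℕ) + (g i : ℕ), hlt _ _⟩ 1
  have hd1 : d 1 ≤ m := by
    have : ∀ i : Fin (r + 1), (⟨(i : ℕ) + (g i : ℕ), hlt i i⟩ : Fin (n + r)) =
        ⟨c i, hcN i (by omega)⟩ := by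
      intro i
      have := h2 i
      simp only [g, Fin.mk.injEq]
      omega
    simp only [d, Equiv.Perm.coe_one, id, this]
    intro k
    rw [Finsupp.finsetSum_apply]
    by_cases hk : ∃ i : Fin (r + 1), (⟨c i, hcN i (by omega)⟩ : Fin (n + r)) = k
    · obtain ⟨i, rfl⟩ := hk
      rw [Finset.sum_eq_single i]
      · simp only [Finsupp.single_eq_same]
        exact Nat.one_le_iff_ne_zero.2 (hcm i (by omega))
      · intro j _ hji
        apply Finsupp.single_eq_of_ne
        intro h
        apply hji
        have h5 := congrArg Fin.val h
        exact (Fin.ext (hcinj.injective h5)).symm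
      · simp
    · rw [Finset.sum_eq_zero]
      · exact Nat.zero_le _
      · intro i _
        apply Finsupp.single_eq_of_ne
        intro h
        exact hk ⟨i, h.symm⟩
  obtain ⟨m', hm'⟩ : ∃ m', m = m' + d 1 := ⟨m - d 1, (tsub_add_cancel_of_le hd1).symm⟩
  rw [hm'] at hw ⊢
  have hdet : hm (xv F (n + r)) (r + 1) (fun j => (g j : ℕ)) =
      ∑ σ : Equiv.Perm (Fin (r + 1)), Equiv.Perm.sign σ • monomial (d σ) (1 : F) := by
    rw [hm, Matrix.det_apply]
    refine Finset.sum_congr rfl fun σ _ => ?_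
    congr 1
    simp only [d]
    rw [monomial_sum_one]
    refine Finset.prod_congr rfl fun i _ => ?_
    simp only [Matrix.of_apply, xv]
    rw [dif_pos (hlt _ _)]
    rfl
  have hwd : ∀ σ, wt _ (d σ) = ∑ i, ((σ i : ℕ) + (g i : ℕ)) ^ 2 := by
    intro σ
    simp only [d, map_sum, wt_single]
  have key : monomial (m' + d 1) (1 : F) =
      monomial m' 1 * hm (xv F (n + r)) (r + 1) (fun j => (g j : ℕ)) -
      ∑ σ ∈ Finset.univ.erase (1 : Equiv.Perm (Fin (r + 1))),
        Equiv.Perm.sign σ • monomial (m' + d σ) (1 : F) := by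
    rw [hdet, ← Finset.add_sum_erase _ _ (Finset.mem_univ (1 : Equiv.Perm (Fin (r + 1)))),
      mul_add, Finset.mul_sum]
    simp only [mul_smul_comm, monomial_mul, mul_one, Equiv.Perm.sign_one, one_smul]
    ring
  rw [key]
  refine Submodule.sub_mem _ (Submodule.mem_sup_left ?_) (Submodule.sum_mem _ fun σ hσ => ?_)
  · exact Ideal.mul_mem_left _ _ (Ideal.subset_span ⟨g, rfl⟩)
  · have hmem := ih (wt _ (m' + d σ)) (by
      rw [← hw, map_add, map_add, hwd, hwd]
      have := perm_lt (fun i => (g i : ℕ)) (fun i j hij => hmono hij) σ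
        (Finset.ne_of_mem_erase hσ)
      simpa using this) (m' + d σ) rfl
    rcases Int.units_eq_one_or (Equiv.Perm.sign σ) with h | h <;> rw [h]
    · simpa using hmem
    · simpa using hmem


/-- Parametrization of the Hankel variety by sums of geometric sequences. -/
noncomputable def phi (F : Type*) [Field F] (r N : ℕ) :
    MvPolynomial (Fin N) F →ₐ[F] MvPolynomial (ℕ ⊕ ℕ) F :=
  aeval (fun i : Fin N => ∑ j ∈ Finset.range r, X (Sum.inl j) * X (Sum.inr j) ^ (i : ℕ))

theorem expo (C k i : ℕ) (hk : 2 * k + 1 ≤ C) (hi : i ≤ C) : ∃ e : ℕ,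
    k * (k + 1) + i * (C - (2 * k + 1)) = (C * i - i ^ 2) + e ∧ (e = 0 ↔ i = k ∨ i = k + 1) := by
  obtain ⟨Z, rfl⟩ := Nat.exists_eq_add_of_le hk
  have h1 : (2 * k + 1 + Z) * i - i ^ 2 + i ^ 2 = (2 * k + 1 + Z) * i := by
    apply Nat.sub_add_cancel
    rw [pow_two]
    exact Nat.mul_le_mul_right _ hi
  set w := (2 * k + 1 + Z) * i - i ^ 2
  rw [Nat.add_sub_cancel_left]
  rcases le_or_gt i k with h | h
  · obtain ⟨d, rfl⟩ := Nat.exists_eq_add_of_le h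
    refine ⟨d * (d + 1), ?_, ?_⟩
    · nlinarith
    · simp; omega
  · obtain ⟨d, rfl⟩ := Nat.exists_eq_add_of_lt h
    refine ⟨d * (d + 1), ?_, ?_⟩
    · nlinarith
    · simp; omega

theorem indep (F : Type*) [Field F] (r N : ℕ) (f : MvPolynomial (Fin N) F)
    (hf : ∀ m ∈ f.support, Std r N m) (hphi : phi F r N f = 0) : f = 0 := by
  classical
  by_contra hne
  set c := 2 * (N + 2 + 2 * r) + 1 with hc
  let ω : Fin N → ℕ := fun i => c * i - (i : ℕ) ^ 2
  let w : (Fin N →₀ ℕ) → ℕ := fun m => ∑ i, ω i * m i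
  obtain ⟨m0, hm0, hmin⟩ := Finset.exists_min_image f.support w
    (by
      rw [Finset.nonempty_iff_ne_empty, ne_eq, MvPolynomial.support_eq_empty]; exact hne)
  -- the covering pairs
  obtain ⟨k, hk, hkB, hkS⟩ : ∃ k : ℕ → ℕ, (∀ i, k i + 2 ≤ k (i + 1)) ∧
      (∀ i, k i ≤ N + 2 + 2 * i) ∧
      ∀ s ∈ m0.support.image (fun i : Fin N => (i : ℕ)), ∃ j < r, s = k j ∨ s = k j + 1 := by
    rcases greedy N r 0 (m0.support.image (fun i : Fin N => (i : ℕ))) (by omega) (by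
      intro s hs
      rw [Finset.mem_image] at hs
      obtain ⟨i, _, rfl⟩ := hs
      omega) with ⟨k, _, h1, h2, h3⟩ | ⟨d, _, h1, h2⟩
    · exact ⟨k, h1, h2, h3⟩
    · exfalso
      apply hf m0 hm0
      refine ⟨d, h1, fun i hi => ?_⟩
      have := h2 i hi
      rw [Finset.mem_image] at this
      obtain ⟨a, ha, ha'⟩ := this
      refine ⟨ha' ▸ a.2, ?_⟩
      rw [Finsupp.mem_support_iff] at ha
      convert ha
      exact ha'.symm
  have hkm : ∀ i j, i < j → k i + 2 ≤ k j := by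
    intro i j hij
    have hm : StrictMono k := strictMono_nat_of_lt_succ fun i => by have := hk i; omega
    exact (hk i).trans (hm.monotone hij)
  let E := FractionRing (MvPolynomial ℕ F)
  let xE : ℕ → E := fun i => algebraMap (MvPolynomial ℕ F) E (X i)
  have hxE : ∀ i, xE i ≠ 0 := by
    intro i
    simp only [xE, ne_eq, FaithfulSMul.algebraMap_eq_zero_iff]
    exact X_ne_zero i
  let β : ℕ → E := fun j => xE (k j + 1) / xE (k j)
  let α : ℕ → E := fun j => xE (k j) / β j ^ k j
  have hβ : ∀ j, β j ≠ 0 := fun j => div_ne_zero (hxE _) (hxE _)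
  have hα1 : ∀ j, α j * β j ^ k j = xE (k j) := fun j => by
    simp only [α]
    rw [div_mul_cancel₀]
    exact pow_ne_zero _ (hβ j)
  have hα2 : ∀ j, α j * β j ^ (k j + 1) = xE (k j + 1) := fun j => by
    rw [pow_succ, ← mul_assoc, hα1, mul_comm]
    exact div_mul_cancel₀ _ (hxE _)
  have hexp : ∀ (i : Fin N) (j : ℕ), ∃ e : ℕ, j < r →
      k j * (k j + 1) + i * (c - (2 * k j + 1)) = ω i + e ∧
        (e = 0 ↔ (i : ℕ) = k j ∨ (i : ℕ) = k j + 1) := by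
    intro i j
    by_cases hj : j < r
    · obtain ⟨e, he⟩ := expo c (k j) i (by have := hkB j; omega) (by omega)
      exact ⟨e, fun _ => he⟩
    · exact ⟨0, fun h => absurd h hj⟩
  choose e he using hexp
  let θ : Fin N → Polynomial E := fun i =>
    ∑ j ∈ Finset.range r, Polynomial.C (α j * β j ^ (i : ℕ)) * Polynomial.X ^ e i j
  let ψ : MvPolynomial (ℕ ⊕ ℕ) F →ₐ[F] Polynomial E := aeval (Sum.elim
    (fun j => Polynomial.C (α j) * Polynomial.X ^ (k j * (k j + 1)))
    (fun j => Polynomial.C (β j) * Polynomial.X ^ (c - (2 * k j + 1))))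
  have hψ : ∀ i, ψ (phi F r N (X i)) = Polynomial.X ^ ω i * θ i := by
    intro i
    simp only [phi, aeval_X, map_sum, map_mul, map_pow, ψ, Sum.elim_inl, Sum.elim_inr, θ]
    rw [Finset.mul_sum]
    refine Finset.sum_congr rfl fun j hj => ?_
    have h1 := (he i j (Finset.mem_range.1 hj)).1
    rw [mul_pow, ← pow_mul, mul_mul_mul_comm, ← pow_add, mul_comm (c - _) (i : ℕ), h1, pow_add]
    ring
  let good : Fin N → Prop := fun i => ∃ j < r, (i : ℕ) = k j ∨ (i : ℕ) = k j + 1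
  have hθ : ∀ i, (θ i).coeff 0 = if good i then xE i else 0 := by
    intro i
    simp only [θ, Polynomial.finsetSum_coeff, Polynomial.coeff_C_mul, Polynomial.coeff_X_pow]
    split_ifs with hg
    · obtain ⟨j, hj, hij⟩ := hg
      rw [Finset.sum_eq_single j]
      · rw [if_pos ((he i j hj).2.2 hij).symm, mul_one]
        rcases hij with h | h
        · rw [h, hα1]
        · rw [h, hα2]
      · intro l hl hlj
        rw [if_neg, mul_zero]
        intro h0
        have h1 := (he i l (Finset.mem_range.1 hl)).2.1 h0.symm
        rcases lt_or_gt_of_ne hlj with h | h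
        · have := hkm _ _ h; omega
        · have := hkm _ _ h; omega
      · intro h
        exact absurd (Finset.mem_range.2 hj) h
    · refine Finset.sum_eq_zero fun j hj => ?_
      rw [if_neg, mul_zero]
      intro h0
      exact hg ⟨j, Finset.mem_range.1 hj, (he i j (Finset.mem_range.1 hj)).2.1 h0.symm⟩
  let L : MvPolynomial (Fin N) F →ₐ[F] E :=
    (IsScalarTower.toAlgHom F (MvPolynomial ℕ F) E).comp (rename (fun i : Fin N => (i : ℕ)))
  have hL : Function.Injective L :=
    (IsFractionRing.injective (MvPolynomial ℕ F) E).comp (rename_injective _ Fin.val_injective)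
  have hLX : ∀ i, L (X i) = xE i := by
    intro i
    simp [L, xE]
  let goodm : (Fin N →₀ ℕ) → Prop := fun m => w m = w m0 ∧ ∀ i, m i ≠ 0 → good i
  let h : MvPolynomial (Fin N) F :=
    ∑ m ∈ f.support, if goodm m then monomial m (coeff m f) else 0
  have hmon : ∀ (m : Fin N →₀ ℕ) (a : F), monomial m a = C a * ∏ i, X i ^ m i := by
    intro m a
    rw [monomial_eq, Finsupp.prod_fintype]
    simp
  have hterm : ∀ m ∈ f.support, (ψ (phi F r N (monomial m (coeff m f)))).coeff (w m0) =
      L (if goodm m then monomial m (coeff m f) else 0) := by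
    intro m hm
    have h1 : ψ (phi F r N (monomial m (coeff m f))) =
        Polynomial.X ^ w m * (Polynomial.C (algebraMap F E (coeff m f)) * ∏ i, θ i ^ m i) := by
      rw [hmon, map_mul, map_mul, map_prod, map_prod]
      simp only [map_pow, hψ, mul_pow, Finset.prod_mul_distrib, ← pow_mul, Finset.prod_pow_eq_pow_sum]
      rw [← algebraMap_eq, AlgHom.commutes, AlgHom.commutes]
      rw [Polynomial.algebraMap_apply]
      simp only [w]
      ring
    rw [h1, Polynomial.coeff_X_pow_mul']
    by_cases hw : w m = w m0
    · rw [if_pos hw.le, show w m0 - w m = 0 by omega, Polynomial.coeff_C_mul, Polynomial.coeff_zero_prod]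
      simp only [Polynomial.coeff_zero_eq_eval_zero, Polynomial.eval_pow]
      simp only [← Polynomial.coeff_zero_eq_eval_zero, hθ]
      by_cases hg : ∀ i, m i ≠ 0 → good i
      · rw [if_pos ⟨hw, hg⟩, hmon, map_mul, map_prod, ← algebraMap_eq, AlgHom.commutes]
        congr 1
        refine Finset.prod_congr rfl fun i _ => ?_
        rw [map_pow, hLX]
        by_cases hi : m i = 0
        · simp [hi]
        · rw [if_pos (hg i hi)]
      · rw [if_neg (fun h => hg h.2), map_zero]
        push Not at hg
        obtain ⟨i, hi, hgi⟩ := hg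
        rw [Finset.prod_eq_zero (Finset.mem_univ i), mul_zero]
        rw [if_neg hgi, zero_pow hi]
    · rw [if_neg, if_neg (fun h => hw h.1), map_zero]
      have := hmin m hm
      omega
  have hh : L h = 0 := by
    have h2 : (ψ (phi F r N f)).coeff (w m0) = 0 := by rw [hphi]; simp
    rw [f.as_sum, map_sum, map_sum, Polynomial.finsetSum_coeff] at h2
    rw [← h2, map_sum]
    exact Finset.sum_congr rfl fun m hm => (hterm m hm).symm
  have hh0 : h = 0 := hL (by rw [hh, map_zero])
  have hgm : goodm m0 := by
    refine ⟨rfl, fun i hi => hkS i ?_⟩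
    exact Finset.mem_image_of_mem _ (Finsupp.mem_support_iff.2 hi)
  have hcoef : coeff m0 h = coeff m0 f := by
    simp only [h, coeff_sum]
    rw [Finset.sum_eq_single m0]
    · rw [if_pos hgm, coeff_monomial, if_pos rfl]
    · intro m _ hm
      split_ifs
      · rw [coeff_monomial, if_neg hm]
      · simp
    · intro hn
      exact absurd hm0 hn
  rw [hh0, coeff_zero] at hcoef
  exact (mem_support_iff.1 hm0) hcoef.symm

theorem hI_eq_ker (F : Type*) [Field F] (r n : ℕ) :
    hI F (r + 1) n (n + r) = RingHom.ker (phi F r (n + r)) := by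
  have hle : hI F (r + 1) n (n + r) ≤ RingHom.ker (phi F r (n + r)) := by
    rw [hI, Ideal.span_le]
    rintro _ ⟨g, rfl⟩
    rw [SetLike.mem_coe, RingHom.mem_ker]
    have h1 := map_hm (phi F r (n + r)).toRingHom (xv F (n + r)) (r + 1) (fun j => (g j : ℕ))
    refine h1.trans ?_
    rw [← hm_geom (A := MvPolynomial (ℕ ⊕ ℕ) F) r (fun j => X (Sum.inl j)) (fun j => X (Sum.inr j))
      (fun j => (g j : ℕ))]
    unfold hm
    congr 1
    ext1 i j
    have hlt : (i : ℕ) + (g j : ℕ) < n + r := by omega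
    simp [Matrix.of_apply, xv, hlt, phi]
  refine le_antisymm hle ?_
  intro f hfk
  have hall : f ∈ (hI F (r + 1) n (n + r)).restrictScalars F ⊔
      Submodule.span F ((fun m => monomial m (1 : F)) '' {m | Std r (n + r) m}) := by
    rw [f.as_sum]
    refine Submodule.sum_mem _ fun m _ => ?_
    have := Submodule.smul_mem _ (coeff m f) (reduce F r n _ m rfl)
    rwa [smul_monomial, smul_eq_mul, mul_one] at this
  obtain ⟨a, ha, b, hb, rfl⟩ := Submodule.mem_sup.1 hall
  have hb0 : b = 0 := by
    apply indep F r (n + r) b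
    · intro m hm
      have hsub : Submodule.span F ((fun m => monomial m (1 : F)) '' {m | Std r (n + r) m}) ≤
          MvPolynomial.restrictSupport F {m | Std r (n + r) m} := by
        rw [Submodule.span_le]
        rintro _ ⟨m, hm, rfl⟩
        rw [SetLike.mem_coe, mem_restrictSupport_iff]
        intro m' hm'
        have := support_monomial_subset hm'
        simp at this
        rw [this]; exact hm
      exact (mem_restrictSupport_iff F |>.1 (hsub hb)) hm
    · have h1 := hle ha
      rw [RingHom.mem_ker] at h1 hfk
      rwa [map_add, h1, zero_add] at hfk
  rw [hb0, add_zero]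
  exact ha

theorem hI_prime (F : Type*) [Field F] (r n : ℕ) : (hI F (r + 1) n (n + r)).IsPrime := by
  rw [hI_eq_ker]
  exact RingHom.ker_isPrime _

/-- Linear algebra for the height bound. -/
theorem lin {K : Type*} [Field K] (x : ℕ → K) (r n : ℕ)
    (h1 : ∀ g : Fin (r + 2) → Fin n, hm x (r + 2) (fun j => (g j : ℕ)) = 0)
    (h2 : hm x (r + 1) (fun j => (j : ℕ)) = 0) (h3 : hm x r (fun j => (j : ℕ)) ≠ 0)
    (g : Fin (r + 1) → Fin n) : hm x (r + 1) (fun j => (g j : ℕ)) = 0 := by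
  unfold hm at *
  obtain ⟨v, hv0, hv⟩ := Matrix.exists_vecMul_eq_zero_iff.2 h2
  let e : ℕ → K := fun k => ∑ i : Fin (r + 1), v i * x ((i : ℕ) + k)
  have he0 : ∀ k ≤ r, e k = 0 := by
    intro k hk
    have := congrFun hv (⟨k, by omega⟩ : Fin (r + 1))
    simpa [Matrix.vecMul, dotProduct] using this
  have he : ∀ k, k < n → e k = 0 := by
    intro k
    induction k using Nat.strong_induction_on with
    | _ k ih =>
    intro hkn
    by_cases hkr : k ≤ r
    · exact he0 k hkr
    by_contra hek
    push Not at hkr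
    let gg : Fin (r + 2) → Fin n :=
      fun j => if (j : ℕ) < r then ⟨j, by omega⟩ else if (j : ℕ) = r then ⟨k - 1, by omega⟩
        else ⟨k, hkn⟩
    have hg1 : ∀ j : Fin r, (gg j.castSucc.castSucc : ℕ) = j := by
      intro j
      simp [gg]
    have hg2 : (gg (Fin.last r).castSucc : ℕ) = k - 1 := by simp [gg]
    have hg3 : (gg (Fin.last (r + 1)) : ℕ) = k := by simp [gg]
    obtain ⟨c, hc0, hc⟩ := Matrix.exists_mulVec_eq_zero_iff.2 (h1 gg)
    have hrow : ∀ i < r + 2, ∑ j, x (i + (gg j : ℕ)) * c j = 0 := by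
      intro i hi
      have := congrFun hc ⟨i, hi⟩
      simpa [Matrix.mulVec, dotProduct] using this
    have hsum : ∀ s ≤ 1, ∑ j, e ((gg j : ℕ) + s) * c j = 0 := by
      intro s hs
      simp only [e, Finset.sum_mul]
      rw [Finset.sum_comm]
      refine Finset.sum_eq_zero fun i _ => ?_
      have := hrow (i + s) (by omega)
      calc ∑ j, v i * x (i + ((gg j : ℕ) + s)) * c j
          = v i * ∑ j, x (i + s + (gg j : ℕ)) * c j := by
            rw [Finset.mul_sum]
            refine Finset.sum_congr rfl fun j _ => ?_
            rw [mul_assoc]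
            congr 3
            omega
        _ = 0 := by rw [this, mul_zero]
    have hs0 := hsum 0 (by omega)
    have hs1 := hsum 1 (by omega)
    rw [Fin.sum_univ_castSucc, Fin.sum_univ_castSucc] at hs0 hs1
    rw [Finset.sum_eq_zero (by
      intro j _
      rw [hg1, he0 _ (by omega), zero_mul]), hg2, hg3, add_zero, add_zero,
      ih (k - 1) (by omega) (by omega)] at hs0
    rw [Finset.sum_eq_zero (by
      intro j _
      rw [hg1, he0 _ (by omega), zero_mul]), hg2, hg3, show k - 1 + 1 = k by omega] at hs1
    have hcl : c (Fin.last (r + 1)) = 0 := by simpa [hek] using hs0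
    have hcl' : c (Fin.last r).castSucc = 0 := by simpa [hek, hcl] using hs1
    apply h3
    rw [← Matrix.exists_mulVec_eq_zero_iff]
    refine ⟨fun j => c j.castSucc.castSucc, ?_, ?_⟩
    · intro h
      apply hc0
      ext j
      refine Fin.lastCases hcl (fun j => ?_) j
      refine Fin.lastCases hcl' (fun j => ?_) j
      exact congrFun h j
    · ext i
      have := hrow i (by omega)
      rw [Fin.sum_univ_castSucc, Fin.sum_univ_castSucc, hcl, hcl'] at this
      simpa [Matrix.mulVec, dotProduct, hg1] using this
  rw [← Matrix.exists_vecMul_eq_zero_iff]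
  refine ⟨v, hv0, ?_⟩
  ext j
  have := he (g j) (g j).2
  simpa [Matrix.vecMul, dotProduct] using this

/-- The antidiagonal Hankel matrix is invertible. -/
theorem hm_anti (F : Type*) [Field F] (r : ℕ) :
    hm (fun k => if k + 1 = r then (1 : F) else 0) r (fun j => (j : ℕ)) ≠ 0 := by
  unfold hm
  intro h
  obtain ⟨v, hv0, hv⟩ := Matrix.exists_mulVec_eq_zero_iff.2 h
  apply hv0
  ext i
  have := congrFun hv i.rev
  simp only [Matrix.mulVec, dotProduct, Matrix.of_apply, Pi.zero_apply, ite_mul, one_mul,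
    zero_mul] at this
  rw [Finset.sum_eq_single i] at this
  · rwa [if_pos (by rw [Fin.val_rev]; omega)] at this
  · intro b _ hb
    rw [if_neg]
    intro h
    apply hb
    rw [Fin.val_rev] at h
    ext
    omega
  · simp

theorem hm_anti_zero (F : Type*) [Field F] (r : ℕ) (g : Fin (r + 1) → ℕ) :
    hm (fun k => if k + 1 = r then (1 : F) else 0) (r + 1) g = 0 := by
  unfold hm
  refine Matrix.det_eq_zero_of_row_eq_zero (Fin.last r) fun j => ?_
  simp only [Matrix.of_apply, Fin.val_last]
  rw [if_neg (by omega)]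

/-- The evaluation at the antidiagonal sequence kills the Hankel ideal but not the smaller minor. -/
theorem minor_not_mem (F : Type*) [Field F] (r n N : ℕ) (h : 2 * r ≤ N + 1)
    (hN : n + r ≤ N) :
    hm (xv F N) r (fun j => (j : ℕ)) ∉ hI F (r + 1) n N := by
  let ev : MvPolynomial (Fin N) F →ₐ[F] F :=
    aeval (fun i : Fin N => if (i : ℕ) + 1 = r then (1 : F) else 0)
  have hev : ∀ k < N, ev (xv F N k) = if k + 1 = r then (1 : F) else 0 := by
    intro k hk
    simp [ev, xv, hk]
  have hle : hI F (r + 1) n N ≤ RingHom.ker ev := by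
    rw [hI, Ideal.span_le]
    rintro _ ⟨g, rfl⟩
    rw [SetLike.mem_coe, RingHom.mem_ker]
    refine (map_hm ev.toRingHom _ _ _).trans ?_
    rw [← hm_anti_zero F r (fun j => (g j : ℕ))]
    unfold hm
    congr 1
    ext1 i j
    have h2 : (i : ℕ) + (g j : ℕ) < N := by omega
    exact hev _ h2
  intro hmem
  have h1 := hle hmem
  rw [RingHom.mem_ker] at h1
  apply hm_anti F r
  refine Eq.trans ?_ h1
  refine Eq.trans ?_ (map_hm ev.toRingHom _ _ _).symm
  unfold hm
  congr 1
  ext1 i j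
  have h2 : (i : ℕ) + (j : ℕ) < N := by omega
  exact (hev _ h2).symm

theorem hI_le (F : Type*) [Field F] (t n N : ℕ) : hI F (t + 1) n N ≤ hI F t n N := by
  rw [hI, Ideal.span_le]
  rintro _ ⟨g, rfl⟩
  rw [SetLike.mem_coe]
  dsimp only
  rw [hm, Matrix.det_succ_row _ (Fin.last t)]
  refine Ideal.sum_mem _ fun j _ => Ideal.mul_mem_left _ _ (Ideal.subset_span ?_)
  refine ⟨fun i => g (j.succAbove i), ?_⟩
  show hm _ _ _ = _
  unfold hm
  refine congrArg Matrix.det (Matrix.ext fun a b => ?_)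
  simp [Fin.succAbove_last]

/-- The isomorphism of polynomial rings splitting off the last variable. -/
noncomputable def splitLast (F : Type*) [Field F] (N : ℕ) :
    MvPolynomial (Fin (N + 1)) F ≃ₐ[F] Polynomial (MvPolynomial (Fin N) F) :=
  (renameEquiv F finSuccEquivLast).trans (optionEquivLeft F (Fin N))

theorem splitLast_xv (F : Type*) [Field F] (N k : ℕ) (hk : k < N) :
    splitLast F N (xv F (N + 1) k) = Polynomial.C (xv F N k) := by
  have h1 : k < N + 1 := by omega
  have h2 : finSuccEquivLast (⟨k, h1⟩ : Fin (N + 1)) = some ⟨k, hk⟩ :=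
    finSuccEquivLast_castSucc (⟨k, hk⟩ : Fin N)
  simp [splitLast, xv, h1, hk, h2]

theorem splitLast_map (F : Type*) [Field F] (r n : ℕ) :
    (hI F (r + 1) n (n + r)).map (Polynomial.C) =
      (hI F (r + 1) n (n + r + 1)).map (splitLast F (n + r) :
        MvPolynomial (Fin (n + r + 1)) F →+* Polynomial (MvPolynomial (Fin (n + r)) F)) := by
  rw [hI, hI, Ideal.map_span, Ideal.map_span, ← Set.range_comp, ← Set.range_comp]
  congr 2
  funext g
  simp only [Function.comp]
  rw [map_hm, map_hm]
  unfold hm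
  congr 1
  ext1 i j
  have h2 : (i : ℕ) + (g j : ℕ) < n + r := by omega
  exact (splitLast_xv F (n + r) _ h2).symm

/-- Quotient by an extended ideal, as an algebra isomorphism. -/
noncomputable def polyQuot (F A : Type*) [Field F] [CommRing A] [Algebra F A] (I : Ideal A) :
    (Polynomial A ⧸ I.map (Polynomial.C : A →+* Polynomial A)) ≃ₐ[F] Polynomial (A ⧸ I) :=
  AlgEquiv.ofRingEquiv (f := (Ideal.polynomialQuotientEquivQuotientPolynomial I).symm) (by
    intro a
    have : algebraMap F (Polynomial A ⧸ I.map (Polynomial.C : A →+* Polynomial A)) a =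
      Ideal.Quotient.mk _ (Polynomial.C (algebraMap F A a)) := rfl
    rw [this, Ideal.polynomialQuotientEquivQuotientPolynomial_symm_mk]
    simp only [Polynomial.map_C]
    rfl)

theorem main (F : Type*) [Field F] (r n : ℕ) (hn : r + 2 ≤ n)
    (I J : Ideal (MvPolynomial (Fin (n + r + 1)) F)) (hIdef : I = hI F (r + 2) n (n + r + 1))
    (hJdef : J = hI F (r + 1) n (n + r + 1))
    (p : Ideal (MvPolynomial (Fin (n + r + 1)) F ⧸ I))
    (hp : p = J.map (Ideal.Quotient.mk I)) :
    (Nonempty (((MvPolynomial (Fin (n + r + 1)) F ⧸ I) ⧸ p) ≃ₐ[F]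
        Polynomial (MvPolynomial (Fin (n + r)) F ⧸ hI F (r + 1) n (n + r)))) ∧
    p.IsPrime ∧
    sInf {h : ℕ∞ | ∃ q : PrimeSpectrum (MvPolynomial (Fin (n + r + 1)) F ⧸ I),
        p ≤ q.asIdeal ∧ h = Order.height q} = 1 := by
  have hIJ : I ≤ J := hIdef ▸ hJdef ▸ hI_le F (r + 1) n (n + r + 1)
  have hIp : I.IsPrime := hIdef ▸ hI_prime F (r + 1) n
  have hI'p : (hI F (r + 1) n (n + r)).IsPrime := hI_prime F r n
  have e : ((MvPolynomial (Fin (n + r + 1)) F ⧸ I) ⧸ p) ≃ₐ[F]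
        Polynomial (MvPolynomial (Fin (n + r)) F ⧸ hI F (r + 1) n (n + r)) := by
    have e1 : ((MvPolynomial (Fin (n + r + 1)) F ⧸ I) ⧸ p) ≃ₐ[F]
        (MvPolynomial (Fin (n + r + 1)) F ⧸ J) :=
      (Ideal.quotientEquivAlgOfEq F (by rw [hp]; rfl)).trans
        ((DoubleQuot.quotQuotEquivQuotSupₐ F I J).trans
          (Ideal.quotientEquivAlgOfEq F (sup_eq_right.2 hIJ)))
    have e2 : (MvPolynomial (Fin (n + r + 1)) F ⧸ J) ≃ₐ[F]
        (Polynomial (MvPolynomial (Fin (n + r)) F) ⧸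
          (hI F (r + 1) n (n + r)).map (Polynomial.C)) :=
      Ideal.quotientEquivAlg _ _ (splitLast F (n + r))
        (hJdef ▸ splitLast_map F r n)
    exact e1.trans (e2.trans (polyQuot F _ _))
  have hpp : p.IsPrime := by
    rw [← Ideal.Quotient.isDomain_iff_prime]
    exact e.toMulEquiv.isDomain _
  refine ⟨⟨e⟩, hpp, ?_⟩
  have hmemp : ∀ f, Ideal.Quotient.mk I f ∈ p ↔ f ∈ J := by
    intro f
    rw [hp, Ideal.mem_quotient_iff_mem hIJ]
  have hsInf : sInf {h : ℕ∞ | ∃ q : PrimeSpectrum (MvPolynomial (Fin (n + r + 1)) F ⧸ I),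
      p ≤ q.asIdeal ∧ h = Order.height q} = p.height := by
    rw [show p.height = Order.height (⟨p, hpp⟩ : PrimeSpectrum _) from
      PrimeSpectrum.height_eq_orderHeight ⟨p, hpp⟩]
    refine le_antisymm (sInf_le ⟨⟨p, hpp⟩, le_rfl, rfl⟩) (le_sInf ?_)
    rintro _ ⟨q, hq, rfl⟩
    exact Order.height_mono hq
  rw [hsInf]
  let Δ := hm (xv F (n + r + 1)) (r + 1) (fun j => (j : ℕ))
  have hΔJ : Δ ∈ J := hJdef ▸ Ideal.subset_span ⟨fun j => ⟨j, by omega⟩, rfl⟩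
  have hΔI : Δ ∉ I := hIdef ▸ minor_not_mem F (r + 1) n (n + r + 1) (by omega) (by omega)
  refine le_antisymm ?_ ?_
  · refine Ideal.height_le_one_of_isPrincipal_of_mem_minimalPrimes
      (Ideal.span {Ideal.Quotient.mk I Δ}) p ⟨⟨hpp, ?_⟩, ?_⟩
    · rw [Ideal.span_singleton_le_iff_mem]
      exact (hmemp _).2 hΔJ
    · rintro q ⟨hq, hΔq⟩ hqp
      rw [Ideal.span_singleton_le_iff_mem] at hΔq
      let K := FractionRing ((MvPolynomial (Fin (n + r + 1)) F ⧸ I) ⧸ q)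
      let f : MvPolynomial (Fin (n + r + 1)) F →+* K :=
        (algebraMap ((MvPolynomial (Fin (n + r + 1)) F ⧸ I) ⧸ q) K).comp
          ((Ideal.Quotient.mk q).comp (Ideal.Quotient.mk I))
      have hf : ∀ a, f a = 0 ↔ Ideal.Quotient.mk I a ∈ q := by
        intro a
        simp only [f, RingHom.comp_apply, FaithfulSMul.algebraMap_eq_zero_iff,
          Ideal.Quotient.eq_zero_iff_mem]
      have hlin := lin (fun k => f (xv F (n + r + 1) k)) r n (by
        intro g
        rw [← map_hm, hf]
        have : hm (xv F (n + r + 1)) (r + 2) (fun j => (g j : ℕ)) ∈ I :=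
          hIdef ▸ Ideal.subset_span ⟨g, rfl⟩
        rw [Ideal.Quotient.eq_zero_iff_mem.2 this]
        exact zero_mem _) (by
        rw [← map_hm, hf]
        exact hΔq) (by
        rw [← map_hm, ne_eq, hf]
        intro h
        exact minor_not_mem F r n (n + r + 1) (by omega) (by omega)
          (hJdef ▸ (hmemp _).1 (hqp h)))
      rw [hp, hJdef, hI, Ideal.map_span, Ideal.span_le]
      rintro _ ⟨_, ⟨g, rfl⟩, rfl⟩
      have := hlin g
      rw [← map_hm, hf] at this
      exact this
  · have hne : (⊥ : Ideal (MvPolynomial (Fin (n + r + 1)) F ⧸ I)) < p := by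
      rw [bot_lt_iff_ne_bot]
      intro h0
      have := (hmemp _).2 hΔJ
      rw [h0, Ideal.mem_bot, Ideal.Quotient.eq_zero_iff_mem] at this
      exact hΔI this
    have := Ideal.height_add_one_le_of_lt_of_isPrime hne
    exact le_trans (by simp) this

end HankelAux

/-- Let `R` be the `t×n` Hankel determinantal ring (`2 ≤ t ≤ n`) and `p ⊆ R` the ideal
generated by the `(t-1)`-minors of the first `t-1` rows of the Hankel matrix.  Then `R/p` is
isomorphic as an `F`-algebra to a polynomial ring in one variable over the `(t-1)×n` Hankel
determinantal ring; consequently `p` is prime of height `1`. -/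
theorem hankel_quotient_by_p (F : Type*) [Field F] (t n : ℕ) (ht : 2 ≤ t) (htn : t ≤ n)
    (H : Matrix (Fin t) (Fin n) (MvPolynomial (Fin (n + t - 1)) F))
    (hH : ∀ a b, H a b = X ⟨(a : ℕ) + (b : ℕ), by have := a.2; have := b.2; omega⟩)
    (I : Ideal (MvPolynomial (Fin (n + t - 1)) F))
    (hI : I = Ideal.span (Set.range fun g : Fin t → Fin n => (H.submatrix id g).det))
    (p : Ideal (MvPolynomial (Fin (n + t - 1)) F ⧸ I))
    (hp : p = Ideal.span {x | ∃ g : Fin (t - 1) → Fin n,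
      x = Ideal.Quotient.mk I
        ((H.submatrix (fun i : Fin (t - 1) => (⟨i.1, by have := i.2; omega⟩ : Fin t)) g).det)})
    (H' : Matrix (Fin (t - 1)) (Fin n) (MvPolynomial (Fin (n + t - 2)) F))
    (hH' : ∀ a b, H' a b = X ⟨(a : ℕ) + (b : ℕ), by have := a.2; have := b.2; omega⟩)
    (I' : Ideal (MvPolynomial (Fin (n + t - 2)) F))
    (hI' : I' = Ideal.span (Set.range fun g : Fin (t - 1) → Fin n => (H'.submatrix id g).det)) :
    (Nonempty (((MvPolynomial (Fin (n + t - 1)) F ⧸ I) ⧸ p) ≃ₐ[F]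
        Polynomial (MvPolynomial (Fin (n + t - 2)) F ⧸ I'))) ∧
    p.IsPrime ∧
    sInf {h : ℕ∞ | ∃ q : PrimeSpectrum (MvPolynomial (Fin (n + t - 1)) F ⧸ I),
        p ≤ q.asIdeal ∧ h = Order.height q} = 1 := by
  obtain ⟨r, rfl⟩ : ∃ r, t = r + 2 := ⟨t - 2, by omega⟩
  have hIe : I = HankelAux.hI F (r + 2) n (n + r + 1) := by
    rw [hI, HankelAux.hI]
    congr 2
    funext g
    unfold HankelAux.hm
    congr 1
    ext1 i j
    have hlt : (i : ℕ) + (g j : ℕ) < n + r + 1 := by omega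
    simp only [Matrix.submatrix_apply, id, hH, Matrix.of_apply, HankelAux.xv]
    rw [dif_pos hlt]
  have hIe' : I' = HankelAux.hI F (r + 1) n (n + r) := by
    rw [hI', HankelAux.hI]
    congr 2
    funext g
    unfold HankelAux.hm
    congr 1
    ext1 i j
    have hlt : (i : ℕ) + (g j : ℕ) < n + r := by omega
    simp only [Matrix.submatrix_apply, id, hH', Matrix.of_apply, HankelAux.xv]
    rw [dif_pos hlt]
  clear hI hI'
  subst hIe'
  refine HankelAux.main F r n htn I _ hIe rfl p ?_
  rw [hp, HankelAux.hI, Ideal.map_span]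
  congr 1
  ext x
  simp only [Set.mem_ofPred_eq, Set.mem_image, Set.mem_range, exists_exists_eq_and]
  refine exists_congr fun g => ?_
  rw [eq_comm]
  apply Eq.congr_left
  congr 1
  unfold HankelAux.hm
  congr 1
  ext1 i j
  have hlt : (i : ℕ) + (g j : ℕ) < n + r + 1 := by omega
  simp only [Matrix.submatrix_apply, hH, Matrix.of_apply, HankelAux.xv]
  rw [dif_pos hlt]
end

section
/- Let R be the t×n Hankel determinantal ring over a field F (2 ≤ t ≤ n), p the height-one prime generated by the (t-1)-minors of the first t-1 rows of the Hankel matrix, and v the valuation of the discrete valuation ring R_p. Then for 1 ≤ i_1 < i_2 < ... < i_{t-1} ≤ n, v([1 ... t-1 | i_1 ... i_{t-1}]) = n+1-i_{t-1}, where [1 ... t-1 | i_1 ... i_{t-1}] denotes the minor of H with rows 1,...,t-1 and columns i_1,...,i_{t-1}. -/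
set_option synthInstance.maxHeartbeats 1000000
set_option maxHeartbeats 1000000

open MvPolynomial Matrix

/-- The Hankel minor with rows `0..r-1` and columns `c`. -/
noncomputable def hk {A : Type*} [CommRing A] {r : ℕ} (x : ℕ → A) (c : Fin r → ℕ) : A :=
  (Matrix.of fun i k : Fin r => x ((i : ℕ) + c k)).det

/-- The defect of the linear recurrence. -/
noncomputable def dd {A : Type*} [CommRing A] {r : ℕ} (x : ℕ → A) (e : Fin r → A) (m : ℕ) : A :=
  x (m + r) - ∑ i : Fin r, e i * x (m + i)

lemma hk_map {A B : Type*} [CommRing A] [CommRing B] (f : A →+* B) {r : ℕ} (x : ℕ → A)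
    (c : Fin r → ℕ) : f (hk x c) = hk (fun m => f (x m)) c := by
  unfold hk
  rw [RingHom.map_det]
  rfl

lemma dd_map {A B : Type*} [CommRing A] [CommRing B] (f : A →+* B) {r : ℕ} (x : ℕ → A)
    (e : Fin r → A) (m : ℕ) : f (dd x e m) = dd (fun m => f (x m)) (fun i => f (e i)) m := by
  simp [dd]

lemma hk_congr {A : Type*} [CommRing A] {r : ℕ} (x y : ℕ → A) (c : Fin r → ℕ)
    (h : ∀ (i k : Fin r), x (i + c k) = y (i + c k)) : hk x c = hk y c := by
  unfold hk
  congr 1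
  ext i k
  exact h i k

lemma hk_expand {A : Type*} [CommRing A] {r : ℕ} (x : ℕ → A) (e : Fin r → A)
    (c : Fin (r + 1) → ℕ) :
    hk x c = ∑ k : Fin (r + 1), (-1) ^ (r + (k : ℕ)) * dd x e (c k) *
      hk x (fun i => c (k.succAbove i)) := by
  have h := Matrix.det_updateRow_sum (Matrix.of fun i k : Fin (r+1) => x ((i : ℕ) + c k))
    (Fin.last r) (Fin.snoc (α := fun _ => A) (fun i => - e i) 1)
  rw [Fin.snoc_last, one_smul] at h
  rw [hk, ← h, Matrix.det_succ_row _ (Fin.last r)]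
  refine Finset.sum_congr rfl fun k _ => ?_
  congr 1
  · congr 1
    simp [Fin.sum_univ_castSucc, dd, Finset.sum_apply, add_comm, sub_eq_add_neg]
  · unfold hk
    congr 1
    ext i j
    simp [Matrix.updateRow_apply]

lemma hk_border {A : Type*} [CommRing A] {r : ℕ} (x : ℕ → A) (e : Fin r → A)
    (he : ∀ m < r, dd x e m = 0) (m : ℕ) :
    hk x (Fin.snoc (α := fun _ => ℕ) (fun i : Fin r => (i : ℕ)) m) =
      dd x e m * hk x (fun i : Fin r => (i : ℕ)) := by
  rw [hk_expand x e, Fin.sum_univ_castSucc, Finset.sum_eq_zero]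
  · simp [← two_mul]
  · intro i _
    rw [Fin.snoc_castSucc, he i i.2]
    simp

lemma exists_rec {A : Type*} [CommRing A] {r : ℕ} (x : ℕ → A)
    (hΔ : IsUnit (hk x (fun i : Fin r => (i : ℕ)))) : ∃ e : Fin r → A, ∀ m < r, dd x e m = 0 := by
  set B : Matrix (Fin r) (Fin r) A := Matrix.of fun i k : Fin r => x ((i : ℕ) + k) with hB
  have hu : IsUnit B.det := hΔ
  refine ⟨(fun j : Fin r => x (j + r)) ᵥ* B⁻¹, fun m hm => ?_⟩
  have h : ((fun j : Fin r => x (j + r)) ᵥ* B⁻¹) ᵥ* B = (fun j : Fin r => x (j + r)) := by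
    rw [Matrix.vecMul_vecMul, Matrix.nonsing_inv_mul _ hu, Matrix.vecMul_one]
  have := congrFun h ⟨m, hm⟩
  rw [dd, sub_eq_zero]
  simp only at this
  rw [← this]
  conv_lhs => rw [Matrix.vecMul, dotProduct]
  simp [hB, add_comm]

lemma hk_rel {A : Type*} [CommRing A] {r n : ℕ} (hn : r + 2 ≤ n) (x : ℕ → A)
    (hΔ : IsUnit (hk x (fun i : Fin r => (i : ℕ)))) (e : Fin r → A)
    (he : ∀ m < r, dd x e m = 0)
    (h2 : ∀ c : Fin (r + 2) → ℕ, (∀ k, c k < n) → hk x c = 0) :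
    ∃ U : ℕ → A, ∀ j k, j < n → k < n →
      dd x e j * (dd x e (k + 1) - dd x e r * U k) =
      dd x e k * (dd x e (j + 1) - dd x e r * U j) := by
  set B : Matrix (Fin r) (Fin r) A := Matrix.of fun i k : Fin r => x ((i : ℕ) + k) with hB
  have hu : IsUnit B.det := hΔ
  have hw : ∀ i, dd x e r ∣ ((fun j : Fin r => dd x e (j + 1)) ᵥ* B⁻¹) i := by
    intro i
    rw [Matrix.vecMul, dotProduct]
    refine Finset.dvd_sum fun j _ => Dvd.dvd.mul_right ?_ _
    by_cases hj : (j : ℕ) + 1 < r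
    · rw [he _ hj]; exact dvd_zero _
    · have : (j : ℕ) + 1 = r := by have := j.2; omega
      rw [this]
  choose u hu' using hw
  have hwB : ((fun j : Fin r => dd x e (j + 1)) ᵥ* B⁻¹) ᵥ* B = (fun j : Fin r => dd x e (j + 1)) := by
    rw [Matrix.vecMul_vecMul, Matrix.nonsing_inv_mul _ hu, Matrix.vecMul_one]
  refine ⟨fun m => ∑ i : Fin r, u i * x (m + i), fun j k hj hk' => ?_⟩
  have h0 := h2 (Fin.append (fun i : Fin r => (i : ℕ)) ![j, k]) (by
    intro q
    refine Fin.addCases (fun i => ?_) (fun i => ?_) q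
    · simp; omega
    · fin_cases i <;> simp [hj, hk'])
  set c := Fin.append (fun i : Fin r => (i : ℕ)) ![j, k] with hc
  have h := Matrix.det_updateRow_sum (Matrix.of fun i k : Fin (r+2) => x ((i : ℕ) + c k))
    (Fin.last (r + 1)) (Fin.cons (α := fun _ => A) 0
      (Fin.snoc (α := fun _ => A) (fun i => - e i) 1))
  rw [show (Fin.last (r+1)) = (Fin.last r).succ from rfl, Fin.cons_succ, Fin.snoc_last, one_smul] at h
  change _ = hk x c at h
  rw [h0, ← Matrix.det_submatrix_equiv_self finSumFinEquiv] at h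
  let E : Matrix (Fin 2) (Fin r) A := Matrix.of ![e, fun i => dd x e r * u i]
  let B2 : Matrix (Fin r) (Fin 2) A := Matrix.of fun i q => x (i + ![j, k] q)
  let D : Matrix (Fin 2) (Fin 2) A := !![x (j + r), x (k + r); dd x e (j + 1), dd x e (k + 1)]
  have key : ((Matrix.of fun i k : Fin (r+2) => x ((i : ℕ) + c k)).updateRow (Fin.last r).succ
      (∑ q, (Fin.cons (α := fun _ => A) 0
      (Fin.snoc (α := fun _ => A) (fun i => - e i) 1) : Fin (r+2) → A) q • (Matrix.of fun i k : Fin (r+2) => x ((i : ℕ) + c k)) q)).submatrix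
      finSumFinEquiv finSumFinEquiv = Matrix.fromBlocks B B2 (E * B) D := by
    have hrow : (∑ q, (Fin.cons (α := fun _ => A) 0
      (Fin.snoc (α := fun _ => A) (fun i => - e i) 1) : Fin (r+2) → A) q • (Matrix.of fun i k : Fin (r+2) => x ((i : ℕ) + c k)) q) = fun k => dd x e (c k + 1) := by
      ext q
      rw [Fin.sum_univ_succ, Fin.sum_univ_castSucc]
      simp only [Fin.cons_zero, Fin.cons_succ, Fin.snoc_castSucc, Fin.snoc_last, dd]
      simp [Finset.sum_apply, sub_eq_add_neg]
      rw [add_comm]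
      congr 1
      · congr 1; ring
      · congr 1
        refine Finset.sum_congr rfl fun i _ => ?_
        congr 2; ring
    rw [hrow]
    have hl : (Fin.last r).succ = Fin.natAdd r (1 : Fin 2) := by ext; simp
    have hne0 : ∀ a : Fin r, Fin.castAdd 2 a ≠ Fin.last (r + 1) := by
      intro a h; have := congrArg Fin.val h; simp at this; omega
    have hne1 : Fin.natAdd r (0 : Fin 2) ≠ Fin.last (r + 1) := by
      intro h; have := congrArg Fin.val h; simp at this
    ext a b
    rcases a with a | a <;> rcases b with b | b
    · simp [Matrix.updateRow_ne (hne0 a), hB, hc]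
    · simp [Matrix.updateRow_ne (hne0 a), B2, hc]
    · have h1 := he b b.2
      have h2 := congrFun hwB b
      rw [dd, sub_eq_zero] at h1
      fin_cases a
      · simp [Matrix.updateRow_ne hne1, hc, E, hB, Matrix.vecMul, dotProduct]
        rw [add_comm r, h1]
        simp [add_comm]
      · simp only [Fin.mk_one, Fin.isValue, Matrix.submatrix_apply, finSumFinEquiv_apply_right,
          finSumFinEquiv_apply_left, ← hl, Matrix.updateRow_self, Matrix.fromBlocks_apply₂₁]
        simp only [hc, Fin.append_left]
        rw [← h2, Matrix.vecMul, dotProduct]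
        simp [E, Matrix.mul_apply, hu']
    · fin_cases a
      · simp [Matrix.updateRow_ne hne1, hc, D]
        fin_cases b <;> simp [add_comm]
      · simp only [Fin.mk_one, Fin.isValue, Matrix.submatrix_apply, finSumFinEquiv_apply_right,
          finSumFinEquiv_apply_left, ← hl, Matrix.updateRow_self, Matrix.fromBlocks_apply₂₂]
        simp only [hc, Fin.append_right, D]
        fin_cases b <;> simp
  rw [key] at h
  have := Matrix.invertibleOfIsUnitDet B hu
  rw [Matrix.det_fromBlocks₁₁, Matrix.mul_assoc E, mul_invOf_self, Matrix.mul_one] at h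
  have h' := (hu.mul_right_eq_zero).1 h
  have e00 : (D - E * B2) 0 0 = dd x e j := by
    simp [D, E, B2, Matrix.vecMul, dotProduct, dd, add_comm]
  have e01 : (D - E * B2) 0 1 = dd x e k := by
    simp [D, E, B2, Matrix.vecMul, dotProduct, dd, add_comm]
  have e10 : (D - E * B2) 1 0 = dd x e (j + 1) - dd x e r * ∑ i : Fin r, u i * x (j + i) := by
    simp [D, E, B2, Matrix.vecMul, dotProduct, add_comm, Finset.mul_sum, mul_assoc]
  have e11 : (D - E * B2) 1 1 = dd x e (k + 1) - dd x e r * ∑ i : Fin r, u i * x (k + i) := by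
    simp [D, E, B2, Matrix.vecMul, dotProduct, add_comm, Finset.mul_sum, mul_assoc]
  rw [Matrix.det_fin_two, e00, e01, e10, e11] at h'
  linear_combination h'

lemma dd_mem {A : Type*} [CommRing A] {r n : ℕ} (hn : r + 2 ≤ n) (M : Ideal A) (x : ℕ → A)
    (hΔ : IsUnit (hk x (fun i : Fin r => (i : ℕ)))) (e : Fin r → A)
    (he : ∀ m < r, dd x e m = 0) (hdn : IsUnit (dd x e n))
    (h1 : ∀ c : Fin (r + 1) → ℕ, (∀ k, c k < n) → hk x c ∈ M)
    (h2 : ∀ c : Fin (r + 2) → ℕ, (∀ k, c k < n) → hk x c = 0) :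
    ∀ m ≤ n, dd x e m ∈ M ^ (n - m) := by
  obtain ⟨U, hU⟩ := hk_rel hn x hΔ e he h2
  have hone : ∀ m < n, dd x e m ∈ M := by
    intro m hm
    have h := h1 (Fin.snoc (α := fun _ => ℕ) (fun i : Fin r => (i : ℕ)) m) (by
      intro k
      refine Fin.lastCases ?_ (fun i => ?_) k
      · simpa using hm
      · simp; omega)
    rw [hk_border x e he] at h
    exact (M.mul_unit_mem_iff_mem hΔ).1 h
  have key : ∀ q, ∀ m ≤ n, dd x e m ∈ M ^ (min q (n - m)) := by
    intro q
    induction q with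
    | zero => intro m _; simp
    | succ q ih =>
      intro m hm
      by_cases hq : n - m < q + 1
      · have h3 := ih m hm
        rwa [show min (q + 1) (n - m) = min q (n - m) by omega]
      · rw [show min (q + 1) (n - m) = q + 1 by omega]
        by_cases hmr : m < r
        · rw [he m hmr]; exact zero_mem _
        rcases Nat.eq_zero_or_pos q with rfl | hq0
        · simpa using hone m (by omega)
        have hrel := hU m (n - 1) (by omega) (by omega)
        rw [show n - 1 + 1 = n by omega] at hrel
        have a1 : dd x e (m + 1) ∈ M ^ q := by
          have := ih (m + 1) (by omega)
          rwa [show min q (n - (m + 1)) = q by omega] at this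
        have a2 : dd x e m ∈ M ^ q := by
          have := ih m (by omega)
          rwa [show min q (n - m) = q by omega] at this
        have a3 : dd x e r ∈ M ^ q := by
          have := ih r (by omega)
          rwa [show min q (n - r) = q by omega] at this
        have b1 := hone (n - 1) (by omega)
        have b2 := hone r (by omega)
        have c1 : dd x e (m + 1) * dd x e (n - 1) ∈ M ^ (q + 1) := by
          rw [pow_succ]; exact Ideal.mul_mem_mul a1 b1
        have c2 : dd x e m * dd x e r ∈ M ^ (q + 1) := by
          rw [pow_succ]; exact Ideal.mul_mem_mul a2 b2
        have c3 : dd x e r * dd x e (n - 1) ∈ M ^ (q + 1) := by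
          rw [pow_succ]; exact Ideal.mul_mem_mul a3 b1
        have : dd x e m * dd x e n ∈ M ^ (q + 1) := by
          have : dd x e m * dd x e n = dd x e (m + 1) * dd x e (n - 1) +
              U (n - 1) * (dd x e m * dd x e r) - U m * (dd x e r * dd x e (n - 1)) := by
            linear_combination hrel
          rw [this]
          exact sub_mem (add_mem c1 (Ideal.mul_mem_left _ _ c2)) (Ideal.mul_mem_left _ _ c3)
        exact ((M ^ (q + 1)).mul_unit_mem_iff_mem hdn).1 this
  intro m hm
  have := key (n - m) m hm
  rwa [min_self] at this

lemma hk_mem {A : Type*} [CommRing A] {r n : ℕ} (M : Ideal A) (x : ℕ → A) (e : Fin r → A)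
    (h : ∀ m ≤ n, dd x e m ∈ M ^ (n - m)) (c : Fin (r + 1) → ℕ) (hc : StrictMono c)
    (hcn : ∀ k, c k < n) : hk x c ∈ M ^ (n - c (Fin.last r)) := by
  rw [hk_expand x e]
  refine sum_mem fun k _ => Ideal.mul_mem_right _ _ (Ideal.mul_mem_left _ _ ?_)
  have h1 : c k ≤ c (Fin.last r) := hc.monotone (Fin.le_last k)
  exact Ideal.pow_le_pow_right (by omega) (h (c k) (hcn k).le)

/-- The one-parameter deformation. -/
noncomputable def zz {K : Type*} [Field K] (N : ℕ) (s : ℕ → K) (y : K) (m : ℕ) : PowerSeries K :=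
  PowerSeries.C (if m = N then s m - y else s m) + PowerSeries.C y * PowerSeries.X ^ (N - m)

lemma zz_coeff {K : Type*} [Field K] (N : ℕ) (s : ℕ → K) (y : K) (m : ℕ) (hm : m ≤ N) :
    PowerSeries.constantCoeff (zz N s y m) = s m := by
  unfold zz
  split_ifs with h
  · subst h; simp
  · have : N - m ≠ 0 := by omega
    simp [this]

lemma zz_dd {K : Type*} [Field K] {r n : ℕ} (s : ℕ → K) (e : Fin r → K)
    (hs : ∀ m < n, dd s e m = 0) (m : ℕ) (hm : m ≤ n) :
    dd (zz (n + r) s (dd s e n)) (fun i => PowerSeries.C (e i)) m =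
      PowerSeries.X ^ (n - m) * (PowerSeries.C (dd s e n) *
        (1 - ∑ i : Fin r, PowerSeries.C (e i) * PowerSeries.X ^ (r - i))) := by
  have h0 : (if m + r = n + r then s (m + r) - dd s e n else s (m + r)) -
      ∑ i : Fin r, e i * s (m + i) = 0 := by
    split_ifs with h
    · have : m = n := by omega
      subst this
      simp [dd]
    · exact hs m (by omega)
  have h1 := congrArg (PowerSeries.C (R := K)) h0
  rw [map_sub, map_sum, map_zero, sub_eq_zero] at h1
  rw [dd]
  simp only [zz]
  rw [h1]
  have : ∀ i : Fin r, PowerSeries.C (e i) * (PowerSeries.C (if m + (i : ℕ) = n + r then s (m + i) - dd s e n else s (m + i)) +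
      PowerSeries.C (dd s e n) * PowerSeries.X ^ (n + r - (m + i))) =
      PowerSeries.C (e i * s (m + i)) + PowerSeries.X ^ (n - m) * (PowerSeries.C (dd s e n) *
       (PowerSeries.C (e i) * PowerSeries.X ^ (r - i))) := by
    intro i
    have hi := i.2
    rw [if_neg (by omega), show n + r - (m + i) = (n - m) + (r - i) by omega, pow_add, map_mul]
    ring
  rw [Finset.sum_congr rfl fun i _ => this i, Finset.sum_add_distrib, ← Finset.mul_sum,
    ← Finset.mul_sum, show n + r - (m + r) = n - m by omega]
  ring

lemma zz_hk_zero {K : Type*} [Field K] {r n : ℕ} (s : ℕ → K) (e : Fin r → K)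
    (hs : ∀ m < n, dd s e m = 0) (c : Fin (r + 2) → ℕ) (hc : ∀ k, c k < n) :
    hk (zz (n + r) s (dd s e n)) c = 0 := by
  set z := zz (n + r) s (dd s e n) with hz
  unfold hk
  rw [← Matrix.exists_vecMul_eq_zero_iff]
  let w1 : Fin (r + 2) → PowerSeries K := Fin.snoc (α := fun _ => PowerSeries K)
    (Fin.snoc (α := fun _ => PowerSeries K) (fun i : Fin r => - PowerSeries.C (e i)) 1) 0
  let w2 : Fin (r + 2) → PowerSeries K := Fin.cons (α := fun _ => PowerSeries K) 0
    (Fin.snoc (α := fun _ => PowerSeries K) (fun i : Fin r => - PowerSeries.C (e i)) 1)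
  refine ⟨w1 - (PowerSeries.X : PowerSeries K) • w2, ?_, ?_⟩
  · intro h
    have h1 := congrFun h (Fin.last (r + 1))
    have h2 : w1 (Fin.last (r + 1)) = 0 := by simp [w1]
    have h3 : w2 (Fin.last (r + 1)) = 1 := by
      rw [show (Fin.last (r+1)) = (Fin.last r).succ from rfl]
      simp only [w2, Fin.cons_succ, Fin.snoc_last]
    rw [Pi.sub_apply, Pi.smul_apply, h2, h3] at h1
    simp at h1
  · rw [Matrix.sub_vecMul, Matrix.smul_vecMul]
    ext1 k
    have h1 : (w1 ᵥ* (Matrix.of fun i k : Fin (r + 2) => z (i + c k))) k =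
        dd z (fun i => PowerSeries.C (e i)) (c k) := by
      rw [Matrix.vecMul, dotProduct, Fin.sum_univ_castSucc, Fin.sum_univ_castSucc]
      simp only [w1, Fin.snoc_castSucc, Fin.snoc_last, dd]
      simp [add_comm, sub_eq_add_neg]
    have h2 : (w2 ᵥ* (Matrix.of fun i k : Fin (r + 2) => z (i + c k))) k =
        dd z (fun i => PowerSeries.C (e i)) (c k + 1) := by
      rw [Matrix.vecMul, dotProduct, Fin.sum_univ_succ, Fin.sum_univ_castSucc]
      simp only [w2, Fin.cons_zero, Fin.cons_succ, Fin.snoc_castSucc, Fin.snoc_last, dd]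
      simp [add_comm, sub_eq_add_neg, add_assoc, add_left_comm]
    rw [Pi.sub_apply, Pi.smul_apply, h1, h2, hz, zz_dd s e hs _ (hc k).le, zz_dd s e hs _ (hc k),
      smul_eq_mul, ← mul_assoc PowerSeries.X, ← pow_succ',
      show n - (c k + 1) + 1 = n - c k by have := hc k; omega, sub_self]
    rfl

lemma zz_hk_order {K : Type*} [Field K] {r n : ℕ} (s : ℕ → K) (e : Fin r → K)
    (hs : ∀ m < n, dd s e m = 0) (hy : dd s e n ≠ 0) (c : Fin (r + 1) → ℕ) (hc : StrictMono c)
    (hcn : ∀ k, c k < n) (hΔ : hk s (fun i : Fin r => c i.castSucc) ≠ 0) :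
    ¬ (PowerSeries.X : PowerSeries K) ^ (n - c (Fin.last r) + 1) ∣
      hk (zz (n + r) s (dd s e n)) c := by
  intro h
  rw [hk_expand _ (fun i => PowerSeries.C (e i)), Fin.sum_univ_castSucc] at h
  rw [dvd_add_right] at h
  · rw [zz_dd s e hs _ (hcn _).le, pow_succ] at h
    simp only [Fin.succAbove_last] at h
    rw [mul_comm ((-1) ^ _), mul_assoc, mul_assoc,
      mul_dvd_mul_iff_left (pow_ne_zero _ PowerSeries.X_ne_zero), PowerSeries.X_dvd_iff] at h
    simp only [map_mul, map_sub, map_sum, map_one, map_pow, map_neg, PowerSeries.constantCoeff_C,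
      PowerSeries.constantCoeff_X] at h
    rw [hk_map] at h
    rw [Finset.sum_eq_zero, hk_congr _ s] at h
    · simp [hy, hΔ] at h
    · intro i k
      apply zz_coeff
      have := hcn k.castSucc
      omega
    · intro i _
      have : r - (i : ℕ) ≠ 0 := by omega
      simp [this]
  · refine Finset.dvd_sum fun k _ => Dvd.dvd.mul_right (Dvd.dvd.mul_left ?_ _) _
    rw [zz_dd s e hs _ (hcn _).le]
    refine Dvd.dvd.mul_right (pow_dvd_pow _ ?_) _
    have h1 := hc (Fin.castSucc_lt_last k)
    have h2 := hcn (Fin.last r)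
    omega

lemma hk_smul {A : Type*} [CommRing A] {r : ℕ} (a : A) (x : ℕ → A) (c : Fin r → ℕ) :
    hk (fun m => a * x m) c = a ^ r * hk x c := by
  unfold hk
  have := Matrix.det_smul (Matrix.of fun i k : Fin r => x (i + c k)) a
  rw [Fintype.card_fin] at this
  rw [← this]
  rfl

lemma hk_sq_ne {F : Type*} [Field F] {r : ℕ} (c : Fin r → ℕ) (hc : Function.Injective c) :
    hk (fun m => (Polynomial.X : Polynomial F) ^ (m ^ 2)) c ≠ 0 := by
  have h : hk (fun m => (Polynomial.X : Polynomial F) ^ (m ^ 2)) c =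
      (∏ k, (Polynomial.X : Polynomial F) ^ (c k ^ 2)) * ((∏ i : Fin r, (Polynomial.X : Polynomial F) ^ ((i:ℕ) ^ 2)) *
      (Matrix.vandermonde fun k => (Polynomial.X : Polynomial F) ^ (2 * c k)).det) := by
    rw [← Matrix.det_transpose (Matrix.vandermonde _), ← Matrix.det_mul_column, ← Matrix.det_mul_row]
    unfold hk
    congr 1
    ext1 i k
    simp only [Matrix.of_apply, Matrix.transpose_apply, Matrix.vandermonde_apply]
    rw [← pow_mul, ← pow_add, ← pow_add]
    congr 1
    ring
  rw [h]
  refine mul_ne_zero (Finset.prod_ne_zero_iff.2 fun _ _ => pow_ne_zero _ Polynomial.X_ne_zero)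
    (mul_ne_zero (Finset.prod_ne_zero_iff.2 fun _ _ => pow_ne_zero _ Polynomial.X_ne_zero) ?_)
  rw [Matrix.det_vandermonde_ne_zero_iff]
  intro a b hab
  have := congrArg Polynomial.natDegree hab
  simp only [Polynomial.natDegree_X_pow] at this
  exact hc (by omega)

/-- The sequence of variables. -/
noncomputable def xs (F : Type*) [Field F] (N m : ℕ) : MvPolynomial (Fin N) F :=
  if h : m < N then X ⟨m, h⟩ else 0

/-- Ideal of maximal minors of the first `r+1` rows. -/
noncomputable def PP (F : Type*) [Field F] (N n r : ℕ) : Ideal (MvPolynomial (Fin N) F) :=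
  Ideal.span {f | ∃ c : Fin (r + 1) → ℕ, (∀ k, c k < n) ∧ f = hk (xs F N) c}

lemma hk_not_mem (F : Type*) [Field F] (N n r : ℕ) (hN : N = n + r + 1) (c : Fin r → ℕ)
    (hc : Function.Injective c) (hcn : ∀ k, c k < n) : hk (xs F N) c ∉ PP F N n r := by
  intro hmem
  let θ : MvPolynomial (Fin N) F →+* Polynomial (Polynomial F) :=
    MvPolynomial.eval₂Hom (Polynomial.C.comp Polynomial.C)
      (fun m => Polynomial.X * Polynomial.C (Polynomial.X ^ ((m : ℕ) ^ 2)))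
  have hθ : ∀ (q : ℕ) (c : Fin q → ℕ), q ≤ r + 1 → (∀ k, c k < n) → θ (hk (xs F N) c) =
      Polynomial.X ^ q * Polynomial.C (hk (fun m => (Polynomial.X : Polynomial F) ^ (m ^ 2)) c) := by
    intro q c hq hc
    rw [hk_map, hk_map, ← hk_smul]
    apply hk_congr
    intro i k
    have h : (i : ℕ) + c k < N := by have := hc k; omega
    simp only [xs, dif_pos h]
    simp [θ]
  have hle : PP F N n r ≤ Ideal.comap θ (Ideal.span {Polynomial.X ^ (r + 1)}) := by
    unfold PP
    rw [Ideal.span_le]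
    rintro f ⟨c, hc, rfl⟩
    rw [SetLike.mem_coe, Ideal.mem_comap, Ideal.mem_span_singleton, hθ _ c le_rfl hc]
    exact Dvd.intro _ rfl
  have h := hle hmem
  rw [Ideal.mem_comap, Ideal.mem_span_singleton, hθ r c (by omega) hcn, pow_succ,
    mul_dvd_mul_iff_left (pow_ne_zero _ Polynomial.X_ne_zero), Polynomial.X_dvd_iff,
    Polynomial.coeff_C_zero] at h
  exact hk_sq_ne c hc h

lemma hk_corner_not_mem (F : Type*) [Field F] (N n r : ℕ) (hN : N = n + r + 1) (hrn : r ≤ n) :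
    hk (xs F N) (Fin.snoc (α := fun _ => ℕ) (fun i : Fin r => (i : ℕ)) n) ∉ PP F N n r := by
  intro hmem
  let σ : MvPolynomial (Fin N) F →+* MvPolynomial (Fin N) F :=
    MvPolynomial.eval₂Hom MvPolynomial.C (fun m => X m + if (m : ℕ) = n + r then 1 else 0)
  have hσ : ∀ m < n + r, σ (xs F N m) = xs F N m := by
    intro m hm
    have h : m < N := by omega
    have h' : m ≠ n + r := by omega
    simp [xs, h, σ, h']
  have hσ' : σ (xs F N (n + r)) = xs F N (n + r) + 1 := by
    have h : n + r < N := by omega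
    simp [xs, h, σ]
  have hle : PP F N n r ≤ Ideal.comap σ (PP F N n r) := by
    conv_lhs => unfold PP
    rw [Ideal.span_le]
    rintro f ⟨c, hc, rfl⟩
    rw [SetLike.mem_coe, Ideal.mem_comap, hk_map, hk_congr _ (xs F N)]
    · exact Ideal.subset_span ⟨c, hc, rfl⟩
    · intro i k
      apply hσ
      have := hc k
      omega
  have h := sub_mem (Ideal.mem_comap.1 (hle hmem)) hmem
  set c : Fin (r + 1) → ℕ := Fin.snoc (α := fun _ => ℕ) (fun i : Fin r => (i : ℕ)) n with hc
  have hcn : ∀ k, c k ≤ n := by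
    intro k
    refine Fin.lastCases ?_ (fun i => ?_) k
    · simp [hc]
    · simp [hc]; omega
  have hsub : σ (hk (xs F N) c) - hk (xs F N) c = hk (xs F N) (fun i : Fin r => (i : ℕ)) := by
    rw [hk_expand (xs F N) 0 c, map_sum, Fin.sum_univ_castSucc, Fin.sum_univ_castSucc]
    simp only [map_mul, map_pow, map_neg, map_one, dd_map]
    have hm : ∀ k : Fin (r + 1), σ (hk (xs F N) (fun i => c (k.succAbove i))) =
        hk (xs F N) (fun i => c (k.succAbove i)) := by
      intro k
      rw [hk_map]
      apply hk_congr
      intro i j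
      apply hσ
      have := hcn (k.succAbove j)
      omega
    simp only [hm]
    have h1 : ∀ i : Fin r, dd (fun m => σ (xs F N m)) (fun i => σ ((0 : Fin r → MvPolynomial (Fin N) F) i)) (c i.castSucc) =
        dd (xs F N) (0 : Fin r → MvPolynomial (Fin N) F) (c i.castSucc) := by
      intro i
      simp only [dd, hc, Fin.snoc_castSucc]
      rw [hσ _ (by omega)]
      simp
    have h2 : dd (fun m => σ (xs F N m)) (fun i => σ ((0 : Fin r → MvPolynomial (Fin N) F) i)) (c (Fin.last r)) =
        dd (xs F N) (0 : Fin r → MvPolynomial (Fin N) F) (c (Fin.last r)) + 1 := by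
      simp only [dd, hc, Fin.snoc_last]
      rw [hσ']
      simp
    rw [Finset.sum_congr rfl fun i _ => by rw [h1 i], h2]
    have h3 : (fun i : Fin r => c ((Fin.last r).succAbove i)) = fun i : Fin r => (i : ℕ) := by
      ext i; simp [hc]
    rw [h3]
    simp [← two_mul]
    ring
  rw [hsub] at h
  exact hk_not_mem F N n r hN _ Fin.val_injective (fun k => by omega) h

lemma I_le_PP (F : Type*) [Field F] (N n r : ℕ) (I : Ideal (MvPolynomial (Fin N) F))
    (hI : I = Ideal.span {f | ∃ c : Fin (r + 2) → ℕ, (∀ k, c k < n) ∧ f = hk (xs F N) c}) :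
    I ≤ PP F N n r := by
  rw [hI, Ideal.span_le]
  rintro f ⟨c, hc, rfl⟩
  rw [SetLike.mem_coe, hk_expand (xs F N) 0 c]
  exact sum_mem fun k _ => Ideal.mul_mem_left _ _
    (Ideal.subset_span ⟨fun i => c (k.succAbove i), fun i => hc _, rfl⟩)

lemma hankel_core (F : Type*) [Field F] (N n r : ℕ) (hN : N = n + r + 1) (hrn : r + 2 ≤ n)
    (I : Ideal (MvPolynomial (Fin N) F))
    (hI : I = Ideal.span {f | ∃ c : Fin (r + 2) → ℕ, (∀ k, c k < n) ∧ f = hk (xs F N) c})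
    (p : Ideal (MvPolynomial (Fin N) F ⧸ I))
    (hp : p = Ideal.map (Ideal.Quotient.mk I) (PP F N n r))
    [hpp : p.IsPrime] (L : Type*) [CommRing L] [IsLocalRing L]
    [Algebra (MvPolynomial (Fin N) F ⧸ I) L] [IsLocalization.AtPrime L p]
    (c : Fin (r + 1) → ℕ) (hc : StrictMono c) (hcn : ∀ k, c k < n)
    (δ : MvPolynomial (Fin N) F ⧸ I)
    (hδ : δ = Ideal.Quotient.mk I (hk (xs F N) c))
    (M : Ideal L)
    (hM : M = Ideal.map (algebraMap _ _) p) :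
    algebraMap _ (L) δ ∈ M ^ (n - c (Fin.last r)) ∧
    algebraMap _ (L) δ ∉ M ^ (n - c (Fin.last r) + 1) := by
  have hIP := I_le_PP F N n r I hI
  let ψ : MvPolynomial (Fin N) F →+* L :=
    (algebraMap _ (L)).comp (Ideal.Quotient.mk I)
  have hunit : ∀ f, f ∉ PP F N n r → IsUnit (ψ f) := by
    intro f hf
    refine (IsLocalization.AtPrime.isUnit_to_map_iff (L) p _).2 ?_
    intro hfp
    apply hf
    rw [hp] at hfp
    have h1 : f ∈ Ideal.comap (Ideal.Quotient.mk I) (Ideal.map (Ideal.Quotient.mk I) (PP F N n r)) :=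
      hfp
    rw [Ideal.comap_map_of_surjective' _ Ideal.Quotient.mk_surjective, Ideal.mk_ker] at h1
    rwa [sup_eq_left.2 hIP] at h1
  have hMax : M = IsLocalRing.maximalIdeal (L) := by
    rw [hM, IsLocalization.AtPrime.map_eq_maximalIdeal p L]
  let x : ℕ → L := fun m => ψ (xs F N m)
  have hψ : ∀ (q : ℕ) (c : Fin q → ℕ), ψ (hk (xs F N) c) = hk x c := by
    intro q c
    rw [hk_map]
  have hΔ : IsUnit (hk x (fun i : Fin r => (i : ℕ))) := by
    rw [← hψ]
    exact hunit _ (hk_not_mem F N n r hN _ Fin.val_injective (fun k => by omega))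
  obtain ⟨e, he⟩ := exists_rec x hΔ
  have hdn : IsUnit (dd x e n) := by
    have h := hunit _ (hk_corner_not_mem F N n r hN (by omega))
    rw [hψ, hk_border x e he] at h
    exact isUnit_of_mul_isUnit_left h
  have h1 : ∀ c : Fin (r + 1) → ℕ, (∀ k, c k < n) → hk x c ∈ M := by
    intro c hc
    rw [← hψ, hM]
    apply Ideal.mem_map_of_mem
    rw [hp]
    exact Ideal.mem_map_of_mem _ (Ideal.subset_span ⟨c, hc, rfl⟩)
  have h2 : ∀ c : Fin (r + 2) → ℕ, (∀ k, c k < n) → hk x c = 0 := by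
    intro c hc
    rw [← hψ]
    have : hk (xs F N) c ∈ I := by
      rw [hI]; exact Ideal.subset_span ⟨c, hc, rfl⟩
    simp only [ψ, RingHom.comp_apply]
    rw [Ideal.Quotient.eq_zero_iff_mem.2 this, map_zero]
  have hmem := dd_mem hrn M x hΔ e he hdn h1 h2
  have hδx : algebraMap _ (L) δ = hk x c := by
    rw [← hψ, hδ]; rfl
  refine ⟨by rw [hδx]; exact hk_mem M x e hmem c hc hcn, ?_⟩
  -- the deformation over the residue field
  let res := IsLocalRing.residue (L)
  let s : ℕ → IsLocalRing.ResidueField (L) := fun m => res (x m)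
  let eK : Fin r → IsLocalRing.ResidueField (L) := fun i => res (e i)
  have hdd : ∀ m, dd s eK m = res (dd x e m) := fun m => (dd_map res x e m).symm
  have hs : ∀ m < n, dd s eK m = 0 := by
    intro m hm
    rw [hdd]
    refine (IsLocalRing.residue_eq_zero_iff _).2 ?_
    rw [← hMax]
    exact Ideal.pow_le_self (by omega) (hmem m hm.le)
  have hy : dd s eK n ≠ 0 := by
    rw [hdd]
    exact (hdn.map res).ne_zero
  have hΔK : hk s (fun i : Fin r => c i.castSucc) ≠ 0 := by
    have : hk s (fun i : Fin r => c i.castSucc) = res (ψ (hk (xs F N) (fun i : Fin r => c i.castSucc))) := by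
      rw [hψ, hk_map]
    rw [this]
    refine ((hunit _ (hk_not_mem F N n r hN _ ?_ (fun k => hcn _))).map res).ne_zero
    exact hc.injective.comp (Fin.castSucc_injective r)
  let z := zz (n + r) s (dd s eK n)
  let φ0 : MvPolynomial (Fin N) F →+* PowerSeries (IsLocalRing.ResidueField (L)) :=
    MvPolynomial.eval₂Hom (PowerSeries.C.comp (res.comp (ψ.comp MvPolynomial.C))) (fun m => z m)
  have hφ0 : ∀ m < N, φ0 (xs F N m) = z m := by
    intro m hm
    simp [φ0, xs, hm]
  have hφk : ∀ (q : ℕ) (c : Fin q → ℕ), q ≤ r + 2 → (∀ k, c k < n) → φ0 (hk (xs F N) c) = hk z c := by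
    intro q c hq hc
    rw [hk_map]
    apply hk_congr
    intro i k
    apply hφ0
    have := hc k
    omega
  have hcc : PowerSeries.constantCoeff.comp φ0 = res.comp ψ := by
    apply MvPolynomial.ringHom_ext
    · intro a
      simp [φ0]
    · intro m
      have hm := m.2
      have hx : xs F N m = X m := by simp [xs]
      rw [← hx, RingHom.comp_apply, hφ0 _ hm]
      exact zz_coeff _ _ _ _ (by omega)
  have hφI : ∀ a ∈ I, φ0 a = 0 := by
    have : I ≤ RingHom.ker φ0 := by
      refine (le_of_eq hI).trans (Ideal.span_le.2 ?_)
      rintro f ⟨c, hc, rfl⟩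
      rw [SetLike.mem_coe, RingHom.mem_ker, hφk _ c le_rfl hc]
      exact zz_hk_zero s eK hs c hc
    exact fun a ha => this ha
  let φ := Ideal.Quotient.lift I φ0 hφI
  have hφc : ∀ a, PowerSeries.constantCoeff (φ a) = res (algebraMap _ _ a) := by
    intro a
    obtain ⟨f, rfl⟩ := Ideal.Quotient.mk_surjective a
    exact RingHom.congr_fun hcc f
  have hφu : ∀ y : p.primeCompl, IsUnit (φ y) := by
    intro y
    rw [PowerSeries.isUnit_iff_constantCoeff, hφc]
    exact (IsLocalization.map_units (L) y).map res
  let Φ : L →+* PowerSeries (IsLocalRing.ResidueField (L)) :=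
    IsLocalization.lift (M := p.primeCompl) hφu
  have hΦ : ∀ a, Φ (algebraMap _ _ a) = φ a := fun a => IsLocalization.lift_eq hφu a
  have hMle : Ideal.map Φ M ≤ Ideal.span {PowerSeries.X} := by
    rw [hM, Ideal.map_map, Ideal.map_le_iff_le_comap]
    intro a ha
    rw [Ideal.mem_comap, Ideal.mem_span_singleton, PowerSeries.X_dvd_iff, RingHom.comp_apply, hΦ,
      hφc]
    refine (IsLocalRing.residue_eq_zero_iff _).2 ?_
    rw [← hMax, hM]
    exact Ideal.mem_map_of_mem _ ha
  intro hcon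
  have h3 := Ideal.mem_map_of_mem Φ hcon
  rw [Ideal.map_pow] at h3
  have h4 := Ideal.pow_right_mono hMle _ h3
  rw [Ideal.span_singleton_pow, Ideal.mem_span_singleton, hΦ] at h4
  have h5 : φ δ = hk z c := by
    rw [hδ, ← hφk _ c (by omega) hcn]; rfl
  rw [h5] at h4
  exact zz_hk_order s eK hs hy c hc hcn hΔK h4

/-- Valuations of maximal minors of the first `t-1` rows of the Hankel matrix in the DVR `R_p`:
for columns `i_1 < ... < i_{t-1}` (here given by a strictly monotone `c`, 0-indexed), the minor
`[1 ... t-1 | i_1 ... i_{t-1}]` has valuation `n+1-i_{t-1}`, expressed by membership in exactly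
the `(n+1-i_{t-1})`-st power of the maximal ideal `pR_p` of the localization `R_p`. -/
theorem hankel_minor_valuation (F : Type*) [Field F] (t n : ℕ) (ht : 2 ≤ t) (htn : t ≤ n)
    (H : Matrix (Fin t) (Fin n) (MvPolynomial (Fin (n + t - 1)) F))
    (hH : ∀ a b, H a b = X ⟨(a : ℕ) + (b : ℕ), by have := a.2; have := b.2; omega⟩)
    (I : Ideal (MvPolynomial (Fin (n + t - 1)) F))
    (hI : I = Ideal.span (Set.range fun g : Fin t → Fin n => (H.submatrix id g).det))
    (p : Ideal (MvPolynomial (Fin (n + t - 1)) F ⧸ I))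
    (hp : p = Ideal.span {x | ∃ g : Fin (t - 1) → Fin n,
      x = Ideal.Quotient.mk I
        ((H.submatrix (fun i : Fin (t - 1) => (⟨i.1, by have := i.2; omega⟩ : Fin t)) g).det)})
    [hpp : p.IsPrime]
    (c : Fin (t - 1) → Fin n) (hc : StrictMono c)
    (δ : MvPolynomial (Fin (n + t - 1)) F ⧸ I)
    (hδ : δ = Ideal.Quotient.mk I
      ((H.submatrix (fun i : Fin (t - 1) => (⟨i.1, by have := i.2; omega⟩ : Fin t)) c).det))
    (M : Ideal (Localization.AtPrime p))
    (hM : M = Ideal.map (algebraMap _ _) p) :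
    algebraMap _ (Localization.AtPrime p) δ ∈ M ^ (n - (c ⟨t - 2, by omega⟩ : ℕ)) ∧
    algebraMap _ (Localization.AtPrime p) δ ∉ M ^ (n - (c ⟨t - 2, by omega⟩ : ℕ) + 1) := by
  obtain ⟨r, rfl⟩ : ∃ r, t = r + 2 := ⟨t - 2, by omega⟩
  have hN : (n + (r + 2) - 1) = n + r + 1 := by omega
  have hHx : ∀ a b, H a b = xs F (n + (r + 2) - 1) ((a : ℕ) + b) := by
    intro a b
    have h : (a : ℕ) + b < (n + (r + 2) - 1) := by have := a.2; have := b.2; omega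
    rw [hH, xs, dif_pos h]
  have hminor : ∀ g : Fin (r + 1) → Fin n,
      (H.submatrix (fun i : Fin (r + 2 - 1) => (⟨i.1, by have := i.2; omega⟩ : Fin (r + 2))) g).det
        = hk (xs F (n + (r + 2) - 1)) (fun k => (g k : ℕ)) := by
    intro g
    unfold hk
    congr 1
    ext1 i k
    exact hHx _ _
  have hI' : I = Ideal.span {f | ∃ c : Fin (r + 2) → ℕ, (∀ k, c k < n) ∧ f = hk (xs F (n + (r + 2) - 1)) c} := by
    rw [hI]
    refine congrArg Ideal.span (Set.ext fun f => ?_)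
    constructor
    · rintro ⟨g, rfl⟩
      refine ⟨fun k => g k, fun k => (g k).2, ?_⟩
      unfold hk
      simp only
      congr 1
      ext1 i k
      exact hHx _ _
    · rintro ⟨c, hc, rfl⟩
      refine ⟨fun k => ⟨c k, hc k⟩, ?_⟩
      unfold hk
      simp only
      congr 1
      ext1 i k
      exact hHx _ _
  have hp' : p = Ideal.map (Ideal.Quotient.mk I) (PP F (n + (r + 2) - 1) n r) := by
    rw [hp, PP, Ideal.map_span]
    refine congrArg Ideal.span (Set.ext fun f => ?_)
    constructor
    · rintro ⟨g, rfl⟩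
      exact ⟨_, ⟨fun k => g k, fun k => (g k).2, rfl⟩, by rw [← hminor g]⟩
    · rintro ⟨_, ⟨c, hc, rfl⟩, rfl⟩
      exact ⟨fun k => ⟨c k, hc k⟩, congrArg _ (hminor (fun k => ⟨c k, hc k⟩)).symm⟩
  have hδ' : δ = Ideal.Quotient.mk I (hk (xs F (n + (r + 2) - 1)) (fun k : Fin (r + 1) => (c k : ℕ))) := by
    rw [hδ, ← hminor c]
  exact hankel_core F (n + (r + 2) - 1) n r hN htn I hI' p hp' (Localization.AtPrime p) (fun k : Fin (r + 1) => (c k : ℕ))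
    (fun a b h => hc h) (fun k => (c k).2) δ hδ' M hM
end

section
/- Let R be the t×n Hankel determinantal ring over a field F (2 ≤ t ≤ n), and for 1 ≤ k ≤ n-t+2 let p^⟨k⟩ be the ideal of R generated by the (t-1)×(t-1) minors of the (t-1)×(n-k+1) Hankel submatrix in x_1,...,x_{n-k+t-1}. Then (p^⟨k⟩)^2 ⊆ p^⟨k+1⟩ for 1 ≤ k ≤ n-t+1; consequently the radical of the principal ideal generated by Δ = [1 ... t-1 | 1 ... t-1] equals p = p^⟨1⟩. -/
set_option synthInstance.maxHeartbeats 1000000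
set_option maxHeartbeats 1000000
open MvPolynomial Matrix

lemma hk_det_mul_zero {R q : Type*} [CommRing R] [Fintype q] {s : ℕ}
    (M : Matrix q (Fin s) R) (h : ∀ ρ : Fin s → q, (M.submatrix ρ id).det = 0)
    (C : Matrix (Fin s) q R) : (C * M).det = 0 := by
  classical
  have e : (C * M).det = Matrix.detRowAlternating (fun i => ∑ k, C i k • M k) := by
    change _ = Matrix.det _
    congr 1
    ext i j
    simp [Matrix.mul_apply, Finset.sum_apply]
  rw [e, ← AlternatingMap.coe_multilinearMap, MultilinearMap.map_sum]
  refine Finset.sum_eq_zero fun ρ _ => ?_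
  rw [MultilinearMap.map_smul_univ (Matrix.detRowAlternating (R := R) (n := Fin s)).toMultilinearMap
    (fun i => C i (ρ i)) (fun i => M (ρ i))]
  have := h ρ
  have h2 : (Matrix.detRowAlternating (R := R) (n := Fin s)).toMultilinearMap (fun i => M (ρ i)) = 0 := this
  rw [h2, smul_zero]

lemma hk_det_span_zero {R q : Type*} [CommRing R] [Fintype q] {s : ℕ}
    (M : Matrix q (Fin s) R) (h : ∀ ρ : Fin s → q, (M.submatrix ρ id).det = 0)
    (w : Matrix (Fin s) (Fin s) R) (hw : ∀ i, w i ∈ Submodule.span R (Set.range (fun k => M k))) :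
    w.det = 0 := by
  simp_rw [Submodule.mem_span_range_iff_exists_fun] at hw
  choose c hc using hw
  have : w = (Matrix.of c) * M := by
    ext i j
    rw [← hc i]
    simp [Matrix.mul_apply, Finset.sum_apply]
  rw [this]
  exact hk_det_mul_zero M h _

lemma hk_rank_one {R q : Type*} [CommRing R] {s : ℕ} (M : Matrix (Fin (s+1)) q R)
    (h : ∀ g : Fin (s+1) → q, (M.submatrix id g).det = 0) (A B : Fin s → q) (i i' : Fin (s+1)) :
    (M.submatrix i.succAbove A).det * (M.submatrix i'.succAbove B).det
      = (M.submatrix i'.succAbove A).det * (M.submatrix i.succAbove B).det := by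
  set v : Fin (s+1) → R := fun i => (-1)^(i:ℕ) * (M.submatrix i.succAbove A).det with hv
  have hv0 : ∀ b, ∑ i, v i * M i b = 0 := by
    intro b
    have := h (Fin.cons b A : Fin (s+1) → q)
    rw [Matrix.det_succ_column_zero] at this
    rw [← this]
    refine Finset.sum_congr rfl fun i _ => ?_
    simp only [hv, Matrix.submatrix_apply, Fin.cons_zero, id, Matrix.submatrix_submatrix]
    have : (Fin.cons b A : Fin (s+1) → q) ∘ Fin.succ = A := by ext; simp
    rw [this]
    simp only [Function.id_comp]
    ring
  set Y : Matrix (Fin (s+1)) (Fin (s+1)) R :=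
    Matrix.of fun k l => (Fin.cons (if k = i' then 1 else 0) (fun l => M k (B l)) : Fin (s+1) → R) l with hY
  have hsub : ∀ k : Fin (s+1), Y.submatrix k.succAbove Fin.succ = M.submatrix k.succAbove B := by
    intro k; ext a b; simp [hY]
  have hdet : Y.det = (-1)^(i':ℕ) * (M.submatrix i'.succAbove B).det := by
    rw [Matrix.det_succ_column_zero, Finset.sum_eq_single i']
    · rw [hsub]; simp [hY]
    · intro b _ hb; simp [hY, hb]
    · simp
  have hvY : v ᵥ* Y = fun l => if l = 0 then v i' else 0 := by
    ext l
    refine Fin.cases ?_ (fun l => ?_) l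
    · simp [Matrix.vecMul, dotProduct, hY]
    · simpa [Matrix.vecMul, dotProduct, hY] using hv0 (B l)
  have key : (v ᵥ* Y) ᵥ* Y.adjugate = Y.det • v := by
    rw [Matrix.vecMul_vecMul, Matrix.mul_adjugate]; simp [Matrix.vecMul_smul]
  have k2 := congrFun key i
  rw [hvY] at k2
  simp only [Matrix.vecMul, dotProduct, ite_mul, zero_mul, Finset.sum_ite_eq', Finset.mem_univ, if_true,
    Matrix.adjugate_fin_succ_eq_det_submatrix, Pi.smul_apply, smul_eq_mul, hdet, Fin.succAbove_zero] at k2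
  simp only [Finset.mem_univ, if_true, hsub, hv, Fin.succAbove_zero, Fin.val_zero, add_zero] at k2
  have e1 : ((-1:R)^(i:ℕ))*(-1)^(i:ℕ) = 1 := by rw [← mul_pow]; simp
  have e2 : ((-1:R)^(i':ℕ))*(-1)^(i':ℕ) = 1 := by rw [← mul_pow]; simp
  linear_combination (-(-1:R)^(i:ℕ) * (-1)^(i':ℕ)) * k2 + (-(M.submatrix i.succAbove A).det * (M.submatrix i'.succAbove B).det
      + (M.submatrix i'.succAbove A).det * (M.submatrix i.succAbove B).det) * (e1 * ((-1:R)^(i':ℕ))*(-1)^(i':ℕ) + e2)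

/-- Gruson-Peskine type lemma. -/
lemma hk_shape {S : Type*} [CommRing S] (x : ℕ → S) (s q : ℕ) (hq : s ≤ q)
    (h : ∀ (ρ : Fin s → Fin (s+1)) (a : Fin s → Fin q),
      (Matrix.of fun i j : Fin s => x ((ρ i : ℕ) + (a j : ℕ))).det = 0)
    (b : Fin s → ℕ) (hb : ∀ j, b j < q + 1) :
    (Matrix.of fun i j : Fin s => x ((i : ℕ) + b j)).det = 0 := by
  classical
  -- rows
  set hh : ℕ → Fin s → Polynomial S := fun j i => Polynomial.C (x ((i:ℕ) + j)) with hhd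
  set gg : ℕ → Fin s → Polynomial S := fun j => hh j + (Polynomial.X : Polynomial S) • hh (j+1) with hgd
  set G : Matrix (Fin q) (Fin s) (Polynomial S) := Matrix.of fun j => gg j with hG
  set GO : Matrix (Option (Fin q)) (Fin s) (Polynomial S) :=
    Matrix.of fun o => o.elim (hh q) (fun j => gg j) with hGO
  have c1 : ∀ ρ : Fin s → Fin q, (G.submatrix ρ id).det = 0 := by
    intro a
    rw [← Matrix.det_transpose]
    -- bidiagonal
    set M : Matrix (Fin (s+1)) (Fin s) (Polynomial S) :=
      Matrix.of fun i j => Polynomial.C (x ((i:ℕ) + (a j : ℕ))) with hM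
    refine hk_det_span_zero M ?_ _ ?_
    · intro ρ
      have := h ρ a
      have h2 := congrArg (Polynomial.C (R := S)) this
      rw [RingHom.map_det, map_zero] at h2
      rw [← h2]
      rfl
    · intro i
      have : (G.submatrix a id)ᵀ i = M i.castSucc + (Polynomial.X : Polynomial S) • M i.succ := by
        ext1 j
        simp [hG, hgd, hhd, hM, add_assoc, add_comm 1]
      rw [this]
      exact Submodule.add_mem _ (Submodule.subset_span ⟨_, rfl⟩)
        (Submodule.smul_mem _ _ (Submodule.subset_span ⟨_, rfl⟩))
  have hz : ∀ b, b ≤ q → (Polynomial.X : Polynomial S)^b • hh b - ((-1 : Polynomial S)^b) • hh 0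
      ∈ Submodule.span (Polynomial S) (Set.range (fun k => G k)) := by
    intro b
    induction b with
    | zero => intro _; simp
    | succ b ih =>
      intro hbq
      have h1 := ih (by omega)
      have h2 : gg b ∈ Submodule.span (Polynomial S) (Set.range (fun k => G k)) :=
        Submodule.subset_span ⟨⟨b, by omega⟩, rfl⟩
      have h3 := Submodule.sub_mem _ (Submodule.smul_mem _ ((Polynomial.X : Polynomial S)^b) h2) h1
      convert h3 using 1
      simp only [hgd]
      module
  have c2 : ∀ ρ : Fin s → Option (Fin q), (GO.submatrix ρ id).det = 0 := by
    intro ρ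
    by_cases hn : ∃ i0, ρ i0 = none
    · obtain ⟨i0, hi0⟩ := hn
      by_cases hn2 : ∃ i1, i1 ≠ i0 ∧ ρ i1 = none
      · obtain ⟨i1, hi1, hi1'⟩ := hn2
        refine Matrix.det_zero_of_row_eq hi1 ?_
        ext1 j
        simp [hi0, hi1']
      · push Not at hn2
        have hex : ∀ i, ∃ k : Fin q, i ≠ i0 → ρ i = some k := by
          intro i
          by_cases hi : i = i0
          · exact ⟨⟨0, by have := i.2; omega⟩, fun h => absurd hi h⟩
          · obtain ⟨k, hk⟩ := Option.ne_none_iff_exists'.mp (hn2 i hi)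
            exact ⟨k, fun _ => hk⟩
        choose k hk using hex
        set W := GO.submatrix ρ id with hW
        have hWi : ∀ i, i ≠ i0 → W i = gg (k i) := by
          intro i hi
          ext1 j
          simp [hW, hk i hi, hGO]
        have hW0 : W = W.updateRow i0 (hh q) := by
          ext i j
          by_cases hi : i = i0
          · subst hi
            simp [hW, hi0, hGO]
          · simp [Matrix.updateRow_ne hi]
        obtain ⟨v, hv, hve⟩ : ∃ v ∈ Submodule.span (Polynomial S) (Set.range (fun k => G k)),
          (Polynomial.X : Polynomial S)^q • hh q = ((-1 : Polynomial S)^q) • hh 0 + v :=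
          ⟨_, hz q le_rfl, by abel⟩
        have e1 : (Polynomial.X : Polynomial S)^q * W.det
            = (-1)^q * (W.updateRow i0 (hh 0)).det := by
          rw [hW0, ← Matrix.det_updateRow_smul, hve, Matrix.det_updateRow_add, Matrix.det_updateRow_smul,
            ← hW0]
          have : (W.updateRow i0 v).det = 0 := by
            refine hk_det_span_zero G c1 _ fun i => ?_
            by_cases hi : i = i0
            · subst hi
              rw [Matrix.updateRow_self]
              exact hv
            · rw [Matrix.updateRow_ne hi, hWi i hi]
              exact Submodule.subset_span ⟨k i, rfl⟩
          rw [this, add_zero]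
        set A : Matrix (Fin s) (Fin s) S := Matrix.of fun i j =>
          if i = i0 then 0 else x ((j:ℕ) + (k i + 1)) with hA
        set B : Matrix (Fin s) (Fin s) S := Matrix.of fun i j =>
          if i = i0 then x (j:ℕ) else x ((j:ℕ) + k i) with hB
        have e2 : W.updateRow i0 (hh 0) = (Polynomial.X : Polynomial S) • A.map Polynomial.C + B.map Polynomial.C := by
          ext1 i j
          by_cases hi : i = i0
          · subst hi
            simp [hA, hB, hhd]
          · rw [Matrix.updateRow_ne hi, hWi i hi]
            simp [hA, hB, hhd, hgd, hi, add_comm]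
        have hdeg := Polynomial.natDegree_det_X_add_C_le A B
        have hco := Polynomial.coeff_det_X_add_C_card A B
        have hA0 : A.det = 0 := Matrix.det_eq_zero_of_row_eq_zero i0 (by intro j; simp [hA])
        rw [hA0] at hco
        rw [← e2, Fintype.card_fin] at hdeg hco
        have hco' : ∀ d, q ≤ d → (W.updateRow i0 (hh 0)).det.coeff d = 0 := by
          intro d hd
          rcases Nat.eq_or_lt_of_le (hq.trans hd) with h1 | h1
          · rw [← h1]; exact hco
          · exact Polynomial.coeff_eq_zero_of_natDegree_lt (by omega)
        ext d
        have e3 := congrArg (fun p => Polynomial.coeff p (d + q)) e1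
        simp only [Polynomial.coeff_X_pow_mul] at e3
        rw [e3]
        have : ((-1 : Polynomial S)^q) = Polynomial.C ((-1)^q) := by simp
        rw [this, Polynomial.coeff_C_mul, hco' _ (by omega)]
        simp
    · push Not at hn
      have : ∀ i, ∃ k, ρ i = some k := fun i => Option.ne_none_iff_exists'.mp (hn i)
      choose k hk using this
      rw [← c1 k]
      congr 1
      ext1 i j
      simp [hk, hGO, hG]
  have hspan : ∀ d b, b + d = q → hh b ∈ Submodule.span (Polynomial S) (Set.range (fun k => GO k)) := by
    intro d
    induction d with
    | zero =>
      intro b hb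
      obtain rfl : b = q := by omega
      exact Submodule.subset_span ⟨none, rfl⟩
    | succ d ih =>
      intro b hb
      have h1 := ih (b+1) (by omega)
      have h2 : gg b ∈ Submodule.span (Polynomial S) (Set.range (fun k => GO k)) :=
        Submodule.subset_span ⟨some ⟨b, by omega⟩, rfl⟩
      have h3 := Submodule.sub_mem _ h2 (Submodule.smul_mem _ (Polynomial.X : Polynomial S) h1)
      convert h3 using 1
      simp [hgd]
  have fin := hk_det_span_zero GO c2 (fun j => hh (b j)) (fun j => hspan (q - b j) (b j) (by have := hb j; omega))
  apply Polynomial.C_injective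
  rw [RingHom.map_det, map_zero, ← Matrix.det_transpose, ← fin]
  rfl

lemma hk_sq {R : Type*} [CommRing R] (x : ℕ → R) (s q : ℕ) (hq : s ≤ q)
    (h : ∀ g : Fin (s+1) → Fin (q+1), (Matrix.of fun i j : Fin (s+1) => x ((i:ℕ) + (g j : ℕ))).det = 0)
    (P : Ideal R) (hP : ∀ g : Fin s → Fin q, (Matrix.of fun i j : Fin s => x ((i:ℕ) + (g j : ℕ))).det ∈ P)
    (A B : Fin s → Fin (q+1)) :
    (Matrix.of fun i j : Fin s => x ((i:ℕ) + (A j : ℕ))).det *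
    (Matrix.of fun i j : Fin s => x ((i:ℕ) + (B j : ℕ))).det ∈ P := by
  classical
  set J : Ideal R := Submodule.comap (LinearMap.mulRight R (Matrix.of fun i j : Fin s => x ((i:ℕ) + (B j : ℕ))).det) P with hJ
  have memJ : ∀ y, y ∈ J ↔ y * (Matrix.of fun i j : Fin s => x ((i:ℕ) + (B j : ℕ))).det ∈ P := fun y => Iff.rfl
  rw [← memJ, ← Ideal.Quotient.eq_zero_iff_mem]
  have key := hk_shape (fun k => Ideal.Quotient.mk J (x k)) s q hq ?_ (fun j => A j) (fun j => (A j).2)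
  · rw [RingHom.map_det, ← key]; rfl
  · intro ρ a
    have e : (Matrix.of fun i j : Fin s => Ideal.Quotient.mk J (x ((ρ i : ℕ) + (a j : ℕ)))).det
      = Ideal.Quotient.mk J (Matrix.of fun i j : Fin s => x ((ρ i : ℕ) + (a j : ℕ))).det := by
      rw [RingHom.map_det]; rfl
    rw [e, Ideal.Quotient.eq_zero_iff_mem, memJ]
    by_cases hρ : Function.Injective ρ
    · obtain ⟨i, hi⟩ : ∃ i, i ∉ Set.range ρ := by
        by_contra hcon
        push Not at hcon
        have := Fintype.card_le_of_surjective ρ hcon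
        simp at this
      have hσ : ∀ j, ∃ k, i.succAbove k = ρ j := fun j => Fin.exists_succAbove_eq (fun h => hi ⟨j, h⟩)
      choose σ hσ using hσ
      have hσi : Function.Injective σ := by
        intro a b hab
        apply hρ
        rw [← hσ, ← hσ, hab]
      set σe : Equiv.Perm (Fin s) := Equiv.ofBijective σ (Finite.injective_iff_bijective.mp hσi) with hσe
      set M : Matrix (Fin (s+1)) (Fin (q+1)) R := Matrix.of fun i j => x ((i:ℕ) + (j:ℕ)) with hM
      have r1 := hk_rank_one M h (fun j => (a j).castSucc) B i (Fin.last s)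
      have r2 : (Matrix.of fun i j : Fin s => x ((ρ i : ℕ) + (a j : ℕ)))
         = (M.submatrix i.succAbove (fun j => (a j).castSucc)).submatrix σe id := by
        ext i j
        simp [hM, hσe, hσ]
      have r3 : (Matrix.of fun i j : Fin s => x ((i:ℕ) + (B j : ℕ))) = M.submatrix (Fin.last s).succAbove B := by
        ext i j
        simp [hM]
      have r4 : (Matrix.of fun i j : Fin s => x ((i:ℕ) + (a j : ℕ)))
          = M.submatrix (Fin.last s).succAbove (fun j => (a j).castSucc) := by
        ext i j
        simp [hM]
      rw [r2, Matrix.det_permute, mul_assoc, r3, r1, ← r4]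
      exact Ideal.mul_mem_left _ _ (Ideal.mul_mem_right _ _ (hP a))
    · have : (Matrix.of fun i j : Fin s => x ((ρ i : ℕ) + (a j : ℕ))).det = 0 := by
        simp only [Function.Injective] at hρ
        push Not at hρ
        obtain ⟨i, j, hij, hne⟩ := hρ
        exact Matrix.det_zero_of_row_eq hne (by ext1 k; simp [hij])
      rw [this, zero_mul]
      exact P.zero_mem

/-- Monomials whose support contains no `s` indices below `L` with gaps at least two. -/
def hkStd (N L s : ℕ) (m : Fin N →₀ ℕ) : Prop :=
  ¬ ∃ a : Fin s → Fin N, (∀ i j, i < j → (a i : ℕ) + 2 ≤ a j) ∧ (∀ i, (a i : ℕ) < L) ∧ ∀ i, m (a i) ≠ 0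

/-- Points which are, in the coordinates below `L`, on the `r`-secant variety. -/
def hkV {K : Type*} [Field K] (N L r : ℕ) (x : Fin N → K) : Prop :=
  ∃ c u : Fin r → K, (∀ i, u i ≠ 0) ∧ ∀ j : Fin N, (j : ℕ) < L → x j = ∑ i, c i * u i ^ (j : ℕ)

lemma hk_poly_zero {K : Type*} [Field K] [Infinite K] (p : Polynomial K) (c : K)
    (h : ∀ x, x ≠ c → p.eval x = 0) : p = 0 := by
  apply Polynomial.eq_zero_of_infinite_isRoot
  refine Set.Infinite.mono ?_ (Set.Finite.infinite_compl (Set.finite_singleton c))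
  intro x hx
  exact h x hx

lemma hk_indep_s11 {K : Type*} [Field K] [Infinite K] (N : ℕ) : ∀ (L r : ℕ) (f : MvPolynomial (Fin N) K),
    (∀ m ∈ f.support, hkStd N L (r+1) m) → (∀ x, hkV N L r x → eval x f = 0) → f = 0 := by
  induction N using Nat.strong_induction_on with
  | _ N ih =>
  intro L r f hstd hvan
  rcases N with _ | N
  · refine MvPolynomial.funext fun x => ?_
    rw [hvan x ⟨0, 1, by simp, fun j => j.elim0⟩, map_zero]
  rcases L with _ | L
  · refine MvPolynomial.funext fun x => ?_
    rw [hvan x ⟨0, 1, by simp, fun j hj => absurd hj (by omega)⟩, map_zero]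
  by_contra hf
  set p := finSuccEquiv K N f with hp
  have hp0 : p ≠ 0 := by
    rw [hp]; simpa using hf
  set a := p.natDegree with ha
  have hg0 : p.coeff a ≠ 0 := by
    rw [ha]; simpa using hp0
  apply hg0
  rcases Nat.eq_zero_or_pos a with ha0 | hapos
  · -- no x_0
    have hpC : p = Polynomial.C (p.coeff a) := by
      rw [ha0]; exact Polynomial.eq_C_of_natDegree_eq_zero (by omega)
    refine ih N (by omega) L r _ ?_ ?_
    · intro m hm
      rw [hp, mem_support_coeff_finSuccEquiv] at hm
      have := hstd _ hm
      intro ⟨b, hb1, hb2, hb3⟩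
      refine this ⟨fun i => (b i).succ, ?_, ?_, ?_⟩
      · intro i j hij
        have := hb1 i j hij
        simp only [Fin.val_succ]; omega
      · intro i
        have := hb2 i
        simp only [Fin.val_succ]; omega
      · intro i
        simpa using hb3 i
    · rintro y ⟨c, u, hu, hy⟩
      have h1 := hvan (Fin.cons (∑ i, c i / u i) y) ⟨fun i => c i / u i, u, hu, ?_⟩
      · rw [eval_eq_eval_mv_eval', ← hp, hpC] at h1
        simpa using h1
      · intro j
        refine Fin.cases ?_ (fun j => ?_) j
        · simp
        · intro hj
          simp only [Fin.cons_succ, Fin.val_succ] at hj ⊢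
          rw [hy j (by omega)]
          refine Finset.sum_congr rfl fun i _ => ?_
          rw [div_mul_eq_mul_div, eq_div_iff (hu i)]
          ring
  · rcases r with _ | r
    · exfalso
      obtain ⟨m, hm⟩ := MvPolynomial.support_nonempty.mpr hg0
      rw [hp, mem_support_coeff_finSuccEquiv] at hm
      refine hstd _ hm ⟨fun _ => 0, ?_, ?_, ?_⟩
      · intro i j hij; exact absurd hij (by have := i.2; have := j.2; simp only [Fin.lt_def]; omega)
      · intro i; simp
      · intro i; simp; omega
    rcases N with _ | M
    · exfalso
      apply hf
      refine MvPolynomial.funext fun x => ?_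
      rw [hvan x ⟨fun i => if i = 0 then x 0 else 0, 1, by simp, fun j _ => ?_⟩, map_zero]
      obtain rfl : j = 0 := by ext; have := j.2; simp only [Fin.val_zero]; omega
      simp
    set g := p.coeff a with hg
    have hgz : finSuccEquiv K M g = 0 := by
      ext1 b
      rw [Polynomial.coeff_zero]
      refine ih M (by omega) (L - 1) r _ ?_ ?_
      · intro m hm
        rw [mem_support_coeff_finSuccEquiv, hg, hp, mem_support_coeff_finSuccEquiv] at hm
        have := hstd _ hm
        intro ⟨b', hb1, hb2, hb3⟩
        refine this ⟨Fin.cons 0 fun i => (b' i).succ.succ, ?_, ?_, ?_⟩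
        · intro i j
          refine Fin.cases ?_ (fun i => ?_) i <;> refine Fin.cases ?_ (fun j => ?_) j
          · simp
          · simp
          · simp
          · intro hij
            have := hb1 i j (by simpa using hij)
            simp only [Fin.cons_succ, Fin.val_succ]; omega
        · intro i
          refine Fin.cases ?_ (fun i => ?_) i
          · simp
          · have := hb2 i
            simp only [Fin.cons_succ, Fin.val_succ]; omega
        · intro i
          refine Fin.cases ?_ (fun i => ?_) i
          · simp; omega
          · simpa using hb3 i
      · rintro y ⟨c, u, hu, hy⟩
        set c' : Fin r → K := fun i => c i / u i ^ 2 with hc'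
        set y0 := ∑ i, c' i with hy0
        set y1 := ∑ i, c' i * u i with hy1
        suffices hs : Polynomial.map (eval y) (finSuccEquiv K M g) = 0 by
          have := congrArg (fun P => Polynomial.coeff P b) hs
          simpa using this
        refine hk_poly_zero _ y1 fun v hv => ?_
        rw [← eval_eq_eval_mv_eval']
        set w := v - y1 with hw
        have hw0 : w ≠ 0 := sub_ne_zero.mpr hv
        set Z : Fin (M+1) → Polynomial K := Fin.cons (Polynomial.C v)
          (fun j => Polynomial.C (y j) + Polynomial.C (w ^ ((j:ℕ)+2)) * Polynomial.X ^ ((j:ℕ)+1)) with hZ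
        set Φ : Polynomial K := ∑ k ∈ Finset.range (a+1),
          Polynomial.X ^ (a - k) * (1 + Polynomial.C y0 * Polynomial.X) ^ k * aeval Z (p.coeff k) with hΦ
        have hev : ∀ (σ : K) (q : MvPolynomial (Fin (M+1)) K),
            Polynomial.eval σ (aeval Z q) = eval (fun j => Polynomial.eval σ (Z j)) q := by
          intro σ q
          rw [← Polynomial.coe_evalRingHom, MvPolynomial.aeval_def, MvPolynomial.hom_eval₂]
          have : (Polynomial.evalRingHom σ).comp (algebraMap K (Polynomial K)) = RingHom.id K := by
            ext; simp
          rw [this]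
          rfl
        have hΦ0 : Φ = 0 := by
          refine hk_poly_zero _ 0 fun σ hσ => ?_
          have hv1 := hvan (Fin.cons (σ⁻¹ + y0) (fun j => Polynomial.eval σ (Z j)))
            ⟨Fin.cons σ⁻¹ c', Fin.cons (w * σ) u, ?_, ?_⟩
          · rw [eval_eq_eval_mv_eval', ← hp, Polynomial.eval_map, Polynomial.eval₂_eq_sum_range, ← ha] at hv1
            rw [hΦ, Polynomial.eval_finsetSum]
            have : σ ^ a * 0 = (0:K) := mul_zero _
            rw [← this, ← hv1, Finset.mul_sum]
            refine Finset.sum_congr rfl fun k hk => ?_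
            have hka : k ≤ a := by simpa [Nat.lt_succ_iff] using hk
            simp only [Polynomial.eval_mul, Polynomial.eval_pow, Polynomial.eval_add, Polynomial.eval_X,
              Polynomial.eval_C, Polynomial.eval_one, hev]
            have e1 : (1 + y0 * σ) = σ * (σ⁻¹ + y0) := by field_simp
            have e2 : σ ^ a = σ ^ (a - k) * σ ^ k := by rw [← pow_add]; congr 1; omega
            rw [e1, e2, mul_pow]
            ring
          · intro i
            refine Fin.cases ?_ (fun i => ?_) i
            · simpa using ⟨hw0, hσ⟩
            · simpa using hu i
          · intro j
            refine Fin.cases ?_ (fun j => ?_) j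
            · intro _
              simp [Fin.sum_univ_succ, hy0]
            · refine Fin.cases ?_ (fun j => ?_) j
              · intro _
                simp only [Fin.sum_univ_succ, Fin.cons_succ, Fin.cons_zero, hZ, Polynomial.eval_C]
                simp only [Fin.val_succ, Fin.val_zero, zero_add, pow_one, ← hy1]
                rw [hw]
                field_simp
                ring
              · intro hj
                simp only [Fin.val_succ] at hj
                simp only [Fin.sum_univ_succ, Fin.cons_succ, Fin.cons_zero, hZ, Fin.val_succ,
                  Polynomial.eval_add, Polynomial.eval_mul, Polynomial.eval_C, Polynomial.eval_pow,
                  Polynomial.eval_X]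
                rw [hy j (by omega), add_comm]
                congr 1
                · rw [inv_mul_eq_div, eq_div_iff hσ]; ring
                · refine Finset.sum_congr rfl fun i _ => ?_
                  simp only [hc']
                  rw [div_mul_eq_mul_div, eq_div_iff (pow_ne_zero 2 (hu i))]
                  ring
        have h0 : Polynomial.eval 0 Φ = 0 := by rw [hΦ0]; simp
        rw [hΦ, Polynomial.eval_finsetSum, Finset.sum_eq_single a] at h0
        · simp only [Polynomial.eval_mul, Polynomial.eval_pow, Polynomial.eval_add, Polynomial.eval_X,
              Polynomial.eval_C, Polynomial.eval_one, hev, mul_zero, add_zero, one_pow, Nat.sub_self, pow_zero,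
              one_mul] at h0
          rw [← h0]
          congr 2
          ext j
          refine Fin.cases ?_ (fun j => ?_) j <;> simp [hZ]
        · intro k hk hka
          have : a - k ≠ 0 := by
            have := Finset.mem_range.mp hk
            omega
          simp [this]
        · simp
    simpa using hgz

lemma hk_weight_lt {s : ℕ} (g : Fin s → ℕ) (hg : StrictMono g) (σ : Equiv.Perm (Fin s)) (hσ : σ ≠ 1) :
    ∑ i, ((σ i : ℕ) + g i) ^ 2 < ∑ i : Fin s, ((i : ℕ) + g i) ^ 2 := by
  have hmono : Monovary (fun i : Fin s => (i : ℕ)) g := by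
    intro i j hij
    have := hg.lt_iff_lt.mp hij
    exact le_of_lt this
  have h1 : ∑ i, ((σ i : ℕ)) * g i < ∑ i : Fin s, (i : ℕ) * g i := by
    have := (Monovary.sum_comp_perm_mul_lt_sum_mul_iff (σ := σ) hmono).mpr ?_
    · exact this
    · intro hm
      apply hσ
      have hmon : Monotone σ := by
        intro i j hij
        rcases hij.lt_or_eq with h | h
        · exact hm (hg h)
        · rw [h]
      have hsm : StrictMono σ := hmon.strictMono_of_injective σ.injective
      ext i
      have := DFunLike.congr_fun (Subsingleton.elim (hsm.orderIsoOfSurjective σ σ.surjective)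
        (OrderIso.refl (Fin s))) i
      have h3 : σ i = i := this
      simp [h3]
  have h2 : ∑ i, ((σ i : ℕ)) ^ 2 = ∑ i : Fin s, (i : ℕ) ^ 2 :=
    Equiv.sum_comp σ (fun i : Fin s => (i:ℕ)^2)
  have e : ∀ τ : Equiv.Perm (Fin s), ∑ i, ((τ i : ℕ) + g i) ^ 2
      = ∑ i, ((τ i : ℕ)) ^ 2 + 2 * ∑ i, ((τ i : ℕ)) * g i + ∑ i, g i ^ 2 := by
    intro τ
    rw [Finset.mul_sum, ← Finset.sum_add_distrib, ← Finset.sum_add_distrib]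
    exact Finset.sum_congr rfl fun i _ => by ring
  have e1 := e 1
  simp only [Equiv.Perm.coe_one, id] at e1
  rw [e σ, e1, h2]
  omega

/-- The variables, as a sequence. -/
noncomputable def hkX (F : Type*) [Field F] (N : ℕ) (k : ℕ) : MvPolynomial (Fin N) F :=
  if h : k < N then X ⟨k, h⟩ else 0

lemma hk_span_s11 (F : Type*) [Field F] (N n r : ℕ) (hN : n + r ≤ N) (Q : Ideal (MvPolynomial (Fin N) F))
    (hQ : ∀ g : Fin (r+1) → Fin n,
      (Matrix.of fun i j : Fin (r+1) => hkX F N ((i:ℕ) + (g j:ℕ))).det ∈ Q) (d : ℕ) :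
    ∀ m : Fin N →₀ ℕ, Finsupp.weight (fun j : Fin N => (j:ℕ)^2) m = d →
      monomial m (1:F) ∈ Q.restrictScalars F ⊔ restrictSupport F {m | hkStd N (n + r) (r+1) m} := by
  induction d using Nat.strong_induction_on with
  | _ d ih =>
  intro m hm
  by_cases hs : hkStd N (n+r) (r+1) m
  · refine Submodule.mem_sup_right ?_
    rw [mem_restrictSupport_iff]
    intro μ hμ
    have := support_monomial_subset hμ
    simp only [Finset.mem_singleton] at this
    subst this
    exact hs
  · simp only [hkStd, not_not] at hs
    obtain ⟨a, ha1, ha2, ha3⟩ := hs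
    have hmain : StrictMono (fun i : Fin (r+1) => (a i : ℤ) - (i:ℕ)) := by
      rw [Fin.strictMono_iff_lt_succ]
      intro i
      have := ha1 i.castSucc i.succ (Fin.castSucc_lt_succ)
      simp only [Fin.val_succ, Fin.val_castSucc]
      push_cast
      omega
    have hge : ∀ i : Fin (r+1), (i:ℕ) ≤ a i := by
      intro i
      have := hmain.monotone (Fin.zero_le i)
      simp only [Fin.val_zero] at this
      omega
    have hlt : ∀ i : Fin (r+1), (a i : ℕ) - i < n := by
      intro i
      have := hmain.monotone (Fin.le_last i)
      have h2 := ha2 (Fin.last r)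
      simp only [Fin.val_last] at this
      have := hge i
      omega
    set g : Fin (r+1) → Fin n := fun i => ⟨a i - i, hlt i⟩ with hg
    have hgm : StrictMono (fun i => (g i : ℕ)) := by
      intro i j hij
      have := hmain hij
      simp only [hg] at this ⊢
      have := hge i
      have := hge j
      omega
    have hbd : ∀ (i j : Fin (r+1)), (i:ℕ) + (g j : ℕ) < N := by
      intro i j
      have := i.2
      have := (g j).2
      omega
    have hinj : Function.Injective a := by
      intro i j hij
      by_contra hne
      rcases lt_or_gt_of_ne hne with h | h
      · have := ha1 _ _ h; rw [hij] at this; omega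
      · have := ha1 _ _ h; rw [hij] at this; omega
    set E : Equiv.Perm (Fin (r+1)) → (Fin N →₀ ℕ) := fun σ =>
      ∑ i, Finsupp.single ⟨(σ i : ℕ) + (g i : ℕ), hbd _ _⟩ 1 with hE
    have hE1 : E 1 = ∑ i, Finsupp.single (a i) 1 := by
      simp only [hE]
      refine Finset.sum_congr rfl fun i _ => ?_
      congr 1
      ext
      have := hge i
      simp [hg]
      omega
    have hle : E 1 ≤ m := by
      rw [hE1]
      intro k
      rw [Finsupp.finsetSum_apply]
      by_cases hk : ∃ i, a i = k
      · obtain ⟨i, rfl⟩ := hk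
        rw [Finset.sum_eq_single i]
        · have := ha3 i
          simp
          omega
        · intro j _ hj
          rw [Finsupp.single_apply, if_neg]
          intro h; exact hj (hinj h)
        · simp
      · push Not at hk
        rw [Finset.sum_eq_zero]
        · exact Nat.zero_le _
        · intro i _
          rw [Finsupp.single_apply, if_neg (hk i)]
    obtain ⟨m', hm'⟩ := exists_add_of_le hle
    have hprod : ∀ σ : Equiv.Perm (Fin (r+1)), ∏ i, (Matrix.of fun i j : Fin (r+1) => hkX F N ((i:ℕ) + (g j:ℕ))) (σ i) i
        = monomial (E σ) (1:F) := by
      intro σ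
      simp only [hE, Matrix.of_apply]
      rw [monomial_sum_one]
      refine Finset.prod_congr rfl fun i _ => ?_
      rw [hkX, dif_pos (hbd _ _)]
      rfl
    have hdet := Matrix.det_apply (Matrix.of fun i j : Fin (r+1) => hkX F N ((i:ℕ) + (g j:ℕ)))
    simp_rw [hprod] at hdet
    rw [← Finset.add_sum_erase _ _ (Finset.mem_univ (1 : Equiv.Perm (Fin (r+1))))] at hdet
    rw [Equiv.Perm.sign_one, one_smul] at hdet
    have hmm : monomial m (1:F) = monomial m' 1 * (Matrix.of fun i j : Fin (r+1) => hkX F N ((i:ℕ) + (g j:ℕ))).det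
        - ∑ σ ∈ Finset.univ.erase (1 : Equiv.Perm (Fin (r+1))), Equiv.Perm.sign σ • monomial (m' + E σ) (1:F) := by
      rw [hdet, mul_add, Finset.mul_sum]
      have : ∀ σ : Equiv.Perm (Fin (r+1)), (monomial m' (1:F)) * (Equiv.Perm.sign σ • monomial (E σ) (1:F))
        = Equiv.Perm.sign σ • monomial (m' + E σ) (1:F) := by
        intro σ
        rw [mul_smul_comm, monomial_mul, one_mul]
      simp_rw [this]
      rw [monomial_mul, one_mul, add_sub_cancel_right, hm', add_comm]
    rw [hmm]
    refine Submodule.sub_mem _ (Submodule.mem_sup_left ?_) (Submodule.sum_mem _ fun σ hσ => ?_)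
    · exact Ideal.mul_mem_left _ _ (hQ g)
    · have hσ1 : σ ≠ 1 := Finset.ne_of_mem_erase hσ
      have hw := hk_weight_lt (fun i => (g i : ℕ)) hgm σ hσ1
      have hEw : ∀ τ, Finsupp.weight (fun j : Fin N => (j:ℕ)^2) (E τ) = ∑ i, ((τ i : ℕ) + g i)^2 := by
        intro τ
        simp only [hE, map_sum]
        refine Finset.sum_congr rfl fun i _ => ?_
        simp [Finsupp.weight_single]
      have := ih (Finsupp.weight (fun j : Fin N => (j:ℕ)^2) (m' + E σ)) ?_ _ rfl
      · rcases Int.units_eq_one_or (Equiv.Perm.sign σ) with h | h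
        · rw [h, one_smul]; exact this
        · rw [h, Units.neg_smul, one_smul]; exact Submodule.neg_mem _ this
      · rw [← hm, hm', map_add, map_add, hEw, hEw]
        simp only [Equiv.Perm.coe_one, id]
        omega

lemma hk_radical (F : Type*) [Field F] (N n r : ℕ) (hN : n + r ≤ N) (Q : Ideal (MvPolynomial (Fin N) F))
    (hQ : Q = Ideal.span (Set.range fun g : Fin (r+1) → Fin n =>
      (Matrix.of fun i j : Fin (r+1) => hkX F N ((i:ℕ) + (g j:ℕ))).det)) : Q.IsRadical := by
  have hspan : ∀ f : MvPolynomial (Fin N) F,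
      f ∈ Q.restrictScalars F ⊔ restrictSupport F {m | hkStd N (n + r) (r+1) m} := by
    intro f
    rw [f.as_sum]
    refine Submodule.sum_mem _ fun m _ => ?_
    have := hk_span_s11 F N n r hN Q (fun g => by rw [hQ]; exact Ideal.subset_span ⟨g, rfl⟩) _ m rfl
    have h2 := Submodule.smul_mem _ (coeff m f) this
    rwa [smul_monomial, smul_eq_mul, mul_one] at h2
  let K := AlgebraicClosure F
  have hvan : ∀ x : Fin N → K, hkV N (n+r) r x → ∀ f ∈ Q, eval₂ (algebraMap F K) x f = 0 := by
    rintro x ⟨c, u, hu, hx⟩ f hf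
    have hle : Q ≤ RingHom.ker (eval₂Hom (algebraMap F K) x) := by
      rw [hQ, Ideal.span_le]
      rintro _ ⟨g, rfl⟩
      change eval₂Hom (algebraMap F K) x _ = 0
      rw [RingHom.map_det]
      set M : Matrix (Fin r) (Fin (r+1)) K := Matrix.of fun k j => u k ^ (g j : ℕ) with hM
      set C : Matrix (Fin (r+1)) (Fin r) K := Matrix.of fun i k => c k * u k ^ (i : ℕ) with hC
      have h0 := hk_det_mul_zero M ?_ C
      · rw [← h0]
        congr 1
        ext i j
        have hlt : (i:ℕ) + (g j : ℕ) < n + r := by have := i.2; have := (g j).2; omega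
        have hX : eval₂Hom (algebraMap F K) x (hkX F N ((i:ℕ) + (g j : ℕ))) = ∑ k, c k * u k ^ ((i:ℕ) + (g j:ℕ)) := by
          rw [hkX, dif_pos (by omega)]
          simp only [coe_eval₂Hom, eval₂_X]
          exact hx _ hlt
        simp only [RingHom.mapMatrix_apply, Matrix.map_apply, Matrix.of_apply, hX, Matrix.mul_apply, hM, hC]
        exact Finset.sum_congr rfl fun k _ => by ring
      · intro ρ
        have : ¬ Function.Injective ρ := by
          intro h
          have := Fintype.card_le_of_injective ρ h
          simp at this
        simp only [Function.Injective] at this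
        push Not at this
        obtain ⟨i, j, hij, hne⟩ := this
        exact Matrix.det_zero_of_row_eq hne (by ext1 k; simp [hij])
    exact hle hf
  intro f hf
  obtain ⟨k, hk⟩ := hf
  obtain ⟨q, hq, g, hg, hfe⟩ := Submodule.mem_sup.mp (hspan f)
  have hq' : q ∈ Q := hq
  have hg0 : MvPolynomial.map (algebraMap F K) g = 0 := by
    refine hk_indep_s11 N (n+r) r _ ?_ ?_
    · intro m hm
      exact (mem_restrictSupport_iff F).mp hg (support_map_subset _ _ hm)
    · intro x hx
      rw [eval_map]
      have h1 := hvan x hx _ hk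
      have h2 := hvan x hx _ hq'
      have h3 : eval₂ (algebraMap F K) x f = 0 := by
        rw [eval₂_pow] at h1
        have hk0 : k ≠ 0 := by
          rintro rfl
          simp at h1
        exact (pow_eq_zero_iff hk0).mp h1
      rw [← hfe, eval₂_add, h2, zero_add] at h3
      exact h3
  have : g = 0 := by
    apply map_injective (algebraMap F K) (algebraMap F K).injective
    rw [hg0, map_zero]
  rw [← hfe, this, add_zero]
  exact hq'

/-- With `p^⟨k⟩ ⊆ R` the ideal generated by the `(t-1)`-minors of the top-left
`(t-1)×(n-k+1)` submatrix of the Hankel matrix, one has `(p^⟨k⟩)² ⊆ p^⟨k+1⟩` for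
`1 ≤ k ≤ n-t+1`; consequently the radical of the principal ideal `(Δ)`,
`Δ = [1 ... t-1 | 1 ... t-1]`, equals `p = p^⟨1⟩`. -/
theorem hankel_pk_squared (F : Type*) [Field F] (t n : ℕ) (ht : 2 ≤ t) (htn : t ≤ n)
    (H : Matrix (Fin t) (Fin n) (MvPolynomial (Fin (n + t - 1)) F))
    (hH : ∀ a b, H a b = X ⟨(a : ℕ) + (b : ℕ), by have := a.2; have := b.2; omega⟩)
    (I : Ideal (MvPolynomial (Fin (n + t - 1)) F))
    (hI : I = Ideal.span (Set.range fun g : Fin t → Fin n => (H.submatrix id g).det))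
    (pk : ℕ → Ideal (MvPolynomial (Fin (n + t - 1)) F ⧸ I))
    (hpk : ∀ k, pk k = Ideal.span {x | ∃ g : Fin (t - 1) → Fin n,
      (∀ j, (g j : ℕ) < n - k + 1) ∧
      x = Ideal.Quotient.mk I
        ((H.submatrix (fun i : Fin (t - 1) => (⟨i.1, by have := i.2; omega⟩ : Fin t)) g).det)})
    (Δ : MvPolynomial (Fin (n + t - 1)) F ⧸ I)
    (hΔ : Δ = Ideal.Quotient.mk I
      ((H.submatrix (fun i : Fin (t - 1) => (⟨i.1, by have := i.2; omega⟩ : Fin t))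
        (fun j : Fin (t - 1) => (⟨j.1, by have := j.2; omega⟩ : Fin n))).det)) :
    (∀ k, 1 ≤ k → k ≤ n - t + 1 → (pk k) ^ 2 ≤ pk (k + 1)) ∧
    (Ideal.span {Δ}).radical = pk 1 := by
  obtain ⟨r, rfl⟩ : ∃ r, t = r + 2 := ⟨t - 2, by omega⟩
  set x : ℕ → MvPolynomial (Fin (n + (r + 2) - 1)) F := hkX F (n + (r + 2) - 1) with hx
  have hHx : ∀ a b, H a b = x ((a : ℕ) + (b : ℕ)) := by
    intro a b
    have h1 := a.2
    have h2 := b.2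
    rw [hH, hx, hkX, dif_pos]
  set D : (Fin (r+1) → ℕ) → MvPolynomial (Fin (n + (r + 2) - 1)) F :=
    fun g => (Matrix.of fun i j : Fin (r+1) => x ((i:ℕ) + g j)).det with hD
  have hminor : ∀ g : Fin (r+1) → Fin n,
      ((H.submatrix (fun i : Fin (r + 2 - 1) => (⟨i.1, by have := i.2; omega⟩ : Fin (r+2))) g).det)
        = D (fun j => g j) := by
    intro g
    simp only [hD]
    congr 1
    ext1 i j
    simp [hHx]
  have hpk' : ∀ k, pk k = Ideal.span {y | ∃ g : Fin (r+1) → Fin n,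
      (∀ j, (g j : ℕ) < n - k + 1) ∧ y = Ideal.Quotient.mk I (D fun j => g j)} := by
    intro k
    rw [hpk]
    congr 1
    ext y
    constructor
    · rintro ⟨g, hg, rfl⟩
      exact ⟨g, hg, by rw [hminor]⟩
    · rintro ⟨g, hg, rfl⟩
      exact ⟨g, hg, by rw [← hminor]⟩
  have hΔ' : Δ = Ideal.Quotient.mk I (D fun j => j) := by
    rw [hΔ, hminor]
  have hmkD : ∀ g : Fin (r+1) → ℕ, Ideal.Quotient.mk I (D g)
      = (Matrix.of fun i j : Fin (r+1) => (fun k => Ideal.Quotient.mk I (x k)) ((i:ℕ) + g j)).det := by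
    intro g
    simp only [hD]
    rw [RingHom.map_det]
    rfl
  have hIt : ∀ g : Fin (r+2) → Fin n,
      (Matrix.of fun i j : Fin (r+2) => (fun k => Ideal.Quotient.mk I (x k)) ((i:ℕ) + (g j : ℕ))).det = 0 := by
    intro g
    have h1 : (H.submatrix id g).det ∈ I := by
      rw [hI]; exact Ideal.subset_span ⟨g, rfl⟩
    rw [← Ideal.Quotient.eq_zero_iff_mem, RingHom.map_det] at h1
    rw [← h1]
    congr 1
    ext1 i j
    simp [hHx]
  have part1 : ∀ k, 1 ≤ k → k ≤ n - (r + 2) + 1 → (pk k) ^ 2 ≤ pk (k + 1) := by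
    intro k hk1 hk2
    rw [pow_two, hpk' k, Ideal.span_mul_span', Ideal.span_le]
    rintro _ ⟨_, ⟨A, hA, rfl⟩, _, ⟨B, hB, rfl⟩, rfl⟩
    have key := hk_sq (fun k => Ideal.Quotient.mk I (x k)) (r+1) (n - k) (by omega) ?_ (pk (k+1)) ?_
      (fun j => ⟨A j, hA j⟩) (fun j => ⟨B j, hB j⟩)
    · change Ideal.Quotient.mk I _ * Ideal.Quotient.mk I _ ∈ _
      rw [hmkD, hmkD]
      exact key
    · intro g
      exact hIt (fun j => ⟨g j, by have := (g j).2; omega⟩)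
    · intro g
      rw [hpk' (k+1)]
      refine Ideal.subset_span ⟨fun j => ⟨g j, by have := (g j).2; omega⟩, fun j => ?_, ?_⟩
      · have := (g j).2
        simp only
        omega
      · rw [hmkD]
  refine ⟨part1, le_antisymm ?_ ?_⟩
  · -- radical
    have hΔmem : Ideal.span {Δ} ≤ pk 1 := by
      rw [Ideal.span_singleton_le_iff_mem, hpk' 1, hΔ']
      exact Ideal.subset_span ⟨fun j => ⟨j, by have := j.2; omega⟩, fun j => by
        have := j.2
        simp only
        omega, rfl⟩
    set Q : Ideal (MvPolynomial (Fin (n + (r + 2) - 1)) F) := Ideal.span (Set.range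
      fun g : Fin (r+1) → Fin n => D (fun j => g j)) with hQ
    have hQrad : Q.IsRadical := hk_radical F _ n r (by omega) Q rfl
    have hIQ : I ≤ Q := by
      rw [hI, Ideal.span_le]
      rintro _ ⟨g, rfl⟩
      change (H.submatrix id g).det ∈ Q
      rw [Matrix.det_succ_row _ (Fin.last (r+1))]
      refine Ideal.sum_mem _ fun j _ => Ideal.mul_mem_left _ _ ?_
      refine Ideal.subset_span ⟨g ∘ j.succAbove, ?_⟩
      simp only [hD]
      congr 1
      ext1 a b
      simp [hHx]
    have hpQ : pk 1 = Q.map (Ideal.Quotient.mk I) := by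
      rw [hpk' 1, hQ, Ideal.map_span]
      congr 1
      ext y
      constructor
      · rintro ⟨g, _, rfl⟩
        exact ⟨_, ⟨g, rfl⟩, rfl⟩
      · rintro ⟨_, ⟨g, rfl⟩, rfl⟩
        exact ⟨g, fun j => by have := (g j).2; omega, rfl⟩
    have hcomap : (pk 1).comap (Ideal.Quotient.mk I) = Q := by
      rw [hpQ, Ideal.comap_map_of_surjective _ Ideal.Quotient.mk_surjective, ← RingHom.ker_eq_comap_bot,
        Ideal.mk_ker]
      exact sup_eq_left.mpr hIQ
    have hrad : (pk 1).IsRadical := by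
      rintro y ⟨k, hk⟩
      obtain ⟨f, rfl⟩ := Ideal.Quotient.mk_surjective y
      have : f ^ k ∈ (pk 1).comap (Ideal.Quotient.mk I) := by
        rw [Ideal.mem_comap, map_pow]; exact hk
      rw [hcomap] at this
      have h2 : f ∈ Q := hQrad ⟨k, this⟩
      rw [← hcomap] at h2
      exact h2
    exact hrad.radical_le_iff.mpr hΔmem
  · have hstep : ∀ j, j ≤ n - (r+2) + 1 → pk 1 ≤ (pk (1 + j)).radical := by
      intro j
      induction j with
      | zero => intro _; exact Ideal.le_radical
      | succ j ih =>
        intro hj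
        refine (ih (by omega)).trans ?_
        rw [Ideal.radical_le_radical_iff]
        intro y hy
        exact ⟨2, part1 (1 + j) (by omega) (by omega) (Ideal.pow_mem_pow hy 2)⟩
    refine (hstep (n - (r+2) + 1) le_rfl).trans (Ideal.radical_mono ?_)
    rw [hpk', Ideal.span_le]
    rintro _ ⟨g, hg, rfl⟩
    change _ ∈ Ideal.span {Δ}
    have hg' : ∀ j, (g j : ℕ) < r + 1 := by
      intro j
      have := hg j
      omega
    by_cases hinj : Function.Injective g
    · set σ : Fin (r+1) → Fin (r+1) := fun j => ⟨g j, hg' j⟩ with hσ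
      have hσi : Function.Injective σ := by
        intro a b hab
        apply hinj
        ext
        simpa [hσ] using hab
      set σe : Equiv.Perm (Fin (r+1)) := Equiv.ofBijective σ (Finite.injective_iff_bijective.mp hσi) with hσe
      have : D (fun j => g j) = Equiv.Perm.sign σe * D (fun j => j) := by
        simp only [hD]
        rw [← Matrix.det_permute']
        congr 1
      rw [this, map_mul, ← hΔ']
      exact Ideal.mul_mem_left _ _ (Ideal.mem_span_singleton_self Δ)
    · have : D (fun j => g j) = 0 := by
        simp only [Function.Injective] at hinj
        push Not at hinj
        obtain ⟨i, j, hij, hne⟩ := hinj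
        exact Matrix.det_zero_of_column_eq hne (by intro k; simp [hij])
      rw [this, map_zero]
      exact Ideal.zero_mem _
end
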